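/- arXiv:2510.15861 — 12 statements merged into one kernel-verified Lean document; each statement's English description precedes it below -/
import Mathlib

section
/- Let m ≥ 1, let h_1 ≥ h_2 ≥ … ≥ h_m ≥ 0 be reals, and let F be the mixing set F = {(z,x) ∈ ℝ_{≥0} × {0,1}^m : for every i ∈ {1,…,m}, x_i = 0 implies z ≥ h_i}. Then for every l ≥ 1 and every choice of indices 1 ≤ t_1 < t_2 < … < t_l ≤ m, with the convention h_{t_{l+1}} := 0, every (z,x) ∈ F satisfies the star inequality z + Σ_{ι=1}^{l} (h_{t_ι} − h_{t_{ι+1}}) x_{t_ι} ≥ h_{t_1}. -/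
/-!
Truncate the heights from below at `z`. Each term `(a i - a (i + 1)) * y i` dominates the drop
`max (a i) z - max (a (i + 1)) z` of the truncated heights: the drop vanishes once `a i ≤ z`, and
before that `1 ≤ y i`. These drops telescope to `max (a 1) z - max 0 z`, which is at least
`a 1 - z`.
-/

section StarInequality

variable {R : Type*} [Ring R] [LinearOrder R] [IsOrderedRing R]

theorem max_sub_max_le_sub_mul {a b y z : R} (hba : b ≤ a) (hy : 0 ≤ y)
    (hzy : a ≤ z ∨ 1 ≤ y) : max a z - max b z ≤ (a - b) * y := by
  have hab : 0 ≤ a - b := sub_nonneg.mpr hba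
  rcases hzy with haz | hy1
  · calc max a z - max b z = 0 := by rw [max_eq_right haz, max_eq_right (hba.trans haz), sub_self]
      _ ≤ (a - b) * y := mul_nonneg hab hy
  · calc max a z - max b z ≤ max (a - b) (z - z) := max_sub_max_le_max a z b z
      _ = a - b := by rw [sub_self, max_eq_left hab]
      _ ≤ (a - b) * y := le_mul_of_one_le_right hab hy1

theorem max_sub_max_le_sum_Ico_sub_mul {a y : ℕ → R} {z : R} {k n : ℕ} (hkn : k ≤ n)
    (ha : AntitoneOn a (Set.Icc k n)) (hy : ∀ i ∈ Set.Ico k n, 0 ≤ y i)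
    (hzy : ∀ i ∈ Set.Ico k n, a i ≤ z ∨ 1 ≤ y i) :
    max (a k) z - max (a n) z ≤ ∑ i ∈ Finset.Ico k n, (a i - a (i + 1)) * y i := by
  calc max (a k) z - max (a n) z
      = ∑ i ∈ Finset.Ico k n, (max (a i) z - max (a (i + 1)) z) := by
        rw [← neg_sub, ← Finset.sum_Ico_sub (fun i => max (a i) z) hkn, ← Finset.sum_neg_distrib]
        simp only [neg_sub]
    _ ≤ ∑ i ∈ Finset.Ico k n, (a i - a (i + 1)) * y i := by
        refine Finset.sum_le_sum fun i hi => ?_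
        obtain ⟨hki, hin⟩ := Finset.mem_Ico.mp hi
        have hstep : a (i + 1) ≤ a i := ha ⟨hki, hin.le⟩ ⟨by lia, hin⟩ i.le_succ
        exact max_sub_max_le_sub_mul hstep (hy i ⟨hki, hin⟩) (hzy i ⟨hki, hin⟩)

theorem le_add_sum_Ico_sub_mul_add_mul {a y : ℕ → R} {z : R} {k n : ℕ} (hkn : k ≤ n)
    (ha : AntitoneOn a (Set.Icc k n)) (han : 0 ≤ a n) (hz : 0 ≤ z)
    (hy : ∀ i ∈ Set.Icc k n, 0 ≤ y i) (hzy : ∀ i ∈ Set.Icc k n, a i ≤ z ∨ 1 ≤ y i) :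
    a k ≤ z + (∑ i ∈ Finset.Ico k n, (a i - a (i + 1)) * y i + a n * y n) := by
  have hinit : max (a k) z - max (a n) z ≤ ∑ i ∈ Finset.Ico k n, (a i - a (i + 1)) * y i :=
    max_sub_max_le_sum_Ico_sub_mul hkn ha (fun i hi => hy i (Set.Ico_subset_Icc_self hi))
      fun i hi => hzy i (Set.Ico_subset_Icc_self hi)
  have hlast : max (a n) z - z ≤ a n * y n := by
    simpa only [max_eq_right hz, sub_zero] using
      max_sub_max_le_sub_mul han (hy n ⟨hkn, le_rfl⟩) (hzy n ⟨hkn, le_rfl⟩)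
  calc a k ≤ max (a k) z := le_max_left _ _
    _ = z + ((max (a k) z - max (a n) z) + (max (a n) z - z)) := by abel
    _ ≤ z + (∑ i ∈ Finset.Ico k n, (a i - a (i + 1)) * y i + a n * y n) := by gcongr

theorem star_inequality_valid_for_mixing_set_general {α : Type*} [Preorder α] {s : Set α}
    {h x : α → R} {z : R} (h_anti : AntitoneOn h s) (h_nonneg : ∀ i ∈ s, 0 ≤ h i) (hz : 0 ≤ z)
    (hx : ∀ i ∈ s, 0 ≤ x i) (hmix : ∀ i ∈ s, h i ≤ z ∨ 1 ≤ x i) {l : ℕ} (hl : 1 ≤ l) {t : ℕ → α}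
    (ht : MonotoneOn t (Set.Icc 1 l)) (hts : Set.MapsTo t (Set.Icc 1 l) s) :
    h (t 1) ≤ z + ∑ ι ∈ Finset.Icc 1 l,
      (h (t ι) - (if ι < l then h (t (ι + 1)) else 0)) * x (t ι) := by
  have hsplit : ∑ ι ∈ Finset.Icc 1 l,
      (h (t ι) - (if ι < l then h (t (ι + 1)) else 0)) * x (t ι) =
      ∑ ι ∈ Finset.Ico 1 l, (h (t ι) - h (t (ι + 1))) * x (t ι) + h (t l) * x (t l) := by
    rw [← Finset.sum_Ico_add_eq_sum_Icc hl, if_neg (lt_irrefl l), sub_zero]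
    congr 1
    exact Finset.sum_congr rfl fun ι hι => by rw [if_pos (Finset.mem_Ico.mp hι).2]
  have hht : AntitoneOn (h ∘ t) (Set.Icc 1 l) :=
    fun _ hι _ hκ hικ => h_anti (hts hι) (hts hκ) (ht hι hκ hικ)
  rw [hsplit]
  exact le_add_sum_Ico_sub_mul_add_mul (y := x ∘ t) hl hht (h_nonneg _ (hts ⟨hl, le_rfl⟩)) hz
    (fun ι hι => hx _ (hts hι)) fun ι hι => hmix _ (hts hι)

end StarInequality

/-- **Star inequalities are valid for the mixing set.**
For `m ≥ 1` and `h 1 ≥ h 2 ≥ … ≥ h m ≥ 0`, every point `(z, x)` of the mixing set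
`F = {(z,x) ∈ ℝ₊ × {0,1}^m : x i = 0 → z ≥ h i}` satisfies the star inequality
`z + ∑_{ι=1}^{l} (h (t ι) − h (t (ι+1))) x (t ι) ≥ h (t 1)` for every `l ≥ 1` and every
strictly increasing choice of indices `1 ≤ t 1 < … < t l ≤ m`, with the convention
`h (t (l+1)) := 0`. -/
theorem star_inequality_valid_for_mixing_set
    (m : ℕ) (hm : 1 ≤ m) (h : ℕ → ℝ)
    (hmono : ∀ i j : ℕ, 1 ≤ i → i ≤ j → j ≤ m → h j ≤ h i)
    (hnonneg : ∀ i : ℕ, 1 ≤ i → i ≤ m → 0 ≤ h i)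
    (z : ℝ) (x : ℕ → ℝ)
    (hz : 0 ≤ z)
    (hxbin : ∀ i : ℕ, 1 ≤ i → i ≤ m → x i = 0 ∨ x i = 1)
    (hmix : ∀ i : ℕ, 1 ≤ i → i ≤ m → x i = 0 → h i ≤ z)
    (l : ℕ) (hl : 1 ≤ l)
    (t : ℕ → ℕ)
    (ht1 : 1 ≤ t 1) (htl : t l ≤ m)
    (htmono : ∀ ι κ : ℕ, 1 ≤ ι → ι < κ → κ ≤ l → t ι < t κ) :
    h (t 1) ≤ z + ∑ ι ∈ Finset.Icc 1 l,
      (h (t ι) - (if ι < l then h (t (ι + 1)) else 0)) * x (t ι) := by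
  have ht : MonotoneOn t (Set.Icc 1 l) :=
    StrictMonoOn.monotoneOn fun ι hι κ hκ hικ => htmono ι κ hι.1 hικ hκ.2
  exact star_inequality_valid_for_mixing_set_general (s := Set.Icc 1 m)
    (fun i hi j hj hij => hmono i j hi.1 hij hj.2) (fun i hi => hnonneg i hi.1 hi.2) hz
    (fun i hi => (hxbin i hi.1 hi.2).elim Eq.ge fun hxi => hxi ▸ zero_le_one)
    (fun i hi => (hxbin i hi.1 hi.2).imp (hmix i hi.1 hi.2) Eq.ge) hl ht
    (ht.mapsTo_Icc.mono_right (Set.Icc_subset_Icc ht1 htl))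
end

section
/- For every l ≥ 1 and every choice of indices 1 ≤ t_1 < t_2 < … < t_l ≤ p, with the convention h_{t_{l+1}} := h_{p+1} (where h_{m+1} := 0), every (z,x) ∈ F_c satisfies the strengthened star inequality z + Σ_{ι=1}^{l} (h_{t_ι} − h_{t_{ι+1}}) x_{t_ι} ≥ h_{t_1}. -/
/-!
The relaxation `x i ≥ 0`, `x i < 1 → h i ≤ z` of the mixing set suffices. If `p < m`, some
`i ≤ p + 1` has `x i < 1`, as otherwise the first `p + 1` items alone would exceed the knapsack
capacity; hence `h (p + 1) ≤ h i ≤ z`. If `p = m`, then `h (p + 1) = 0 ≤ z`. So the chain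
`h (t 1) ≥ ⋯ ≥ h (t l) ≥ h (p + 1)` ends below `z`. Going back up the chain, each link either
starts below `z` or has `x (t ι) ≥ 1`, and in the second case its term pays for the drop to the
next link.
-/

theorem antitoneOn_Icc_succ {α β : Type*} [LinearOrder α] [SuccOrder α] [Preorder β]
    {f : α → β} {a b : α} (hf : AntitoneOn f (Set.Icc a b))
    (hb : ∀ i ∈ Set.Icc a b, f (Order.succ b) ≤ f i) :
    AntitoneOn f (Set.Icc a (Order.succ b)) := by
  intro i hi j hj hij
  rcases Order.le_succ_iff_eq_or_le.1 hj.2 with rfl | hjb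
  · rcases Order.le_succ_iff_eq_or_le.1 hi.2 with rfl | hib
    · exact le_rfl
    · exact hb i ⟨hi.1, hib⟩
  · exact hf ⟨hi.1, hij.trans hjb⟩ ⟨hj.1, hjb⟩ hij

theorem exists_lt_one_of_sum_mul_lt_sum {ι R : Type*} [Semiring R] [LinearOrder R]
    [IsOrderedRing R] {s u : Finset ι} {w x : ι → R} (hsu : s ⊆ u) (hw : ∀ i ∈ u, 0 ≤ w i)
    (hx : ∀ i ∈ u, 0 ≤ x i) (hlt : ∑ i ∈ u, w i * x i < ∑ i ∈ s, w i) : ∃ i ∈ s, x i < 1 := by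
  by_contra! hone
  refine hlt.not_ge ?_
  calc
    ∑ i ∈ s, w i ≤ ∑ i ∈ s, w i * x i :=
      Finset.sum_le_sum fun i hi => le_mul_of_one_le_right (hw i (hsu hi)) (hone i hi)
    _ ≤ ∑ i ∈ u, w i * x i :=
      Finset.sum_le_sum_of_subset_of_nonneg hsu fun i hi _ => mul_nonneg (hw i hi) (hx i hi)

section

variable {R : Type*} [Ring R] [LinearOrder R] [IsOrderedRing R]

theorem le_add_sum_Ico_sub_mul {a x : ℕ → R} {z : R} {m n : ℕ} (hmn : m ≤ n)
    (hstep : ∀ i ∈ Set.Ico m n, a (i + 1) ≤ a i) (hx : ∀ i ∈ Set.Ico m n, 0 ≤ x i)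
    (hmix : ∀ i ∈ Set.Ico m n, x i < 1 → a i ≤ z) (hlast : a n ≤ z) :
    a m ≤ z + ∑ i ∈ Finset.Ico m n, (a i - a (i + 1)) * x i := by
  induction hmn using Nat.decreasingInduction with
  | self => simpa using hlast
  | of_succ k hkn ih =>
    have hk : k ∈ Set.Ico k n := ⟨le_rfl, hkn⟩
    have htail : Set.Ico (k + 1) n ⊆ Set.Ico k n := Set.Ico_subset_Ico_left k.le_succ
    rcases lt_or_ge (x k) 1 with hlt | hge
    · have hsum : 0 ≤ ∑ i ∈ Finset.Ico k n, (a i - a (i + 1)) * x i :=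
        Finset.sum_nonneg fun i hi => mul_nonneg
          (sub_nonneg.2 (hstep i (Finset.mem_Ico.1 hi))) (hx i (Finset.mem_Ico.1 hi))
      exact (hmix k hk hlt).trans (le_add_of_nonneg_right hsum)
    · have hdrop : a k - a (k + 1) ≤ (a k - a (k + 1)) * x k :=
        le_mul_of_one_le_right (sub_nonneg.2 (hstep k hk)) hge
      calc
        a k = (a k - a (k + 1)) + a (k + 1) := (sub_add_cancel _ _).symm
        _ ≤ (a k - a (k + 1)) * x k +
            (z + ∑ i ∈ Finset.Ico (k + 1) n, (a i - a (i + 1)) * x i) :=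
          add_le_add hdrop (ih (fun i hi => hstep i (htail hi)) (fun i hi => hx i (htail hi))
            fun i hi => hmix i (htail hi))
        _ = z + ∑ i ∈ Finset.Ico k n, (a i - a (i + 1)) * x i := by
          rw [Finset.sum_eq_sum_Ico_succ_bot hkn, add_left_comm]

theorem le_add_sum_Icc_sub_ite_mul {a x : ℕ → R} {b z : R} {m n : ℕ} (hmn : m ≤ n)
    (ha : AntitoneOn a (Set.Icc m n)) (hba : b ≤ a n) (hbz : b ≤ z)
    (hx : ∀ i ∈ Set.Icc m n, 0 ≤ x i) (hmix : ∀ i ∈ Set.Icc m n, x i < 1 → a i ≤ z) :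
    a m ≤ z + ∑ i ∈ Finset.Icc m n, (a i - (if i < n then a (i + 1) else b)) * x i := by
  let c : ℕ → R := fun i => if i ≤ n then a i else b
  have hca : ∀ {i}, i ≤ n → c i = a i := fun hi => if_pos hi
  have hcb : c (n + 1) = b := if_neg n.lt_irrefl
  have hstep : ∀ i ∈ Set.Icc m n, c (i + 1) ≤ c i := by
    intro i hi
    rcases hi.2.eq_or_lt with rfl | hlt
    · rwa [hcb, hca le_rfl]
    · rw [hca hlt, hca hi.2]
      exact ha hi ⟨hi.1.trans i.le_succ, hlt⟩ i.le_succ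
  rw [← Set.Ico_add_one_right_eq_Icc] at hstep hx hmix
  calc
    a m = c m := (hca hmn).symm
    _ ≤ z + ∑ i ∈ Finset.Ico m (n + 1), (c i - c (i + 1)) * x i :=
      le_add_sum_Ico_sub_mul (hmn.trans n.le_succ) hstep hx
        (fun i hi hlt => (hca (Nat.le_of_lt_succ hi.2)).trans_le (hmix i hi hlt))
        (hcb.trans_le hbz)
    _ = z + ∑ i ∈ Finset.Icc m n, (a i - (if i < n then a (i + 1) else b)) * x i := by
      rw [Finset.Ico_add_one_right_eq_Icc]
      refine congrArg (z + ·) (Finset.sum_congr rfl fun i hi => ?_)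
      rw [hca (Finset.mem_Icc.1 hi).2]
      rfl

variable {m p : ℕ} {h π x : ℕ → R} {ε z : R}

theorem apply_add_one_le_of_knapsack (hanti : AntitoneOn h (Set.Icc 1 (m + 1)))
    (hlast : h (m + 1) ≤ z) (hπ : ∀ i ∈ Set.Icc 1 m, 0 ≤ π i) (hpm : p ≤ m)
    (hpmax : ∀ k ≤ m, ∑ i ∈ Finset.Icc 1 k, π i ≤ ε → k ≤ p)
    (hx : ∀ i ∈ Set.Icc 1 m, 0 ≤ x i) (hmix : ∀ i ∈ Set.Icc 1 m, x i < 1 → h i ≤ z)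
    (hknap : ∑ i ∈ Finset.Icc 1 m, π i * x i ≤ ε) : h (p + 1) ≤ z := by
  rcases hpm.eq_or_lt with rfl | hlt
  · exact hlast
  · have hexceeds : ε < ∑ i ∈ Finset.Icc 1 (p + 1), π i :=
      lt_of_not_ge fun hle => (hpmax (p + 1) hlt hle).not_gt p.lt_succ_self
    obtain ⟨i, hi, hxi⟩ : ∃ i ∈ Finset.Icc 1 (p + 1), x i < 1 :=
      exists_lt_one_of_sum_mul_lt_sum (Finset.Icc_subset_Icc_right hlt)
        (fun i hi => hπ i (Finset.mem_Icc.1 hi)) (fun i hi => hx i (Finset.mem_Icc.1 hi))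
        (hknap.trans_lt hexceeds)
    obtain ⟨h1i, hip⟩ := Finset.mem_Icc.1 hi
    calc
      h (p + 1) ≤ h i := hanti ⟨h1i, by omega⟩ ⟨by omega, by omega⟩ hip
      _ ≤ z := hmix i ⟨h1i, hip.trans hlt⟩ hxi

theorem strengthened_star_inequality_valid_general (hanti : AntitoneOn h (Set.Icc 1 (m + 1)))
    (hlast : h (m + 1) ≤ z) (hπ : ∀ i ∈ Set.Icc 1 m, 0 ≤ π i) (hpm : p ≤ m)
    (hpmax : ∀ k ≤ m, ∑ i ∈ Finset.Icc 1 k, π i ≤ ε → k ≤ p)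
    (hx : ∀ i ∈ Set.Icc 1 m, 0 ≤ x i) (hmix : ∀ i ∈ Set.Icc 1 m, x i < 1 → h i ≤ z)
    (hknap : ∑ i ∈ Finset.Icc 1 m, π i * x i ≤ ε) {l : ℕ} (hl : 1 ≤ l) {t : ℕ → ℕ}
    (ht1 : 1 ≤ t 1) (htl : t l ≤ p) (ht : MonotoneOn t (Set.Icc 1 l)) :
    h (t 1) ≤ z + ∑ ι ∈ Finset.Icc 1 l,
      (h (t ι) - (if ι < l then h (t (ι + 1)) else h (p + 1))) * x (t ι) := by
  have htm : Set.MapsTo t (Set.Icc 1 l) (Set.Icc 1 m) :=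
    ht.mapsTo_Icc.mono_right (Set.Icc_subset_Icc ht1 (htl.trans hpm))
  have hht : AntitoneOn (h ∘ t) (Set.Icc 1 l) :=
    hanti.comp_MonotoneOn ht (htm.mono_right (Set.Icc_subset_Icc_right m.le_succ))
  have hstep : h (p + 1) ≤ h (t l) := by
    obtain ⟨h1tl, -⟩ := htm ⟨hl, le_rfl⟩
    exact hanti ⟨h1tl, by omega⟩ ⟨by omega, by omega⟩ (by omega)
  have hend : h (p + 1) ≤ z :=
    apply_add_one_le_of_knapsack hanti hlast hπ hpm hpmax hx hmix hknap
  exact le_add_sum_Icc_sub_ite_mul (a := h ∘ t) (x := x ∘ t) hl hht hstep hend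
    (fun ι hι => hx (t ι) (htm hι)) (fun ι hι => hmix (t ι) (htm hι))

end

/-- **Strengthened star inequalities are valid for the mixing set with a knapsack
constraint** (Luedtke–Ahmed–Nemhauser). Here `p = max{k : ∑_{i=1}^k π i ≤ ε}` is
characterized by the hypotheses `hpsum`/`hpmax`, and the convention
`h (t (l+1)) := h (p+1)` (with `h (m+1) := 0`, hypothesis `hconv`) is used. -/
theorem strengthened_star_inequality_valid
    (m : ℕ) (hm : 1 ≤ m) (h : ℕ → ℝ)
    (hmono : ∀ i j : ℕ, 1 ≤ i → i ≤ j → j ≤ m → h j ≤ h i)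
    (hnonneg : ∀ i : ℕ, 1 ≤ i → i ≤ m → 0 ≤ h i)
    (hconv : h (m + 1) = 0)
    (π : ℕ → ℝ) (hπpos : ∀ i : ℕ, 1 ≤ i → i ≤ m → 0 < π i)
    (hπsum : ∑ i ∈ Finset.Icc 1 m, π i = 1)
    (ε : ℝ) (hε0 : 0 ≤ ε) (hε1 : ε ≤ 1)
    (hπε : ∀ i : ℕ, 1 ≤ i → i ≤ m → π i ≤ ε)
    (p : ℕ) (hp1 : 1 ≤ p) (hpm : p ≤ m)
    (hpsum : ∑ i ∈ Finset.Icc 1 p, π i ≤ ε)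
    (hpmax : ∀ k : ℕ, k ≤ m → (∑ i ∈ Finset.Icc 1 k, π i) ≤ ε → k ≤ p)
    (z : ℝ) (x : ℕ → ℝ) (hz : 0 ≤ z)
    (hxbin : ∀ i : ℕ, 1 ≤ i → i ≤ m → x i = 0 ∨ x i = 1)
    (hmix : ∀ i : ℕ, 1 ≤ i → i ≤ m → x i = 0 → h i ≤ z)
    (hknap : ∑ i ∈ Finset.Icc 1 m, π i * x i ≤ ε)
    (l : ℕ) (hl : 1 ≤ l)
    (t : ℕ → ℕ)
    (ht1 : 1 ≤ t 1) (htl : t l ≤ p)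
    (htmono : ∀ ι κ : ℕ, 1 ≤ ι → ι < κ → κ ≤ l → t ι < t κ) :
    h (t 1) ≤ z + ∑ ι ∈ Finset.Icc 1 l,
      (h (t ι) - (if ι < l then h (t (ι + 1)) else h (p + 1))) * x (t ι) := by
  have hanti : AntitoneOn h (Set.Icc 1 (m + 1)) :=
    antitoneOn_Icc_succ (fun i hi j hj hij => hmono i j hi.1 hij hj.2)
      fun i hi => hconv.le.trans (hnonneg i hi.1 hi.2)
  have ht : StrictMonoOn t (Set.Icc 1 l) := fun ι hι κ hκ hικ => htmono ι κ hι.1 hικ hκ.2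
  exact strengthened_star_inequality_valid_general hanti (hconv.le.trans hz)
    (fun i hi => (hπpos i hi.1 hi.2).le) hpm hpmax
    (fun i hi => (hxbin i hi.1 hi.2).elim Eq.ge fun hone => hone ▸ zero_le_one)
    (fun i hi hlt => hmix i hi.1 hi.2 ((hxbin i hi.1 hi.2).resolve_right hlt.ne))
    hknap hl ht1 htl ht.monotoneOn
end

section
/- Assume 1 ≤ p < m. Let r ∈ {1,…,p}, let 1 ≤ t_1 < … < t_l ≤ r, and let p+1 ≤ q_1 < q_2 < … < q_{p−r} ≤ m. Define φ_{q_1} = h_{r+1} − h_{r+2} and, for ι = 2,…,p−r, φ_{q_ι} = max{ φ_{q_{ι−1}}, h_{r+1} − h_{r+ι+1} − Σ_{k=1}^{ι−1} φ_{q_k} }. Then, with the convention h_{t_{l+1}} := h_{r+1}, every (z,x) ∈ F_c^= satisfies z + Σ_{ι=1}^{l} (h_{t_ι} − h_{t_{ι+1}}) x_{t_ι} + Σ_{ι=1}^{p−r} φ_{q_ι} (1 − x_{q_ι}) ≥ h_{t_1} (when r = p the sum over the q-indices is empty). -/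
/-!
Let `k` be the number of indices `ι` with `x (q ι) = 0`. As `φ` is nondecreasing, the lifted terms
add up to at least `φ 1 + ⋯ + φ k ≥ h (r + 1) - h (r + k + 1)`. The other `p - r - k` indices `q ι`
carry a one, so the cardinality constraint forces a zero among `1, …, r + k + 1`, whence
`h (r + k + 1) ≤ z`. Thus `z` plus the lifted terms is at least `max z (h (r + 1))`, and what
remains is the mixing inequality for the chain `h (t 1) ≥ ⋯ ≥ h (t l) ≥ h (r + 1)`, in which
`max z (h (r + 1))` takes the place of `z`.
-/

theorem sum_Icc_card_le_sum_of_monotoneOn {M : Type*} [AddCommMonoid M] [Preorder M]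
    [IsOrderedAddMonoid M] {f : ℕ → M} {n : ℕ} (hf : MonotoneOn f (Set.Icc 1 n)) {s : Finset ℕ}
    (hs : s ⊆ Finset.Icc 1 n) : ∑ j ∈ Finset.Icc 1 s.card, f j ≤ ∑ j ∈ s, f j := by
  induction s using Finset.induction_on_max with
  | empty => simp
  | insert a s hlt ih =>
    have ha : a ∈ Set.Icc 1 n := Finset.mem_Icc.1 (hs (Finset.mem_insert_self a s))
    have hs' : s ⊆ Finset.Icc 1 n := (Finset.subset_insert a s).trans hs
    have hcard : s.card + 1 ≤ a := by
      have hsub : s ⊆ Finset.Ico 1 a := fun i hi ↦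
        Finset.mem_Ico.2 ⟨(Finset.mem_Icc.1 (hs' hi)).1, hlt i hi⟩
      have hle := Finset.card_le_card hsub
      rw [Nat.card_Ico] at hle
      have := ha.1
      omega
    have hnotMem : a ∉ s := fun has ↦ (hlt a has).false
    rw [Finset.card_insert_of_notMem hnotMem, Finset.sum_insert hnotMem,
      Finset.sum_Icc_succ_top (by omega), add_comm (f a)]
    exact add_le_add (ih hs') (hf ⟨by omega, hcard.trans ha.2⟩ ha hcard)

theorem monotoneOn_of_eq_max {α : Type*} [LinearOrder α] {f g : ℕ → α} {n : ℕ}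
    (hf : ∀ i, 2 ≤ i → i ≤ n → f i = max (f (i - 1)) (g i)) : MonotoneOn f (Set.Icc 1 n) := by
  refine monotoneOn_of_le_add_one Set.ordConnected_Icc fun i _ hi hi' ↦ ?_
  rw [hf (i + 1) (Nat.succ_le_succ hi.1) hi'.2, Nat.add_sub_cancel]
  exact le_max_left _ _

theorem le_sum_of_eq_max_sub {G : Type*} [AddCommGroup G] [LinearOrder G] [IsOrderedAddMonoid G]
    {f d : ℕ → G} {n : ℕ} (hd : d 0 ≤ 0) (hf₁ : 1 ≤ n → f 1 = d 1)
    (hf : ∀ i, 2 ≤ i → i ≤ n → f i = max (f (i - 1)) (d i - ∑ k ∈ Finset.Icc 1 (i - 1), f k))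
    {k : ℕ} (hk : k ≤ n) : d k ≤ ∑ j ∈ Finset.Icc 1 k, f j := by
  match k, hk with
  | 0, _ => simpa using hd
  | 1, hk => simp [hf₁ hk]
  | k + 2, hk =>
    rw [Finset.sum_Icc_succ_top (by omega), hf (k + 2) (by omega) hk, ← sub_le_iff_le_add']
    exact le_max_right _ _

theorem le_max_add_sum_sub_mul {R : Type*} [CommRing R] [LinearOrder R] [IsStrictOrderedRing R]
    {a y : ℕ → R} {w : R} {n : ℕ} (ha : ∀ i, 1 ≤ i → i ≤ n → a (i + 1) ≤ a i)
    (hy : ∀ i, 1 ≤ i → i ≤ n → y i = 0 ∨ y i = 1)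
    (hw : ∀ i, 1 ≤ i → i ≤ n → y i = 0 → a i ≤ w) :
    a 1 ≤ max w (a (n + 1)) + ∑ i ∈ Finset.Icc 1 n, (a i - a (i + 1)) * y i := by
  induction n with
  | zero => simp
  | succ n ih =>
    have hstep : max w (a (n + 1)) ≤
        max w (a (n + 2)) + (a (n + 1) - a (n + 2)) * y (n + 1) := by
      rcases hy (n + 1) (by omega) le_rfl with hzero | hone
      · simp [hzero, hw (n + 1) (by omega) le_rfl hzero]
      · have hdec := ha (n + 1) (by omega) le_rfl
        rw [hone, mul_one]
        refine max_le ?_ ?_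
        · linarith [le_max_left w (a (n + 2))]
        · linarith [le_max_right w (a (n + 2))]
    have hind := ih (fun i h₁ h₂ ↦ ha i h₁ (by omega)) (fun i h₁ h₂ ↦ hy i h₁ (by omega))
      (fun i h₁ h₂ ↦ hw i h₁ (by omega))
    rw [Finset.sum_Icc_succ_top (by omega)]
    linarith

variable {R : Type*} [CommRing R] [LinearOrder R] [IsStrictOrderedRing R]

/-- The points `(z, x)` of the mixing set with a cardinality constraint, over an ordered ring and
without a sign condition on `z`. The vector `x` is a sequence of which only the entries
`x 1, …, x m` matter. -/
structure IsMixingPoint (m p : ℕ) (h : ℕ → R) (z : R) (x : ℕ → R) : Prop where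
  eq_zero_or_one : ∀ i, 1 ≤ i → i ≤ m → x i = 0 ∨ x i = 1
  le_of_eq_zero : ∀ i, 1 ≤ i → i ≤ m → x i = 0 → h i ≤ z
  sum_le : ∑ i ∈ Finset.Icc 1 m, x i ≤ (p : R)

namespace IsMixingPoint

variable {m p : ℕ} {h : ℕ → R} {z : R} {x : ℕ → R}

theorem nonneg (hx : IsMixingPoint m p h z x) {i : ℕ} (h₁ : 1 ≤ i) (hm : i ≤ m) : 0 ≤ x i := by
  rcases hx.eq_zero_or_one i h₁ hm with hi | hi <;> simp [hi]

theorem le_one (hx : IsMixingPoint m p h z x) {i : ℕ} (h₁ : 1 ≤ i) (hm : i ≤ m) : x i ≤ 1 := by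
  rcases hx.eq_zero_or_one i h₁ hm with hi | hi <;> simp [hi]

theorem exists_eq_zero_of_lt_card (hx : IsMixingPoint m p h z x) {s : Finset ℕ}
    (hs : s ⊆ Finset.Icc 1 m) (hcard : p < s.card) : ∃ i ∈ s, x i = 0 := by
  by_contra! hne
  have hone : ∀ i ∈ s, x i = 1 := fun i hi ↦
    have hi' := Finset.mem_Icc.1 (hs hi)
    (hx.eq_zero_or_one i hi'.1 hi'.2).resolve_left (hne i hi)
  have hle : (s.card : R) ≤ p := calc
    (s.card : R) = ∑ i ∈ s, x i := by simp [Finset.sum_congr rfl hone]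
    _ ≤ ∑ i ∈ Finset.Icc 1 m, x i := Finset.sum_le_sum_of_subset_of_nonneg hs fun i hi _ ↦
      hx.nonneg (Finset.mem_Icc.1 hi).1 (Finset.mem_Icc.1 hi).2
    _ ≤ p := hx.sum_le
  exact hcard.not_ge (Nat.cast_le.1 hle)

theorem le_of_lt_add_card (hx : IsMixingPoint m p h z x) (hh : AntitoneOn h (Set.Icc 1 m))
    {n : ℕ} (hn : n ≤ m) {s : Finset ℕ} (hs : s ⊆ Finset.Ioc n m) (hone : ∀ i ∈ s, x i = 1)
    (hcard : p < n + s.card) : h n ≤ z := by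
  have hdisj : Disjoint (Finset.Icc 1 n) s := Finset.disjoint_left.2 fun i hi his ↦
    (Finset.mem_Icc.1 hi).2.not_gt (Finset.mem_Ioc.1 (hs his)).1
  have hsub : Finset.Icc 1 n ∪ s ⊆ Finset.Icc 1 m :=
    Finset.union_subset (Finset.Icc_subset_Icc_right hn) fun i hi ↦ by
      have := Finset.mem_Ioc.1 (hs hi)
      exact Finset.mem_Icc.2 ⟨by omega, this.2⟩
  obtain ⟨i, hi, hi₀⟩ := hx.exists_eq_zero_of_lt_card hsub
    (by simpa [Finset.card_union_of_disjoint hdisj] using hcard)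
  rcases Finset.mem_union.1 hi with hi | hi
  · obtain ⟨h₁, hin⟩ := Finset.mem_Icc.1 hi
    have hi_le : h i ≤ z := hx.le_of_eq_zero i h₁ (hin.trans hn) hi₀
    exact (hh ⟨h₁, hin.trans hn⟩ ⟨h₁.trans hin, hn⟩ hin).trans hi_le
  · exact absurd (hi₀.symm.trans (hone i hi)) zero_ne_one

theorem le_add_card_filter_eq_zero (hx : IsMixingPoint m p h z x)
    (hh : AntitoneOn h (Set.Icc 1 m)) (hpm : p < m) {r : ℕ} (hrp : r ≤ p) {q : ℕ → ℕ}
    (hq : Set.MapsTo q (Set.Icc 1 (p - r)) (Set.Icc (p + 1) m))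
    (hq_inj : Set.InjOn q (Set.Icc 1 (p - r))) :
    h (r + {ι ∈ Finset.Icc 1 (p - r) | x (q ι) = 0}.card + 1) ≤ z := by
  set zeros := {ι ∈ Finset.Icc 1 (p - r) | x (q ι) = 0}
  set ones := {ι ∈ Finset.Icc 1 (p - r) | ¬ x (q ι) = 0}
  have hcard : zeros.card + ones.card = p - r := by
    simpa using Finset.card_filter_add_card_filter_not (s := Finset.Icc 1 (p - r))
      (fun ι ↦ x (q ι) = 0)
  have hones : ∀ ι ∈ ones, ι ∈ Set.Icc 1 (p - r) := fun ι hι ↦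
    Finset.mem_Icc.1 (Finset.mem_of_mem_filter ι hι)
  have hcard_image : (ones.image q).card = ones.card :=
    Finset.card_image_of_injOn (hq_inj.mono hones)
  refine hx.le_of_lt_add_card hh (by omega) (s := ones.image q) (fun i hi ↦ ?_) (fun i hi ↦ ?_)
    (by omega)
  · obtain ⟨ι, hι, rfl⟩ := Finset.mem_image.1 hi
    have hpos : 0 < ones.card := Finset.card_pos.2 ⟨ι, hι⟩
    obtain ⟨hp, hm⟩ := hq (hones ι hι)
    exact Finset.mem_Ioc.2 ⟨by omega, hm⟩
  · obtain ⟨ι, hι, rfl⟩ := Finset.mem_image.1 hi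
    obtain ⟨hp, hm⟩ := hq (hones ι hι)
    exact (hx.eq_zero_or_one (q ι) (by omega) hm).resolve_left (Finset.mem_filter.1 hι).2

theorem le_add_sum_mul_one_sub (hx : IsMixingPoint m p h z x)
    (hh : AntitoneOn h (Set.Icc 1 m)) (hpm : p < m) {r : ℕ} (hrp : r ≤ p) {q : ℕ → ℕ}
    (hq : Set.MapsTo q (Set.Icc 1 (p - r)) (Set.Icc (p + 1) m))
    (hq_inj : Set.InjOn q (Set.Icc 1 (p - r))) {φ : ℕ → R}
    (hφ : MonotoneOn φ (Set.Icc 1 (p - r)))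
    (hφ_sum : ∀ k ≤ p - r, h (r + 1) - h (r + k + 1) ≤ ∑ j ∈ Finset.Icc 1 k, φ j) :
    h (r + 1) ≤ z + ∑ ι ∈ Finset.Icc 1 (p - r), φ ι * (1 - x (q ι)) := by
  set zeros := {ι ∈ Finset.Icc 1 (p - r) | x (q ι) = 0} with zeros_def
  have hzeros : zeros ⊆ Finset.Icc 1 (p - r) := Finset.filter_subset _ _
  have hz : h (r + zeros.card + 1) ≤ z := hx.le_add_card_filter_eq_zero hh hpm hrp hq hq_inj
  have hsum : h (r + 1) - h (r + zeros.card + 1) ≤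
      ∑ ι ∈ Finset.Icc 1 (p - r), φ ι * (1 - x (q ι)) := calc
    _ ≤ ∑ j ∈ Finset.Icc 1 zeros.card, φ j :=
      hφ_sum _ (by simpa using Finset.card_le_card hzeros)
    _ ≤ ∑ ι ∈ zeros, φ ι := sum_Icc_card_le_sum_of_monotoneOn hφ hzeros
    _ = ∑ ι ∈ Finset.Icc 1 (p - r), φ ι * (1 - x (q ι)) := by
      rw [zeros_def, Finset.sum_filter]
      refine Finset.sum_congr rfl fun ι hι ↦ ?_
      obtain ⟨hp, hm⟩ := hq (Finset.mem_Icc.1 hι)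
      rcases hx.eq_zero_or_one (q ι) (by omega) hm with hzero | hone
      · simp [hzero]
      · simp [hone]
  linarith

theorem le_max_add_sum (hx : IsMixingPoint m p h z x) (hh : AntitoneOn h (Set.Icc 1 m))
    {l : ℕ} (hl : 1 ≤ l) {t : ℕ → ℕ} (ht : Set.MapsTo t (Set.Icc 1 l) (Set.Icc 1 m))
    (ht_mono : MonotoneOn t (Set.Icc 1 l)) {c : R} (hc : c ≤ h (t l)) :
    h (t 1) ≤ max z c + ∑ ι ∈ Finset.Icc 1 l,
      (h (t ι) - (if ι < l then h (t (ι + 1)) else c)) * x (t ι) := by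
  set a : ℕ → R := fun ι ↦ if ι ≤ l then h (t ι) else c with a_def
  have ha : ∀ ι, ι ≤ l → a ι = h (t ι) := fun ι hι ↦ if_pos hι
  have ha_succ : ∀ ι, a (ι + 1) = if ι < l then h (t (ι + 1)) else c := fun ι ↦ by
    simp only [a_def, Nat.lt_iff_add_one_le]
  have ha_anti : ∀ ι, 1 ≤ ι → ι ≤ l → a (ι + 1) ≤ a ι := by
    intro ι h₁ hι
    rw [ha_succ, ha ι hι]
    split_ifs with hlt
    · have hι_mem : ι ∈ Set.Icc 1 l := ⟨h₁, hι⟩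
      have hsucc_mem : ι + 1 ∈ Set.Icc 1 l := ⟨by omega, hlt⟩
      exact hh (ht hι_mem) (ht hsucc_mem) (ht_mono hι_mem hsucc_mem ι.le_succ)
    · rwa [show ι = l by omega]
  have hchain := le_max_add_sum_sub_mul (y := x ∘ t) (w := z) ha_anti
    (fun ι h₁ hι ↦ hx.eq_zero_or_one _ (ht ⟨h₁, hι⟩).1 (ht ⟨h₁, hι⟩).2)
    (fun ι h₁ hι hzero ↦ by
      rw [ha ι hι]
      exact hx.le_of_eq_zero _ (ht ⟨h₁, hι⟩).1 (ht ⟨h₁, hι⟩).2 hzero)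
  rw [ha 1 hl, ha_succ l, if_neg l.lt_irrefl] at hchain
  refine hchain.trans_eq (congrArg _ (Finset.sum_congr rfl fun ι hι ↦ ?_))
  rw [ha ι (Finset.mem_Icc.1 hι).2, ha_succ, Function.comp_apply]

end IsMixingPoint

theorem luedtke_lifted_inequality_valid_general {m p r l : ℕ} {h : ℕ → R} {z : R} {x : ℕ → R}
    (hx : IsMixingPoint m p h z x) (hh : AntitoneOn h (Set.Icc 1 m)) (hpm : p < m) (hrp : r ≤ p)
    (hl : 1 ≤ l) {t : ℕ → ℕ} (ht : Set.MapsTo t (Set.Icc 1 l) (Set.Icc 1 r))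
    (ht_mono : MonotoneOn t (Set.Icc 1 l)) {q : ℕ → ℕ}
    (hq : Set.MapsTo q (Set.Icc 1 (p - r)) (Set.Icc (p + 1) m))
    (hq_inj : Set.InjOn q (Set.Icc 1 (p - r))) {φ : ℕ → R}
    (hφ : MonotoneOn φ (Set.Icc 1 (p - r)))
    (hφ_sum : ∀ k ≤ p - r, h (r + 1) - h (r + k + 1) ≤ ∑ j ∈ Finset.Icc 1 k, φ j) :
    h (t 1) ≤ z + (∑ ι ∈ Finset.Icc 1 l,
        (h (t ι) - (if ι < l then h (t (ι + 1)) else h (r + 1))) * x (t ι))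
      + ∑ ι ∈ Finset.Icc 1 (p - r), φ ι * (1 - x (q ι)) := by
  have hr_le : h (r + 1) ≤ h (t l) :=
    have htl := ht ⟨hl, le_rfl⟩
    hh ⟨htl.1, by have := htl.2; omega⟩ ⟨by omega, by omega⟩ (Nat.le_succ_of_le htl.2)
  have hφ_nonneg : ∀ ι ∈ Finset.Icc 1 (p - r), 0 ≤ φ ι := by
    intro ι hι
    obtain ⟨h₁, hle⟩ := Finset.mem_Icc.1 hι
    have hone : h (r + 1) - h (r + 2) ≤ φ 1 := by simpa using hφ_sum 1 (h₁.trans hle)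
    have hanti : h (r + 2) ≤ h (r + 1) := hh ⟨by omega, by omega⟩ ⟨by omega, by omega⟩ (by omega)
    exact (sub_nonneg.2 hanti).trans (hone.trans (hφ ⟨le_rfl, h₁.trans hle⟩ ⟨h₁, hle⟩ h₁))
  have hlift_nonneg : 0 ≤ ∑ ι ∈ Finset.Icc 1 (p - r), φ ι * (1 - x (q ι)) :=
    Finset.sum_nonneg fun ι hι ↦
      have hqι := hq (Finset.mem_Icc.1 hι)
      mul_nonneg (hφ_nonneg ι hι) <| sub_nonneg.2 <|
        hx.le_one ((Nat.le_add_left 1 p).trans hqι.1) hqι.2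
  have hmax := max_le (le_add_of_nonneg_right hlift_nonneg)
    (hx.le_add_sum_mul_one_sub hh hpm hrp hq hq_inj hφ hφ_sum)
  have hstar := hx.le_max_add_sum hh hl
    (ht.mono_right (Set.Icc_subset_Icc_right (hrp.trans hpm.le))) ht_mono hr_le
  linarith

/-- **Luedtke–Ahmed–Nemhauser inequalities for the mixing set with a cardinality
constraint.** Here `F_c^= = {(z,x) ∈ ℝ₊ × {0,1}^m : x i = 0 → z ≥ h i, ∑ x i ≤ p}`,
`r ∈ {1,…,p}`, `1 ≤ t 1 < … < t l ≤ r`, `p+1 ≤ q 1 < … < q (p−r) ≤ m`, with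
`φ 1 = h (r+1) − h (r+2)` and
`φ ι = max (φ (ι−1)) (h (r+1) − h (r+ι+1) − ∑_{k=1}^{ι−1} φ k)` for `2 ≤ ι ≤ p−r`,
and the convention `h (t (l+1)) := h (r+1)`. -/
theorem luedtke_lifted_inequality_valid
    (m p : ℕ) (hm : 1 ≤ m) (hp1 : 1 ≤ p) (hpm : p < m)
    (h : ℕ → ℝ)
    (hmono : ∀ i j : ℕ, 1 ≤ i → i ≤ j → j ≤ m → h j ≤ h i)
    (hnonneg : ∀ i : ℕ, 1 ≤ i → i ≤ m → 0 ≤ h i)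
    (r : ℕ) (hr1 : 1 ≤ r) (hrp : r ≤ p)
    (l : ℕ) (hl1 : 1 ≤ l)
    (t : ℕ → ℕ) (ht1 : 1 ≤ t 1) (htl : t l ≤ r)
    (htmono : ∀ ι κ : ℕ, 1 ≤ ι → ι < κ → κ ≤ l → t ι < t κ)
    (q : ℕ → ℕ)
    (hqrange : ∀ ι : ℕ, 1 ≤ ι → ι ≤ p - r → p + 1 ≤ q ι ∧ q ι ≤ m)
    (hqmono : ∀ ι κ : ℕ, 1 ≤ ι → ι < κ → κ ≤ p - r → q ι < q κ)
    (φ : ℕ → ℝ)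
    (hφ1 : 1 ≤ p - r → φ 1 = h (r + 1) - h (r + 2))
    (hφrec : ∀ ι : ℕ, 2 ≤ ι → ι ≤ p - r →
      φ ι = max (φ (ι - 1))
        (h (r + 1) - h (r + ι + 1) - ∑ k ∈ Finset.Icc 1 (ι - 1), φ k))
    (z : ℝ) (x : ℕ → ℝ) (hz : 0 ≤ z)
    (hxbin : ∀ i : ℕ, 1 ≤ i → i ≤ m → x i = 0 ∨ x i = 1)
    (hmix : ∀ i : ℕ, 1 ≤ i → i ≤ m → x i = 0 → h i ≤ z)
    (hcard : ∑ i ∈ Finset.Icc 1 m, x i ≤ (p : ℝ)) :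
    h (t 1) ≤ z + (∑ ι ∈ Finset.Icc 1 l,
        (h (t ι) - (if ι < l then h (t (ι + 1)) else h (r + 1))) * x (t ι))
      + ∑ ι ∈ Finset.Icc 1 (p - r), φ ι * (1 - x (q ι)) := by
  have hh : AntitoneOn h (Set.Icc 1 m) := fun i hi j hj hij ↦ hmono i j hi.1 hij hj.2
  have ht : StrictMonoOn t (Set.Icc 1 l) := fun ι hι κ hκ hικ ↦ htmono ι κ hι.1 hικ hκ.2
  have hq : StrictMonoOn q (Set.Icc 1 (p - r)) := fun ι hι κ hκ hικ ↦ hqmono ι κ hι.1 hικ hκ.2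
  exact luedtke_lifted_inequality_valid_general ⟨hxbin, hmix, hcard⟩ hh hpm hrp hl1
    (ht.monotoneOn.mapsTo_Icc.mono_right (Set.Icc_subset_Icc ht1 htl)) ht.monotoneOn
    (fun ι hι ↦ hqrange ι hι.1 hι.2) hq.injOn (monotoneOn_of_eq_max hφrec)
    (fun k ↦ le_sum_of_eq_max_sub (d := fun k ↦ h (r + 1) - h (r + k + 1)) (by simp) hφ1 hφrec)
end

section
/- Assume 1 ≤ p < m. Let r ∈ {1,…,p}, let 1 ≤ t_1 < … < t_l ≤ r, and let q_1,…,q_{p−r} be distinct indices in {1,…,m} with q_ι ≥ r+ι+1 for every ι ∈ {1,…,p−r}. Define φ_{q_1} = h_{r+1} − h_{r+2} and, for ι = 2,…,p−r, φ_{q_ι} = max{ φ_{q_{ι−1}}, h_{r+1} − h_{r+ι+1} − Σ_{k=1,…,ι−1 : q_k ≥ r+ι+1} φ_{q_k} }. Then, with the convention h_{t_{l+1}} := h_{r+1}, every (z,x) ∈ F_c^= satisfies z + Σ_{ι=1}^{l} (h_{t_ι} − h_{t_{ι+1}}) x_{t_ι} + Σ_{ι=1}^{p−r} φ_{q_ι}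 (1 − x_{q_ι}) ≥ h_{t_1}. -/
/-!
Let `b` be `z` plus the lifted sum `∑ φ ι (1 - x_{q ι})`. Since `b ≥ z`, once `b ≥ h (r+1)` the
inequality telescopes along `t`, exactly as for the star inequalities of the mixing set.

To see `b ≥ h (r+1)`, let `c + 1` be the first index with `x (c+1) = 0`, so that `z ≥ h (c+1)`
and the first `c` variables are `1`. The case `c ≤ r` is immediate. If `c = r + a` with `1 ≤ a`,
put `A = {k < a : q k > c}`. Every `k ≥ a` also has `q k > c`, so `|A| + p - r - a + 1` of the
variables `x_{q k}` have index above `c`, while the cardinality constraint leaves at most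
`p - r - a` ones there. Hence at least `|A| + 1` of them vanish. As `φ` is monotone, these give
at least `∑_{k ∈ A} φ k + φ a`, which the recurrence for `φ a` makes at least `h (r+1) - h (c+1)`.
-/

section FiniteSums

variable {R ι : Type*} [CommRing R] [LinearOrder R] [IsStrictOrderedRing R]

theorem le_add_sum_sub_mul_of_eq_one_or_le {g w : ℕ → R} {b : R} {n : ℕ}
    (hg : AntitoneOn g (Set.Icc 1 (n + 1)))
    (hw : ∀ i ∈ Set.Icc 1 n, w i = 1 ∨ w i = 0 ∧ g i ≤ b) (hb : g (n + 1) ≤ b) :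
    g 1 ≤ b + ∑ i ∈ Finset.Icc 1 n, (g i - g (i + 1)) * w i := by
  induction n generalizing b with
  | zero => simpa using hb
  | succ n ih =>
    have hg' : AntitoneOn g (Set.Icc 1 (n + 1)) :=
      hg.mono (Set.Icc_subset_Icc_right (Nat.le_succ _))
    have hlast : g (n + 2) ≤ g (n + 1) :=
      hg ⟨by lia, by lia⟩ ⟨by lia, le_rfl⟩ (Nat.le_succ _)
    have hinit : ∀ i ∈ Set.Icc 1 n, w i = 1 ∨ w i = 0 ∧ g i ≤ b :=
      fun i hi ↦ hw i ⟨hi.1, hi.2.trans (Nat.le_succ n)⟩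
    rw [Finset.sum_Icc_succ_top (Nat.le_add_left 1 n)]
    rcases hw (n + 1) ⟨by lia, le_rfl⟩ with hone | ⟨hzero, hle⟩
    · have := ih (b := b + (g (n + 1) - g (n + 2))) hg'
        (fun i hi ↦ (hinit i hi).imp_right fun h ↦ ⟨h.1, by linarith [h.2]⟩) (by linarith)
      rw [hone]
      linarith
    · simpa [hzero] using ih hg' hinit hle

theorem card_add_sum_comp_le_sum {α : Type*} [DecidableEq α] {S A : Finset α} {K : Finset ι}
    {x : α → R} {q : ι → α} (hAS : A ⊆ S) (hone : ∀ i ∈ A, x i = 1) (hnonneg : ∀ i ∈ S, 0 ≤ x i)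
    (hqinj : Set.InjOn q K) (hqmem : ∀ k ∈ K, q k ∈ S \ A) :
    (A.card : R) + ∑ k ∈ K, x (q k) ≤ ∑ i ∈ S, x i := by
  have himage : K.image q ⊆ S \ A := Finset.image_subset_iff.2 hqmem
  calc (A.card : R) + ∑ k ∈ K, x (q k)
      = ∑ i ∈ A, x i + ∑ i ∈ K.image q, x i := by
        rw [Finset.sum_image hqinj, Finset.sum_congr rfl hone, Finset.sum_const, nsmul_one]
    _ ≤ ∑ i ∈ A, x i + ∑ i ∈ S \ A, x i :=
        add_le_add le_rfl <| Finset.sum_le_sum_of_subset_of_nonneg himage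
          fun i hi _ ↦ hnonneg i (Finset.sdiff_subset hi)
    _ = ∑ i ∈ S, x i := by rw [add_comm, Finset.sum_sdiff hAS]

theorem sum_add_mul_card_sub_sum_le [DecidableEq ι] {A B : Finset ι} {φ w : ι → R} {c : R}
    (hAB : Disjoint A B) (hφA : ∀ k ∈ A, φ k ≤ c) (hφB : ∀ k ∈ B, c ≤ φ k)
    (hwA : ∀ k ∈ A, 0 ≤ w k) (hwB : ∀ k ∈ B, w k ≤ 1) :
    ∑ k ∈ A, φ k + c * (B.card - ∑ k ∈ A ∪ B, w k) ≤ ∑ k ∈ A ∪ B, φ k * (1 - w k) := by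
  have hA : ∑ k ∈ A, (φ k - c * w k) ≤ ∑ k ∈ A, φ k * (1 - w k) :=
    Finset.sum_le_sum fun k hk ↦ by
      linarith [mul_le_mul_of_nonneg_right (hφA k hk) (hwA k hk)]
  have hB : ∑ k ∈ B, c * (1 - w k) ≤ ∑ k ∈ B, φ k * (1 - w k) :=
    Finset.sum_le_sum fun k hk ↦
      mul_le_mul_of_nonneg_right (hφB k hk) (sub_nonneg.2 (hwB k hk))
  rw [Finset.sum_union hAB, Finset.sum_union hAB]
  calc ∑ k ∈ A, φ k + c * (B.card - (∑ k ∈ A, w k + ∑ k ∈ B, w k))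
      = ∑ k ∈ A, (φ k - c * w k) + ∑ k ∈ B, c * (1 - w k) := by
        simp only [Finset.sum_sub_distrib, ← Finset.mul_sum, Finset.sum_const, nsmul_one]
        ring
    _ ≤ _ := add_le_add hA hB

end FiniteSums

section Lifting

variable {R : Type*} [CommRing R] [LinearOrder R] {m r n : ℕ} {h φ : ℕ → R} {q : ℕ → ℕ}

/-- Coefficients `φ 1, …, φ n` with which the terms `1 - x (q ι)` may be lifted into a star
inequality ending at `h (r + 1)`. The recurrence of Küçükyavuz produces such coefficients; only
the resulting inequalities are recorded here. -/
structure IsLiftingSequence (h : ℕ → R) (r n : ℕ) (q : ℕ → ℕ) (φ : ℕ → R) : Prop where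
  monotoneOn : MonotoneOn φ (Set.Icc 1 n)
  sub_le : ∀ ι ∈ Set.Icc 1 n, h (r + 1) - h (r + ι + 1) -
    ∑ k ∈ (Finset.Icc 1 (ι - 1)).filter (fun k ↦ r + ι + 1 ≤ q k), φ k ≤ φ ι

namespace IsLiftingSequence

theorem of_recurrence (hφ1 : 1 ≤ n → φ 1 = h (r + 1) - h (r + 2))
    (hφrec : ∀ ι, 2 ≤ ι → ι ≤ n → φ ι = max (φ (ι - 1)) (h (r + 1) - h (r + ι + 1) -
      ∑ k ∈ (Finset.Icc 1 (ι - 1)).filter (fun k ↦ r + ι + 1 ≤ q k), φ k)) :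
    IsLiftingSequence h r n q φ where
  monotoneOn := monotoneOn_of_le_add_one Set.ordConnected_Icc fun ι _ hι hι' ↦ by
    rw [hφrec (ι + 1) (Nat.succ_le_succ hι.1) hι'.2]
    exact le_max_left _ _
  sub_le ι hι := by
    rcases hι.1.eq_or_lt with rfl | hι2
    · simp [hφ1 hι.2]
    · exact (le_max_right _ _).trans_eq (hφrec ι hι2 hι.2).symm

theorem nonneg [IsStrictOrderedRing R] (hφ : IsLiftingSequence h r n q φ)
    (hr : h (r + 2) ≤ h (r + 1)) {ι : ℕ} (hι : ι ∈ Set.Icc 1 n) : 0 ≤ φ ι := by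
  have hn : 1 ∈ Set.Icc 1 n := ⟨le_rfl, hι.1.trans hι.2⟩
  calc 0 ≤ h (r + 1) - h (r + 2) := sub_nonneg.2 hr
    _ ≤ φ 1 := by simpa using hφ.sub_le 1 hn
    _ ≤ φ ι := hφ.monotoneOn hn hι hι.1

end IsLiftingSequence

/-- The point `(z, x)` lies in the mixing set with bounds `h 1, …, h m` and cardinality
constraint `p`. The variable `z` is unrestricted in sign, and `x i` is constrained only for
`1 ≤ i ≤ m`. -/
structure IsCardMixingPoint (m p : ℕ) (h : ℕ → R) (z : R) (x : ℕ → R) : Prop where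
  eq_zero_or_one : ∀ i, 1 ≤ i → i ≤ m → x i = 0 ∨ x i = 1
  le_of_eq_zero : ∀ i, 1 ≤ i → i ≤ m → x i = 0 → h i ≤ z
  sum_le : ∑ i ∈ Finset.Icc 1 m, x i ≤ (p : R)

namespace IsCardMixingPoint

variable [IsStrictOrderedRing R] {p l : ℕ} {z b : R} {x : ℕ → R} {t : ℕ → ℕ}

theorem nonneg (hx : IsCardMixingPoint m p h z x) {i : ℕ} (hi : 1 ≤ i) (him : i ≤ m) :
    0 ≤ x i := by
  rcases hx.eq_zero_or_one i hi him with h | h <;> simp [h]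

theorem le_one (hx : IsCardMixingPoint m p h z x) {i : ℕ} (hi : 1 ≤ i) (him : i ≤ m) :
    x i ≤ 1 := by
  rcases hx.eq_zero_or_one i hi him with h | h <;> simp [h]

theorem add_sum_comp_le (hx : IsCardMixingPoint m p h z x) {c : ℕ} (hcm : c ≤ m)
    (hone : ∀ i ∈ Finset.Icc 1 c, x i = 1) {K : Finset ℕ} (hqinj : Set.InjOn q K)
    (hqmem : ∀ k ∈ K, c < q k ∧ q k ≤ m) : (c : R) + ∑ k ∈ K, x (q k) ≤ p := by
  have hsum := card_add_sum_comp_le_sum (Finset.Icc_subset_Icc_right hcm) hone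
    (fun i hi ↦ hx.nonneg (Finset.mem_Icc.1 hi).1 (Finset.mem_Icc.1 hi).2) hqinj
    (fun k hk ↦ by grind)
  rw [Nat.card_Icc, Nat.add_sub_cancel] at hsum
  exact hsum.trans hx.sum_le

theorem exists_first_zero (hx : IsCardMixingPoint m p h z x) (hpm : p < m) :
    ∃ c ≤ p, x (c + 1) = 0 ∧ ∀ i ∈ Finset.Icc 1 c, x i = 1 := by
  classical
  have hex : ∃ c, c ≤ p ∧ x (c + 1) = 0 := by
    by_contra! hne
    have hone : ∀ i ∈ Finset.Icc 1 (p + 1), x i = 1 := fun i hi ↦ by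
      obtain ⟨hi1, hip⟩ := Finset.mem_Icc.1 hi
      obtain ⟨c, rfl⟩ := Nat.exists_eq_add_of_le' hi1
      exact (hx.eq_zero_or_one _ hi1 (by lia)).resolve_left (hne c (by lia))
    have hcard := hx.add_sum_comp_le (q := id) (K := ∅) hpm hone (by simp) (by simp)
    rw [Finset.sum_empty, add_zero] at hcard
    exact Nat.not_succ_le_self p (Nat.cast_le.1 hcard)
  obtain ⟨hcp, hzero⟩ := Nat.find_spec hex
  refine ⟨Nat.find hex, hcp, hzero, fun i hi ↦ ?_⟩
  obtain ⟨hi1, hic⟩ := Finset.mem_Icc.1 hi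
  obtain ⟨c, rfl⟩ := Nat.exists_eq_add_of_le' hi1
  exact (hx.eq_zero_or_one _ hi1 (by lia)).resolve_left
    fun h ↦ Nat.find_min hex hic ⟨by lia, h⟩

theorem lifted_term_nonneg (hx : IsCardMixingPoint m p h z x) (hstep : h (r + 2) ≤ h (r + 1))
    (hqrange : ∀ ι, 1 ≤ ι → ι ≤ n → r + ι + 1 ≤ q ι ∧ q ι ≤ m)
    (hφ : IsLiftingSequence h r n q φ) {ι : ℕ} (hι : ι ∈ Finset.Icc 1 n) :
    0 ≤ φ ι * (1 - x (q ι)) := by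
  obtain ⟨hι1, hιn⟩ := Finset.mem_Icc.1 hι
  obtain ⟨hrq, hqm⟩ := hqrange ι hι1 hιn
  exact mul_nonneg (hφ.nonneg hstep ⟨hι1, hιn⟩) (sub_nonneg.2 (hx.le_one (by lia) hqm))

theorem lifted_sum_nonneg (hx : IsCardMixingPoint m p h z x)
    (hanti : AntitoneOn h (Set.Icc 1 m))
    (hqrange : ∀ ι, 1 ≤ ι → ι ≤ n → r + ι + 1 ≤ q ι ∧ q ι ≤ m)
    (hφ : IsLiftingSequence h r n q φ) :
    0 ≤ ∑ ι ∈ Finset.Icc 1 n, φ ι * (1 - x (q ι)) :=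
  Finset.sum_nonneg fun ι hι ↦
    have ⟨hι1, hιn⟩ := Finset.mem_Icc.1 hι
    have ⟨hrq, hqm⟩ := hqrange ι hι1 hιn
    hx.lifted_term_nonneg (hanti ⟨by lia, by lia⟩ ⟨by lia, by lia⟩ (Nat.le_succ _)) hqrange hφ hι

theorem sub_le_lifted_sum {a : ℕ} (hx : IsCardMixingPoint m (r + n) h z x)
    (hstep : h (r + 2) ≤ h (r + 1))
    (hqrange : ∀ ι, 1 ≤ ι → ι ≤ n → r + ι + 1 ≤ q ι ∧ q ι ≤ m)
    (hqinj : Set.InjOn q (Set.Icc 1 n)) (hφ : IsLiftingSequence h r n q φ)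
    (ha : a ∈ Set.Icc 1 n) (hone : ∀ i ∈ Finset.Icc 1 (r + a), x i = 1) :
    h (r + 1) - h (r + a + 1) ≤ ∑ ι ∈ Finset.Icc 1 n, φ ι * (1 - x (q ι)) := by
  obtain ⟨ha1, han⟩ := ha
  set A := (Finset.Icc 1 (a - 1)).filter (fun k ↦ r + a + 1 ≤ q k)
  set B := Finset.Icc a n with hB
  have hAB : Disjoint A B := Finset.disjoint_left.2 (by grind)
  have hsub : A ∪ B ⊆ Finset.Icc 1 n := by grind
  have hqmem : ∀ k ∈ A ∪ B, r + a < q k ∧ q k ≤ m := by grind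
  have hφa : 0 ≤ φ a := hφ.nonneg hstep ⟨ha1, han⟩
  have hvanish : 1 ≤ (B.card : R) - ∑ k ∈ A ∪ B, x (q k) := by
    have hcard := hx.add_sum_comp_le (by grind) hone
      (hqinj.mono fun k hk ↦ Finset.mem_Icc.1 (hsub hk)) hqmem
    have hcardB : (B.card : R) + a = n + 1 := by
      rw [hB, Nat.card_Icc]
      exact_mod_cast Nat.sub_add_cancel (by lia)
    push_cast at hcard
    linarith
  calc h (r + 1) - h (r + a + 1)
      ≤ ∑ k ∈ A, φ k + φ a * 1 := by linarith [hφ.sub_le a ⟨ha1, han⟩]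
    _ ≤ ∑ k ∈ A, φ k + φ a * (B.card - ∑ k ∈ A ∪ B, x (q k)) := by gcongr
    _ ≤ ∑ k ∈ A ∪ B, φ k * (1 - x (q k)) :=
        sum_add_mul_card_sub_sum_le hAB
          (fun k hk ↦ hφ.monotoneOn (by grind) ⟨ha1, han⟩ (by grind))
          (fun k hk ↦ hφ.monotoneOn ⟨ha1, han⟩ (by grind) (by grind))
          (fun k hk ↦ hx.nonneg (by grind) (by grind))
          (fun k hk ↦ hx.le_one (by grind) (by grind))
    _ ≤ ∑ ι ∈ Finset.Icc 1 n, φ ι * (1 - x (q ι)) :=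
        Finset.sum_le_sum_of_subset_of_nonneg hsub fun _ hk _ ↦
          hx.lifted_term_nonneg hstep hqrange hφ hk

theorem le_add_lifted_sum (hx : IsCardMixingPoint m (r + n) h z x) (hpm : r + n < m)
    (hanti : AntitoneOn h (Set.Icc 1 m))
    (hqrange : ∀ ι, 1 ≤ ι → ι ≤ n → r + ι + 1 ≤ q ι ∧ q ι ≤ m)
    (hqinj : Set.InjOn q (Set.Icc 1 n)) (hφ : IsLiftingSequence h r n q φ) :
    h (r + 1) ≤ z + ∑ ι ∈ Finset.Icc 1 n, φ ι * (1 - x (q ι)) := by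
  obtain ⟨c, hcp, hzero, hone⟩ := hx.exists_first_zero hpm
  have hcz : h (c + 1) ≤ z := hx.le_of_eq_zero (c + 1) (by lia) (by lia) hzero
  rcases le_or_gt c r with hcr | hrc
  · have hsum := hx.lifted_sum_nonneg hanti hqrange hφ
    calc h (r + 1) ≤ h (c + 1) :=
          hanti ⟨by lia, by lia⟩ ⟨by lia, by lia⟩ (Nat.succ_le_succ hcr)
      _ ≤ z + ∑ ι ∈ Finset.Icc 1 n, φ ι * (1 - x (q ι)) := by linarith
  · obtain ⟨a, rfl⟩ := Nat.exists_eq_add_of_le hrc.le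
    have hlift := hx.sub_le_lifted_sum
      (hanti ⟨by lia, by lia⟩ ⟨by lia, by lia⟩ (Nat.le_succ (r + 1))) hqrange hqinj hφ
      (a := a) ⟨by lia, by lia⟩ hone
    linarith

theorem le_add_star_sum (hx : IsCardMixingPoint m p h z x) (hanti : AntitoneOn h (Set.Icc 1 m))
    (hrm : r < m) (hl : 1 ≤ l) (ht1 : 1 ≤ t 1) (htl : t l ≤ r)
    (htmono : MonotoneOn t (Set.Icc 1 l)) (hzb : z ≤ b) (hb : h (r + 1) ≤ b) :
    h (t 1) ≤ b + ∑ ι ∈ Finset.Icc 1 l,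
      (h (t ι) - (if ι < l then h (t (ι + 1)) else h (r + 1))) * x (t ι) := by
  have ht : ∀ ι ∈ Set.Icc 1 l, t ι ∈ Set.Icc 1 r := fun ι hι ↦
    ⟨ht1.trans (htmono ⟨le_rfl, hl⟩ hι hι.1), (htmono hι ⟨hl, le_rfl⟩ hι.2).trans htl⟩
  have htm : ∀ ι ∈ Set.Icc 1 l, t ι ∈ Set.Icc 1 m := fun ι hι ↦
    ⟨(ht ι hι).1, (ht ι hι).2.trans hrm.le⟩
  have hext : AntitoneOn (fun ι ↦ if ι ≤ l then h (t ι) else h (r + 1))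
      (Set.Icc 1 (l + 1)) := fun i hi j hj hij ↦ by
    by_cases hjl : j ≤ l
    · simpa [hjl, hij.trans hjl] using hanti (htm i ⟨hi.1, hij.trans hjl⟩)
        (htm j ⟨hj.1, hjl⟩) (htmono ⟨hi.1, hij.trans hjl⟩ ⟨hj.1, hjl⟩ hij)
    by_cases hil : i ≤ l
    · simpa [hjl, hil] using hanti (htm i ⟨hi.1, hil⟩) ⟨by lia, hrm⟩
        ((ht i ⟨hi.1, hil⟩).2.trans (Nat.le_succ r))
    · simp [hil, hjl]
  have htelescope := le_add_sum_sub_mul_of_eq_one_or_le (w := fun ι ↦ x (t ι)) (b := b) hext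
    (fun ι hι ↦ (hx.eq_zero_or_one _ (htm ι hι).1 (htm ι hι).2).symm.imp_right fun hzero ↦
      ⟨hzero, by
        simpa [hι.2] using (hx.le_of_eq_zero _ (htm ι hι).1 (htm ι hι).2 hzero).trans hzb⟩)
    (by simpa using hb)
  simp only [hl, if_true, Nat.succ_le_iff] at htelescope
  refine htelescope.trans_eq (congrArg (b + ·) (Finset.sum_congr rfl fun ι hι ↦ ?_))
  rw [if_pos (Finset.mem_Icc.1 hι).2]

end IsCardMixingPoint

theorem kucukyavuz_lifted_inequality_valid_general [IsStrictOrderedRing R]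
    {p l : ℕ} {z : R} {x : ℕ → R} {t : ℕ → ℕ} (hpm : p < m)
    (hanti : AntitoneOn h (Set.Icc 1 m)) (hrp : r ≤ p)
    (hl : 1 ≤ l) (ht1 : 1 ≤ t 1) (htl : t l ≤ r) (htmono : MonotoneOn t (Set.Icc 1 l))
    (hqrange : ∀ ι, 1 ≤ ι → ι ≤ p - r → r + ι + 1 ≤ q ι ∧ q ι ≤ m)
    (hqinj : Set.InjOn q (Set.Icc 1 (p - r))) (hφ : IsLiftingSequence h r (p - r) q φ)
    (hx : IsCardMixingPoint m p h z x) :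
    h (t 1) ≤ z + (∑ ι ∈ Finset.Icc 1 l,
        (h (t ι) - (if ι < l then h (t (ι + 1)) else h (r + 1))) * x (t ι))
      + ∑ ι ∈ Finset.Icc 1 (p - r), φ ι * (1 - x (q ι)) := by
  obtain ⟨n, rfl⟩ := Nat.exists_eq_add_of_le hrp
  rw [Nat.add_sub_cancel_left] at hqrange hqinj hφ ⊢
  rw [add_right_comm]
  exact hx.le_add_star_sum hanti (by lia) hl ht1 htl htmono
    (le_add_of_nonneg_right (hx.lifted_sum_nonneg hanti hqrange hφ))
    (hx.le_add_lifted_sum hpm hanti hqrange hqinj hφ)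

end Lifting

/-- **Küçükyavuz inequalities for the mixing set with a cardinality constraint.**
Here `F_c^= = {(z,x) ∈ ℝ₊ × {0,1}^m : x i = 0 → z ≥ h i, ∑ x i ≤ p}`,
`r ∈ {1,…,p}`, `1 ≤ t 1 < … < t l ≤ r`, the indices `q 1, …, q (p−r)` are distinct
in `{1,…,m}` with `q ι ≥ r+ι+1`, `φ 1 = h (r+1) − h (r+2)` and
`φ ι = max (φ (ι−1)) (h (r+1) − h (r+ι+1) − ∑_{k<ι : q k ≥ r+ι+1} φ k)` for
`2 ≤ ι ≤ p−r`, and the convention `h (t (l+1)) := h (r+1)`. -/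
theorem kucukyavuz_lifted_inequality_valid
    (m p : ℕ) (hm : 1 ≤ m) (hp1 : 1 ≤ p) (hpm : p < m)
    (h : ℕ → ℝ)
    (hmono : ∀ i j : ℕ, 1 ≤ i → i ≤ j → j ≤ m → h j ≤ h i)
    (hnonneg : ∀ i : ℕ, 1 ≤ i → i ≤ m → 0 ≤ h i)
    (r : ℕ) (hr1 : 1 ≤ r) (hrp : r ≤ p)
    (l : ℕ) (hl1 : 1 ≤ l)
    (t : ℕ → ℕ) (ht1 : 1 ≤ t 1) (htl : t l ≤ r)
    (htmono : ∀ ι κ : ℕ, 1 ≤ ι → ι < κ → κ ≤ l → t ι < t κ)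
    (q : ℕ → ℕ)
    (hqrange : ∀ ι : ℕ, 1 ≤ ι → ι ≤ p - r → r + ι + 1 ≤ q ι ∧ q ι ≤ m)
    (hqinj : ∀ ι κ : ℕ, 1 ≤ ι → ι ≤ p - r → 1 ≤ κ → κ ≤ p - r → q ι = q κ → ι = κ)
    (φ : ℕ → ℝ)
    (hφ1 : 1 ≤ p - r → φ 1 = h (r + 1) - h (r + 2))
    (hφrec : ∀ ι : ℕ, 2 ≤ ι → ι ≤ p - r →
      φ ι = max (φ (ι - 1))
        (h (r + 1) - h (r + ι + 1) -
          ∑ k ∈ (Finset.Icc 1 (ι - 1)).filter (fun k => r + ι + 1 ≤ q k), φ k))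
    (z : ℝ) (x : ℕ → ℝ) (hz : 0 ≤ z)
    (hxbin : ∀ i : ℕ, 1 ≤ i → i ≤ m → x i = 0 ∨ x i = 1)
    (hmix : ∀ i : ℕ, 1 ≤ i → i ≤ m → x i = 0 → h i ≤ z)
    (hcard : ∑ i ∈ Finset.Icc 1 m, x i ≤ (p : ℝ)) :
    h (t 1) ≤ z + (∑ ι ∈ Finset.Icc 1 l,
        (h (t ι) - (if ι < l then h (t (ι + 1)) else h (r + 1))) * x (t ι))
      + ∑ ι ∈ Finset.Icc 1 (p - r), φ ι * (1 - x (q ι)) := by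
  exact kucukyavuz_lifted_inequality_valid_general hpm
    (fun i hi j hj hij ↦ hmono i j hi.1 hij hj.2) hrp hl1 ht1 htl
    (StrictMonoOn.monotoneOn fun ι hι κ hκ hlt ↦ htmono ι κ hι.1 hlt hκ.2) hqrange
    (fun ι hι κ hκ ↦ hqinj ι κ hι.1 hι.2 hκ.1 hκ.2) (.of_recurrence hφ1 hφrec)
    ⟨hxbin, hmix, hcard⟩
end

section
/- Under Assumption 1, let Q be the set of points (x, y, u^1, …, u^m) ∈ ℝ^n × ℝ^m × (ℝ^n)^m satisfying: (b^k)^⊤(x − Σ_{j=1}^m u^j) ≥ d_k (1 − Σ_{j=1}^m y_j) for all k ∈ K; (A^k_{j·} + (b^k)^⊤) u^j ≥ (d_k − c^k_j) y_j for all k ∈ K and j ∈ {1,…,m}; E(x − Σ_{j=1}^m u^j) ≥ f (1 − Σ_{j=1}^m y_j); E u^j ≥ f y_j for all j ∈ {1,…,m}; x − Σ_{j=1}^m u^j ≥ 0; u^j ≥ 0 for all j; 1 − Σ_{j=1}^m y_j ≥ 0; and y ≥ 0. Then the projection of the convex hull of S onto the x-variables equals the projection of Q onto the x-variables: proj_x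 conv(S) = proj_x Q. -/
noncomputable section

/-- The unit vectors `e^0 = 0, e^1, …, e^m` of `ℝ^m`, indexed by `Option (Fin m)`
(`none` corresponds to the origin `e^0`). -/
def unitVec (m : ℕ) : Option (Fin m) → (Fin m → ℝ)
  | none => 0
  | some j => Pi.single j 1

/-- The recession cone of a set `C`:
`rec(C) = {v : c + t • v ∈ C for all c ∈ C and all t ≥ 0}`. -/
def recCone {V : Type*} [AddCommMonoid V] [SMul ℝ V] (C : Set V) : Set V :=
  {v | ∀ c ∈ C, ∀ s : ℝ, 0 ≤ s → c + s • v ∈ C}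

/-- The bilinear set `S = {(x,y) ∈ Ξ × Δ_m : yᵀ A^k x + (b^k)ᵀ x + (c^k)ᵀ y ≥ d_k ∀k}`,
where `Ξ = {x ≥ 0 : E x ≥ f}` and `Δ_m = {y ∈ ℤ^m : y ≥ 0, ∑ y_j ≤ 1}`. -/
def bilinearS (n m κ τ : ℕ) (A : Fin κ → Fin m → Fin n → ℝ) (b : Fin κ → Fin n → ℝ)
    (c : Fin κ → Fin m → ℝ) (d : Fin κ → ℝ) (E : Fin τ → Fin n → ℝ) (f : Fin τ → ℝ) :
    Set ((Fin n → ℝ) × (Fin m → ℝ)) :=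
  {w | (∀ i, 0 ≤ w.1 i) ∧ (∀ s, f s ≤ ∑ i, E s i * w.1 i) ∧
    (∀ j, ∃ zz : ℤ, w.2 j = (zz : ℝ)) ∧ (∀ j, 0 ≤ w.2 j) ∧ (∑ j, w.2 j ≤ 1) ∧
    (∀ k, d k ≤ (∑ j, ∑ i, w.2 j * A k j i * w.1 i) + (∑ i, b k i * w.1 i) +
      (∑ j, c k j * w.2 j))}

/-- The restriction `S(e^j)` of the bilinear set at the point `y = e^j`. -/
def restrictS (n m κ τ : ℕ) (A : Fin κ → Fin m → Fin n → ℝ) (b : Fin κ → Fin n → ℝ)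
    (c : Fin κ → Fin m → ℝ) (d : Fin κ → ℝ) (E : Fin τ → Fin n → ℝ) (f : Fin τ → ℝ)
    (o : Option (Fin m)) : Set ((Fin n → ℝ) × (Fin m → ℝ)) :=
  {w | w.2 = unitVec m o ∧
    (∀ k, d k - (∑ j, c k j * unitVec m o j) ≤
      (∑ j, ∑ i, unitVec m o j * A k j i * w.1 i) + (∑ i, b k i * w.1 i)) ∧
    (∀ s, f s ≤ ∑ i, E s i * w.1 i) ∧ (∀ i, 0 ≤ w.1 i)}

/-- The disjunctive-programming set `Q` in the variables `(x, y, u¹, …, uᵐ)`. -/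
def setQ (n m κ τ : ℕ) (A : Fin κ → Fin m → Fin n → ℝ) (b : Fin κ → Fin n → ℝ)
    (c : Fin κ → Fin m → ℝ) (d : Fin κ → ℝ) (E : Fin τ → Fin n → ℝ) (f : Fin τ → ℝ) :
    Set ((Fin n → ℝ) × (Fin m → ℝ) × (Fin m → Fin n → ℝ)) :=
  {w | (∀ k, d k * (1 - ∑ j, w.2.1 j) ≤ ∑ i, b k i * (w.1 i - ∑ j, w.2.2 j i)) ∧
    (∀ k, ∀ j, (d k - c k j) * w.2.1 j ≤ ∑ i, (A k j i + b k i) * w.2.2 j i) ∧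
    (∀ s, f s * (1 - ∑ j, w.2.1 j) ≤ ∑ i, E s i * (w.1 i - ∑ j, w.2.2 j i)) ∧
    (∀ s, ∀ j, f s * w.2.1 j ≤ ∑ i, E s i * w.2.2 j i) ∧
    (∀ i, 0 ≤ w.1 i - ∑ j, w.2.2 j i) ∧
    (∀ j, ∀ i, 0 ≤ w.2.2 j i) ∧
    (0 ≤ 1 - ∑ j, w.2.1 j) ∧ (∀ j, 0 ≤ w.2.1 j)}

/-!
Projecting `S` onto `x` gives the union of the polyhedra `P_o`, `o = 0, …, m`, underlying the
restrictions `S(e^o)`. By Balas' homogenization argument, a sum `∑ o, v o` of points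
`(v o, t o)` of the cones over the `P_o` with `t` in the simplex is a convex combination of the
points `(t o)⁻¹ • v o`, except that the terms with `t o = 0` are only recession directions;
when all `P_o` recede in the same directions, these terms can be added to every other point.
Eliminating the slack variables `v none = x - ∑ j, u j` and `t none = 1 - ∑ j, y j` turns this
description into `Q`.
-/

section DisjunctiveLift

variable {𝕜 ι V : Type*} {F : ι → Type*} [Field 𝕜] [LinearOrder 𝕜] [IsStrictOrderedRing 𝕜]
  [Fintype ι] [AddCommGroup V] [Module 𝕜 V] [∀ i, AddCommGroup (F i)] [∀ i, PartialOrder (F i)]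
  [∀ i, Module 𝕜 (F i)]

/-- Balas' extended formulation for the union of the sets `{x | q i ≤ M i x}`:
pairs `(v, t)` with `t` in the simplex and `(v i, t i)` in the cone `t i • q i ≤ M i (v i)` over
the `i`-th set. The order on `F i` encodes arbitrary systems of linear inequalities; the point
represented by `(v, t)` is `∑ i, v i`. -/
def disjunctiveLift (M : ∀ i, V →ₗ[𝕜] F i) (q : ∀ i, F i) : Set ((ι → V) × (ι → 𝕜)) :=
  {w | w.2 ∈ stdSimplex 𝕜 ι ∧ ∀ i, w.2 i • q i ≤ M i (w.1 i)}

theorem exists_mem_disjunctiveLift_of_le {M : ∀ i, V →ₗ[𝕜] F i} {q : ∀ i, F i} {i : ι} {x : V}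
    (hx : q i ≤ M i x) : ∃ w ∈ disjunctiveLift M q, ∑ j, w.1 j = x := by
  classical
  refine ⟨(Pi.single i x, Pi.single i 1), ⟨single_mem_stdSimplex 𝕜 i, fun j => ?_⟩, by simp⟩
  obtain rfl | hji := eq_or_ne j i
  · simpa using hx
  · simp [hji]

variable [∀ i, IsOrderedAddMonoid (F i)] [∀ i, PosSMulMono 𝕜 (F i)]

theorem convex_disjunctiveLift (M : ∀ i, V →ₗ[𝕜] F i) (q : ∀ i, F i) :
    Convex 𝕜 (disjunctiveLift M q) := by
  rintro ⟨v, t⟩ ⟨ht, hv⟩ ⟨v', t'⟩ ⟨ht', hv'⟩ a a' ha ha' haa'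
  refine ⟨convex_stdSimplex 𝕜 ι ht ht' ha ha' haa', fun i => ?_⟩
  calc (a • t i + a' • t' i) • q i = a • t i • q i + a' • t' i • q i := by
        rw [add_smul, smul_assoc, smul_assoc]
    _ ≤ a • M i (v i) + a' • M i (v' i) :=
        add_le_add (smul_le_smul_of_nonneg_left (hv i) ha)
          (smul_le_smul_of_nonneg_left (hv' i) ha')
    _ = M i (a • v i + a' • v' i) := by simp only [map_add, map_smul]

theorem convexHull_iUnion_subset_image_disjunctiveLift (M : ∀ i, V →ₗ[𝕜] F i) (q : ∀ i, F i) :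
    convexHull 𝕜 (⋃ i, M i ⁻¹' Set.Ici (q i)) ⊆
      (fun w => ∑ i, w.1 i) '' disjunctiveLift M q := by
  refine convexHull_min (Set.iUnion_subset fun i x hx => exists_mem_disjunctiveLift_of_le hx) ?_
  refine (convex_disjunctiveLift M q).is_linear_image ⟨fun w w' => ?_, fun a w => ?_⟩
  · exact Finset.sum_add_distrib ..
  · simp only [Prod.smul_fst, Pi.smul_apply, Finset.smul_sum]

theorem sum_mem_convexHull_of_mem_disjunctiveLift {M : ∀ i, V →ₗ[𝕜] F i} {q : ∀ i, F i}
    (hM : ∀ i j v, 0 ≤ M i v → 0 ≤ M j v) {w : (ι → V) × (ι → 𝕜)}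
    (hw : w ∈ disjunctiveLift M q) :
    ∑ i, w.1 i ∈ convexHull 𝕜 (⋃ i, M i ⁻¹' Set.Ici (q i)) := by
  classical
  obtain ⟨v, t⟩ := w
  obtain ⟨⟨ht_nonneg, ht_sum⟩, hv⟩ := hw
  set r := ∑ i with t i = 0, v i with hr
  have hr_nonneg (j : ι) : 0 ≤ M j r := by
    rw [hr, map_sum]
    refine Finset.sum_nonneg fun i hi => hM i j _ ?_
    simpa [(Finset.mem_filter.mp hi).2] using hv i
  have ht_support : ∑ i with t i ≠ 0, t i = 1 := by rw [Finset.sum_filter_ne_zero, ht_sum]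
  have hpoint (i : ι) (hi : t i ≠ 0) : q i ≤ M i ((t i)⁻¹ • v i + r) := by
    calc q i = (t i)⁻¹ • t i • q i := (inv_smul_smul₀ hi _).symm
      _ ≤ (t i)⁻¹ • M i (v i) :=
          smul_le_smul_of_nonneg_left (hv i) (inv_nonneg.mpr (ht_nonneg i))
      _ ≤ (t i)⁻¹ • M i (v i) + M i r := le_add_of_nonneg_right (hr_nonneg i)
      _ = M i ((t i)⁻¹ • v i + r) := by rw [map_add, map_smul]
  have hcombination : ∑ i, v i = ∑ i with t i ≠ 0, t i • ((t i)⁻¹ • v i + r) := by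
    calc ∑ i, v i = ∑ i with t i ≠ 0, v i + r := by
          rw [hr, add_comm, Finset.sum_filter_add_sum_filter_not]
      _ = ∑ i with t i ≠ 0, v i + ∑ i with t i ≠ 0, t i • r := by
          rw [← Finset.sum_smul, ht_support, one_smul]
      _ = ∑ i with t i ≠ 0, t i • ((t i)⁻¹ • v i + r) := by
          rw [← Finset.sum_add_distrib]
          refine Finset.sum_congr rfl fun i hi => ?_
          rw [smul_add, smul_inv_smul₀ (Finset.mem_filter.mp hi).2]
  rw [hcombination]
  refine (convex_convexHull 𝕜 _).sum_mem (fun i _ => ht_nonneg i) ht_support fun i hi => ?_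
  exact subset_convexHull 𝕜 _ (Set.mem_iUnion_of_mem i (hpoint i (Finset.mem_filter.mp hi).2))

theorem convexHull_iUnion_eq_image_disjunctiveLift {M : ∀ i, V →ₗ[𝕜] F i} {q : ∀ i, F i}
    (hM : ∀ i j v, 0 ≤ M i v → 0 ≤ M j v) :
    convexHull 𝕜 (⋃ i, M i ⁻¹' Set.Ici (q i)) = (fun w => ∑ i, w.1 i) '' disjunctiveLift M q :=
  (convexHull_iUnion_subset_image_disjunctiveLift M q).antisymm <|
    Set.image_subset_iff.mpr fun _ => sum_mem_convexHull_of_mem_disjunctiveLift hM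

end DisjunctiveLift

section RecessionCone

theorem prodMk_zero_mem_recCone_prod_singleton_iff {V W : Type*} [AddCommMonoid V] [SMul ℝ V]
    [AddCommMonoid W] [SMulZeroClass ℝ W] {C : Set V} {v : V} {y : W} :
    (v, (0 : W)) ∈ recCone (C ×ˢ {y}) ↔ v ∈ recCone C := by
  simp [recCone]

theorem nonneg_of_forall_le_add_smul {F : Type*} [AddCommGroup F] [PartialOrder F]
    [IsOrderedAddMonoid F] [Module ℝ F] [PosSMulMono ℝ F] [TopologicalSpace F]
    [ContinuousSMul ℝ F] [ClosedIicTopology F] {a b c : F}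
    (h : ∀ s : ℝ, 0 ≤ s → a ≤ b + s • c) : 0 ≤ c := by
  have hlim : Filter.Tendsto (fun s : ℝ => s⁻¹ • (a - b)) Filter.atTop (nhds 0) := by
    simpa using (tendsto_inv_atTop_zero (𝕜 := ℝ)).smul_const (a - b)
  refine le_of_tendsto hlim ((Filter.eventually_gt_atTop 0).mono fun s hs => ?_)
  exact (inv_smul_le_iff_of_pos hs).mpr (sub_le_iff_le_add'.mpr (h s hs.le))

theorem recCone_preimage_Ici {V F : Type*} [AddCommGroup V] [Module ℝ V] [AddCommGroup F]
    [PartialOrder F] [IsOrderedAddMonoid F] [Module ℝ F] [PosSMulMono ℝ F] [TopologicalSpace F]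
    [ContinuousSMul ℝ F] [ClosedIicTopology F] {M : V →ₗ[ℝ] F} {q : F}
    (hne : (M ⁻¹' Set.Ici q).Nonempty) :
    recCone (M ⁻¹' Set.Ici q) = M ⁻¹' Set.Ici 0 := by
  ext v
  refine ⟨fun hv => ?_, fun hv x hx s hs => ?_⟩
  · obtain ⟨x, hx⟩ := hne
    exact nonneg_of_forall_le_add_smul fun s hs => by simpa using hv x hx s hs
  · simpa using add_le_add hx (smul_nonneg hs hv)

theorem convexHull_iUnion_eq_image_disjunctiveLift_of_recCone_eq {ι V : Type*} {F : ι → Type*}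
    [Fintype ι] [AddCommGroup V] [Module ℝ V] [∀ i, AddCommGroup (F i)]
    [∀ i, PartialOrder (F i)] [∀ i, IsOrderedAddMonoid (F i)] [∀ i, Module ℝ (F i)]
    [∀ i, PosSMulMono ℝ (F i)] [∀ i, TopologicalSpace (F i)] [∀ i, ContinuousSMul ℝ (F i)]
    [∀ i, ClosedIicTopology (F i)] {M : ∀ i, V →ₗ[ℝ] F i} {q : ∀ i, F i}
    (hne : ∀ i, (M i ⁻¹' Set.Ici (q i)).Nonempty)
    (hrec : ∀ i j, recCone (M i ⁻¹' Set.Ici (q i)) = recCone (M j ⁻¹' Set.Ici (q j))) :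
    convexHull ℝ (⋃ i, M i ⁻¹' Set.Ici (q i)) =
      (fun w => ∑ i, w.1 i) '' disjunctiveLift M q := by
  refine convexHull_iUnion_eq_image_disjunctiveLift fun i j v hv => ?_
  have hcones : M i ⁻¹' Set.Ici 0 = M j ⁻¹' Set.Ici 0 := by
    rw [← recCone_preimage_Ici (hne i), hrec i j, recCone_preimage_Ici (hne j)]
  exact hcones.subset hv

end RecessionCone

section BilinearSet

theorem mem_range_unitVec_iff {m : ℕ} {y : Fin m → ℝ} :
    y ∈ Set.range (unitVec m) ↔
      (∀ j, ∃ z : ℤ, y j = z) ∧ (∀ j, 0 ≤ y j) ∧ ∑ j, y j ≤ 1 := by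
  constructor
  · rintro ⟨_ | j, rfl⟩
    · exact ⟨fun _ => ⟨0, by simp [unitVec]⟩, by simp [unitVec], by simp [unitVec]⟩
    · refine ⟨fun i => ⟨(Pi.single j 1 : Fin m → ℤ) i, ?_⟩, fun i => ?_, by simp [unitVec]⟩
      · simp [unitVec, Pi.single_apply]
      · exact (Pi.single_nonneg.mpr zero_le_one : 0 ≤ (Pi.single j 1 : Fin m → ℝ)) i
  · rintro ⟨hint, hnonneg, hsum⟩
    by_cases hy : y = 0
    · exact ⟨none, hy.symm⟩
    obtain ⟨j, hj⟩ := Function.ne_iff.mp hy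
    have hj_one : 1 ≤ y j := by
      obtain ⟨z, hz⟩ := hint j
      have hpos : 0 < y j := (hnonneg j).lt_of_ne' hj
      rw [hz] at hpos ⊢
      exact_mod_cast hpos
    have hrest : ∀ i ≠ j, y i = 0 := by
      intro i hij
      have hpair : y i + y j ≤ ∑ l, y l :=
        Finset.add_le_sum (fun l _ => hnonneg l) (Finset.mem_univ i) (Finset.mem_univ j) hij
      linarith [hnonneg i]
    have hsum_eq : ∑ l, y l = y j := Fintype.sum_eq_single j hrest
    refine ⟨some j, funext fun i => ?_⟩
    obtain rfl | hij := eq_or_ne i j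
    · simp only [unitVec, Pi.single_eq_same]
      linarith
    · simp [unitVec, hij, hrest i hij]

/-- The linear part `x ↦ ((A^k_{j·} + b^k)ᵀ x)_k, E x, x` of the inequalities cutting out the
`x`-section of `S(e^j)`; the row `A^k_{j·}` is absent for `e^0`, encoded by `none`. -/
def restrictMap {n m κ τ : ℕ} (A : Fin κ → Fin m → Fin n → ℝ) (b : Fin κ → Fin n → ℝ)
    (E : Fin τ → Fin n → ℝ) (o : Option (Fin m)) :
    (Fin n → ℝ) →ₗ[ℝ] (Fin κ → ℝ) × (Fin τ → ℝ) × (Fin n → ℝ) :=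
  (Matrix.mulVecLin (Matrix.of (o.elim b fun j k => A k j + b k))).prod
    ((Matrix.mulVecLin (Matrix.of E)).prod LinearMap.id)

/-- The right-hand side `(d_k - c^k_j)_k, f, 0` matching `restrictMap`, so that the `x`-section
of `S(e^j)` is `{x | restrictBound n c d f o ≤ restrictMap A b E o x}`. -/
def restrictBound (n : ℕ) {m κ τ : ℕ} (c : Fin κ → Fin m → ℝ) (d : Fin κ → ℝ) (f : Fin τ → ℝ)
    (o : Option (Fin m)) : (Fin κ → ℝ) × (Fin τ → ℝ) × (Fin n → ℝ) :=
  (o.elim d fun j k => d k - c k j, f, 0)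

variable {n m κ τ : ℕ} (A : Fin κ → Fin m → Fin n → ℝ) (b : Fin κ → Fin n → ℝ)
  (c : Fin κ → Fin m → ℝ) (d : Fin κ → ℝ) (E : Fin τ → Fin n → ℝ) (f : Fin τ → ℝ)

theorem smul_restrictBound_none_le_iff {t : ℝ} {v : Fin n → ℝ} :
    t • restrictBound n c d f none ≤ restrictMap A b E none v ↔
      (∀ k, d k * t ≤ ∑ i, b k i * v i) ∧ (∀ s, f s * t ≤ ∑ i, E s i * v i) ∧
        ∀ i, 0 ≤ v i := by
  simp [restrictMap, restrictBound, Pi.le_def, Matrix.mulVec, dotProduct, mul_comm t]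

theorem smul_restrictBound_some_le_iff {j : Fin m} {t : ℝ} {v : Fin n → ℝ} :
    t • restrictBound n c d f (some j) ≤ restrictMap A b E (some j) v ↔
      (∀ k, (d k - c k j) * t ≤ ∑ i, (A k j i + b k i) * v i) ∧
        (∀ s, f s * t ≤ ∑ i, E s i * v i) ∧ ∀ i, 0 ≤ v i := by
  simp [restrictMap, restrictBound, Pi.le_def, Matrix.mulVec, dotProduct, mul_comm t]

theorem restrictS_eq_prod (o : Option (Fin m)) :
    restrictS n m κ τ A b c d E f o =
      (restrictMap A b E o ⁻¹' Set.Ici (restrictBound n c d f o)) ×ˢ {unitVec m o} := by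
  ext ⟨x, y⟩
  rw [Set.mem_prod, Set.mem_preimage, Set.mem_Ici, ← one_smul ℝ (restrictBound n c d f o)]
  cases o with
  | none =>
    rw [smul_restrictBound_none_le_iff]
    simp [restrictS, unitVec, and_comm]
  | some j =>
    rw [smul_restrictBound_some_le_iff]
    simp [restrictS, unitVec, Pi.single_apply, add_mul, Finset.sum_add_distrib, and_comm]

theorem bilinearS_eq_iUnion_restrictS :
    bilinearS n m κ τ A b c d E f = ⋃ o, restrictS n m κ τ A b c d E f o := by
  ext ⟨x, y⟩
  rw [Set.mem_iUnion]
  constructor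
  · rintro ⟨hx, hE, hint, hnonneg, hsum, hbilin⟩
    obtain ⟨o, rfl⟩ := mem_range_unitVec_iff.mpr ⟨hint, hnonneg, hsum⟩
    exact ⟨o, rfl, fun k => sub_le_iff_le_add.mpr (hbilin k), hE, hx⟩
  · rintro ⟨o, rfl, hbilin, hE, hx⟩
    obtain ⟨hint, hnonneg, hsum⟩ := mem_range_unitVec_iff.mp (Set.mem_range_self o)
    exact ⟨hx, hE, hint, hnonneg, hsum, fun k => sub_le_iff_le_add.mp (hbilin k)⟩

theorem image_fst_convexHull_bilinearS :
    Prod.fst '' convexHull ℝ (bilinearS n m κ τ A b c d E f) =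
      convexHull ℝ (⋃ o, restrictMap A b E o ⁻¹' Set.Ici (restrictBound n c d f o)) := by
  have hproj := (LinearMap.fst ℝ (Fin n → ℝ) (Fin m → ℝ)).image_convexHull
    (bilinearS n m κ τ A b c d E f)
  rw [LinearMap.coe_fst] at hproj
  rw [hproj]
  simp only [bilinearS_eq_iUnion_restrictS, restrictS_eq_prod, Set.image_iUnion,
    Set.fst_image_prod _ (Set.singleton_nonempty _)]

theorem mem_setQ_iff {x : Fin n → ℝ} {y : Fin m → ℝ} {u : Fin m → Fin n → ℝ} :
    (x, y, u) ∈ setQ n m κ τ A b c d E f ↔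
      ((fun o => o.elim (x - ∑ j, u j) u, fun o => o.elim (1 - ∑ j, y j) y) :
        (Option (Fin m) → Fin n → ℝ) × (Option (Fin m) → ℝ)) ∈
          disjunctiveLift (restrictMap A b E) (restrictBound n c d f) := by
  simp only [setQ, disjunctiveLift, stdSimplex, Set.mem_ofPred_eq, Option.forall, Option.elim_none,
    Option.elim_some, Fintype.sum_option, Pi.sub_apply, Finset.sum_apply,
    smul_restrictBound_none_le_iff, smul_restrictBound_some_le_iff]
  constructor
  · rintro ⟨hb, hA, hE, hEu, hx, hu, hy_sum, hy⟩
    exact ⟨⟨⟨hy_sum, hy⟩, sub_add_cancel _ _⟩, ⟨hb, hE, hx⟩,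
      fun j => ⟨fun k => hA k j, fun s => hEu s j, hu j⟩⟩
  · rintro ⟨⟨⟨hy_sum, hy⟩, -⟩, ⟨hb, hE, hx⟩, hj⟩
    exact ⟨hb, fun k j => (hj j).1 k, hE, fun s j => (hj j).2.1 s, hx, fun j => (hj j).2.2,
      hy_sum, hy⟩

theorem image_fst_setQ :
    Prod.fst '' setQ n m κ τ A b c d E f =
      (fun w => ∑ o, w.1 o) '' disjunctiveLift (restrictMap A b E) (restrictBound n c d f) := by
  ext x
  constructor
  · rintro ⟨⟨x, y, u⟩, hQ, rfl⟩
    exact ⟨_, (mem_setQ_iff A b c d E f).mp hQ, by simp [Fintype.sum_option]⟩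
  · rintro ⟨⟨v, t⟩, hvt, rfl⟩
    refine ⟨(∑ o, v o, fun j => t (some j), fun j => v (some j)), ?_, rfl⟩
    have ht : 1 - ∑ j, t (some j) = t none := by
      rw [← hvt.1.2, Fintype.sum_option, add_sub_cancel_right]
    have hv : ∑ o, v o - ∑ j, v (some j) = v none := by
      rw [Fintype.sum_option, add_sub_cancel_right]
    rw [mem_setQ_iff, ht, hv]
    convert hvt using 2 <;> ext (_ | _) <;> rfl

end BilinearSet

/-- **Proposition (disjunctive-programming reformulation).** Under Assumption 1
(each restriction `S(e^j)` is nonempty and all share the same recession cone),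
the projection of `conv(S)` onto the `x`-variables equals the projection of `Q`
onto the `x`-variables. -/
theorem proj_convexHull_eq_proj_setQ
    (n m κ τ : ℕ) (hn : 0 < n) (hm : 0 < m) (hκ : 0 < κ) (hτ : 0 < τ)
    (A : Fin κ → Fin m → Fin n → ℝ) (b : Fin κ → Fin n → ℝ)
    (c : Fin κ → Fin m → ℝ) (d : Fin κ → ℝ) (E : Fin τ → Fin n → ℝ) (f : Fin τ → ℝ)
    (hne : ∀ o : Option (Fin m), (restrictS n m κ τ A b c d E f o).Nonempty)
    (hrec : ∀ o o' : Option (Fin m),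
      recCone (restrictS n m κ τ A b c d E f o)
        = recCone (restrictS n m κ τ A b c d E f o')) :
    Prod.fst '' (convexHull ℝ (bilinearS n m κ τ A b c d E f))
      = Prod.fst '' (setQ n m κ τ A b c d E f) := by
  have hprod := restrictS_eq_prod A b c d E f
  rw [image_fst_convexHull_bilinearS, image_fst_setQ]
  refine convexHull_iUnion_eq_image_disjunctiveLift_of_recCone_eq (fun o => ?_) fun o o' => ?_
  · have hne_prod := hne o
    rw [hprod] at hne_prod
    exact hne_prod.fst
  · ext v
    rw [← prodMk_zero_mem_recCone_prod_singleton_iff (y := unitVec m o), ← hprod, hrec o o',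
      hprod, prodMk_zero_mem_recCone_prod_singleton_iff]

end
end

section
/- Let nonnegative multipliers α^j ∈ ℝ^κ_{≥0}, β^j ∈ ℝ^τ_{≥0}, γ^j ∈ ℝ^n_{≥0}, θ_j ∈ ℝ_{≥0} for j ∈ {0,1,…,m} satisfy: for all i ∈ {1,…,n} and j ∈ {1,…,m}, Σ_{k=1}^{κ} ((A^k_{j,i} + b^k_i) α^j_k − b^k_i α^0_k) + Σ_{t=1}^{τ} (E_{t,i} β^j_t − E_{t,i} β^0_t) + γ^j_i − γ^0_i = 0; and for all j ∈ {1,…,m}, Σ_{k=1}^{κ} ((c^k_j − d_k) α^j_k + d_k α^0_k) + Σ_{t=1}^{τ} (−f_t β^j_t + f_t β^0_t) + θ_j − θ_0 = 0. Then every (x,y) ∈ S satisfies (Σ_{k=1}^{κ} α^0_k b^k + E^⊤ β^0 + γ^0)^⊤ x ≥ Σ_{k=1}^{κ} α^0_k d_k + (β^0)^⊤ f − θ_0; equivalently, this linear inequality in x is valid for the projection of conv(S) onto the x-variables. -/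
/-!
On the lattice simplex `y` is either `0` or a unit vector, so `S` is a finite union of polyhedra,
indexed by the vertices of the simplex: fixing `y` at a vertex turns the bilinear constraints into
linear ones. Aggregating the linear system of vertex `v` with the multipliers `α v, β v, γ v, θ v`
gives a valid inequality for that polyhedron. The projection-cone equations say exactly that all
these inequalities coincide, so the common one is valid for the union.
-/

open Matrix

variable {I J K T R : Type*}

/-- The vertices of the simplex `{y ≥ 0, ∑ j, y j ≤ 1}`: the origin, indexed by `none` (the paper's
`j = 0`), and the unit vectors, indexed by `some j`. -/
def simplexVertex [DecidableEq J] [Zero R] [One R] (v : Option J) : J → R :=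
  v.elim 0 fun j => Pi.single j 1

section FixedY

variable [Ring R] [Fintype J]

/-- The coefficient matrix of the linear system in `x` obtained from the bilinear constraints
`yᵀ A k x + b k ⬝ᵥ x + c k ⬝ᵥ y ≥ d k` by fixing `y`. -/
def sectionMatrix (A : K → Matrix J I R) (b : Matrix K I R) (y : J → R) : Matrix K I R :=
  of fun k => y ᵥ* A k + b k

/-- The right-hand side of the linear system in `x` obtained from the bilinear constraints
`yᵀ A k x + b k ⬝ᵥ x + c k ⬝ᵥ y ≥ d k` by fixing `y`. -/
def sectionRHS (c : Matrix K J R) (d : K → R) (y : J → R) : K → R :=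
  d - c *ᵥ y

theorem sectionRHS_le_sectionMatrix_mulVec_iff [Fintype I] [PartialOrder R] [IsOrderedAddMonoid R]
    {A : K → Matrix J I R} {b : Matrix K I R} {c : Matrix K J R} {d : K → R}
    {x : I → R} {y : J → R} :
    sectionRHS c d y ≤ sectionMatrix A b y *ᵥ x ↔
      ∀ k, d k ≤ (∑ j, ∑ i, y j * A k j i * x i) + (∑ i, b k i * x i) + ∑ j, c k j * y j := by
  refine forall_congr' fun k => ?_
  have hrow : (sectionMatrix A b y *ᵥ x) k =
      (∑ j, ∑ i, y j * A k j i * x i) + ∑ i, b k i * x i := by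
    rw [Finset.sum_comm]
    simp only [sectionMatrix, mulVec, vecMul, dotProduct, of_apply, Pi.add_apply, add_mul,
      Finset.sum_add_distrib, Finset.sum_mul]
  rw [hrow]
  exact sub_le_iff_le_add

end FixedY

theorem dotProduct_le_vecMul_dotProduct [Fintype I] [Fintype K] [Semiring R]
    [PartialOrder R] [IsOrderedRing R] {B : Matrix K I R} {D : K → R} {α : K → R} {x : I → R}
    (hα : 0 ≤ α) (hB : D ≤ B *ᵥ x) :
    α ⬝ᵥ D ≤ (α ᵥ* B) ⬝ᵥ x :=
  (dotProduct_le_dotProduct_of_nonneg_left hB hα).trans_eq (dotProduct_mulVec α B x)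

section Aggregation

variable [Ring R] [Fintype K] [Fintype T]

/-- The coefficient vector of the nonnegative combination of `B x ≥ D`, `E x ≥ f` and `x ≥ 0` with
multipliers `α`, `β` and `γ`. -/
def aggregatedCoeff (B : Matrix K I R) (E : Matrix T I R) (α : K → R) (β : T → R) (γ : I → R) :
    I → R :=
  α ᵥ* B + β ᵥ* E + γ

/-- The right-hand side of the nonnegative combination of `B x ≥ D`, `E x ≥ f` and the trivial
inequality `0 ≥ -1` with multipliers `α`, `β` and `θ`. -/
def aggregatedRHS (D : K → R) (f : T → R) (α : K → R) (β : T → R) (θ : R) : R :=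
  α ⬝ᵥ D + β ⬝ᵥ f - θ

theorem aggregatedRHS_le_aggregatedCoeff_dotProduct [Fintype I] [PartialOrder R] [IsOrderedRing R]
    {B : Matrix K I R} {D : K → R} {E : Matrix T I R} {f : T → R}
    {α : K → R} {β : T → R} {γ : I → R} {θ : R} {x : I → R}
    (hα : 0 ≤ α) (hβ : 0 ≤ β) (hγ : 0 ≤ γ) (hθ : 0 ≤ θ)
    (hx : 0 ≤ x) (hE : f ≤ E *ᵥ x) (hB : D ≤ B *ᵥ x) :
    aggregatedRHS D f α β θ ≤ aggregatedCoeff B E α β γ ⬝ᵥ x :=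
  calc α ⬝ᵥ D + β ⬝ᵥ f - θ
    _ ≤ α ⬝ᵥ D + β ⬝ᵥ f := sub_le_self _ hθ
    _ ≤ (α ᵥ* B) ⬝ᵥ x + (β ᵥ* E) ⬝ᵥ x :=
      add_le_add (dotProduct_le_vecMul_dotProduct hα hB) (dotProduct_le_vecMul_dotProduct hβ hE)
    _ ≤ (α ᵥ* B) ⬝ᵥ x + (β ᵥ* E) ⬝ᵥ x + γ ⬝ᵥ x :=
      le_add_of_nonneg_right (dotProduct_nonneg_of_nonneg hγ hx)
    _ = (α ᵥ* B + β ᵥ* E + γ) ⬝ᵥ x := by simp only [add_dotProduct]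

end Aggregation

section Vertices

variable [Fintype J] [DecidableEq J]

theorem eq_zero_or_eq_single_of_sum_le_one {w : J → ℕ} (hw : ∑ j, w j ≤ 1) :
    w = 0 ∨ ∃ j, w = Pi.single j 1 := by
  have hunique : ∀ l j, w l ≠ 0 → w j ≠ 0 → l = j ∧ w l = 1 := by
    simpa using Finset.sum_le_one_iff.1 hw
  refine or_iff_not_imp_left.2 fun hzero => ?_
  obtain ⟨j, hj⟩ := Function.ne_iff.1 hzero
  refine ⟨j, funext fun l => ?_⟩
  obtain rfl | hl := eq_or_ne l j
  · simpa using (hunique l l hj hj).2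
  · simpa [hl] using mt (fun hwl => (hunique l j hwl hj).1) hl

theorem exists_eq_simplexVertex [Ring R] [PartialOrder R] [IsOrderedRing R] {y : J → R}
    (hint : ∀ j, ∃ z : ℤ, y j = z) (hnonneg : ∀ j, 0 ≤ y j) (hsum : ∑ j, y j ≤ 1) :
    ∃ v, y = simplexVertex v := by
  obtain _ | _ := subsingleton_or_nontrivial R
  · exact ⟨none, Subsingleton.elim _ _⟩
  have hnat : ∀ j, ∃ w : ℕ, y j = w := fun j => by
    obtain ⟨z, hz⟩ := hint j
    lift z to ℕ using Int.cast_nonneg_iff.1 (hz ▸ hnonneg j)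
    exact ⟨z, by simpa using hz⟩
  choose w hw using hnat
  obtain rfl : y = fun j => (w j : R) := funext hw
  have : CharZero R := IsOrderedRing.toCharZero
  have hwsum : ∑ j, w j ≤ 1 := by
    rw [← Nat.cast_sum] at hsum
    exact_mod_cast hsum
  obtain rfl | ⟨j, rfl⟩ := eq_zero_or_eq_single_of_sum_le_one hwsum
  · exact ⟨none, by ext l; simp [simplexVertex]⟩
  · exact ⟨some j, by ext l; simp [simplexVertex, Pi.single_apply]⟩

variable [CommRing R] [Fintype K] [Fintype T]

theorem aggregatedCoeff_simplexVertex_eq {A : K → Matrix J I R} {b : Matrix K I R}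
    {E : Matrix T I R} {α : Option J → K → R} {β : Option J → T → R} {γ : Option J → I → R}
    (hbalance : ∀ (i : I) (j : J),
      (∑ k, ((A k j i + b k i) * α (some j) k - b k i * α none k))
        + (∑ s, (E s i * β (some j) s - E s i * β none s))
        + γ (some j) i - γ none i = 0) (v : Option J) :
    aggregatedCoeff (sectionMatrix A b (simplexVertex v)) E (α v) (β v) (γ v) =
      aggregatedCoeff b E (α none) (β none) (γ none) := by
  ext i
  cases v with
  | none => simp [aggregatedCoeff, sectionMatrix, simplexVertex, vecMul, dotProduct]
  | some j =>
    have h := hbalance i j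
    simp only [Finset.sum_sub_distrib] at h
    simp only [aggregatedCoeff, sectionMatrix, simplexVertex, Option.elim_some,
      single_one_vecMul, vecMul, dotProduct, of_apply, Pi.add_apply, row_apply, mul_comm (α _ _),
      mul_comm (β _ _)]
    linear_combination h

theorem aggregatedRHS_simplexVertex_eq {c : Matrix K J R} {d : K → R} {f : T → R}
    {α : Option J → K → R} {β : Option J → T → R} {θ : Option J → R}
    (hbalance : ∀ j : J,
      (∑ k, ((c k j - d k) * α (some j) k + d k * α none k))
        + (∑ s, (- f s * β (some j) s + f s * β none s))
        + θ (some j) - θ none = 0) (v : Option J) :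
    aggregatedRHS (sectionRHS c d (simplexVertex v)) f (α v) (β v) (θ v) =
      aggregatedRHS d f (α none) (β none) (θ none) := by
  cases v with
  | none => simp [aggregatedRHS, sectionRHS, simplexVertex]
  | some j =>
    have h := hbalance j
    simp only [Finset.sum_add_distrib, sub_mul, Finset.sum_sub_distrib, neg_mul,
      Finset.sum_neg_distrib] at h
    simp only [aggregatedRHS, sectionRHS, simplexVertex, Option.elim_some, mulVec_single_one,
      dotProduct, Pi.sub_apply, col_apply, mul_comm (α _ _), mul_comm (β _ _), sub_mul,
      Finset.sum_sub_distrib]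
    linear_combination -h

end Vertices

theorem aggregated_inequality_valid_general [Fintype I] [Fintype J] [Fintype K] [Fintype T]
    [CommRing R] [PartialOrder R] [IsOrderedRing R]
    (A : K → Matrix J I R) (b : Matrix K I R) (c : Matrix K J R) (d : K → R)
    (E : Matrix T I R) (f : T → R)
    (α : Option J → K → R) (β : Option J → T → R) (γ : Option J → I → R) (θ : Option J → R)
    (hα : ∀ j k, 0 ≤ α j k) (hβ : ∀ j s, 0 ≤ β j s)
    (hγ : ∀ j i, 0 ≤ γ j i) (hθ : ∀ j, 0 ≤ θ j)
    (heq1 : ∀ (i : I) (j : J),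
      (∑ k, ((A k j i + b k i) * α (some j) k - b k i * α none k))
        + (∑ s, (E s i * β (some j) s - E s i * β none s))
        + γ (some j) i - γ none i = 0)
    (heq2 : ∀ j : J,
      (∑ k, ((c k j - d k) * α (some j) k + d k * α none k))
        + (∑ s, (- f s * β (some j) s + f s * β none s))
        + θ (some j) - θ none = 0)
    (x : I → R) (y : J → R)
    (hx0 : ∀ i, 0 ≤ x i)
    (hEx : ∀ s, f s ≤ ∑ i, E s i * x i)
    (hyint : ∀ j, ∃ z : ℤ, y j = (z : R))
    (hy0 : ∀ j, 0 ≤ y j) (hy1 : ∑ j, y j ≤ 1)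
    (hbil : ∀ k, d k ≤ (∑ j, ∑ i, y j * A k j i * x i) + (∑ i, b k i * x i)
      + (∑ j, c k j * y j)) :
    (∑ k, α none k * d k) + (∑ s, β none s * f s) - θ none ≤
      ∑ i, ((∑ k, α none k * b k i) + (∑ s, E s i * β none s) + γ none i) * x i := by
  classical
  obtain ⟨v, rfl⟩ := exists_eq_simplexVertex hyint hy0 hy1
  calc aggregatedRHS d f (α none) (β none) (θ none)
    _ = aggregatedRHS (sectionRHS c d (simplexVertex v)) f (α v) (β v) (θ v) :=
      (aggregatedRHS_simplexVertex_eq heq2 v).symm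
    _ ≤ aggregatedCoeff (sectionMatrix A b (simplexVertex v)) E (α v) (β v) (γ v) ⬝ᵥ x :=
      aggregatedRHS_le_aggregatedCoeff_dotProduct (hα v) (hβ v) (hγ v) (hθ v) hx0 hEx
        (sectionRHS_le_sectionMatrix_mulVec_iff.2 hbil)
    _ = aggregatedCoeff b E (α none) (β none) (γ none) ⬝ᵥ x := by
      rw [aggregatedCoeff_simplexVertex_eq heq1 v]
    _ = ∑ i, ((∑ k, α none k * b k i) + (∑ s, E s i * β none s) + γ none i) * x i := by
      simp only [aggregatedCoeff, vecMul, dotProduct, Pi.add_apply, mul_comm (β _ _)]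

/-- **Validity of aggregated (projection-cone) inequalities for the bilinear set `S`.**
If nonnegative multipliers `α^j, β^j, γ^j, θ_j` (`j ∈ {0,1,…,m}`, encoded via
`Option (Fin m)` with `none` playing the role of `j = 0`) satisfy the projection-cone
equations, then every `(x,y) ∈ S` satisfies
`(∑_k α⁰_k b^k + Eᵀ β⁰ + γ⁰)ᵀ x ≥ ∑_k α⁰_k d_k + (β⁰)ᵀ f − θ₀`. -/
theorem aggregated_inequality_valid
    (n m κ τ : ℕ) (hn : 0 < n) (hm : 0 < m) (hκ : 0 < κ) (hτ : 0 < τ)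
    (A : Fin κ → Fin m → Fin n → ℝ) (b : Fin κ → Fin n → ℝ)
    (c : Fin κ → Fin m → ℝ) (d : Fin κ → ℝ) (E : Fin τ → Fin n → ℝ) (f : Fin τ → ℝ)
    (α : Option (Fin m) → Fin κ → ℝ) (β : Option (Fin m) → Fin τ → ℝ)
    (γ : Option (Fin m) → Fin n → ℝ) (θ : Option (Fin m) → ℝ)
    (hα : ∀ j k, 0 ≤ α j k) (hβ : ∀ j s, 0 ≤ β j s)
    (hγ : ∀ j i, 0 ≤ γ j i) (hθ : ∀ j, 0 ≤ θ j)
    (heq1 : ∀ (i : Fin n) (j : Fin m),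
      (∑ k, ((A k j i + b k i) * α (some j) k - b k i * α none k))
        + (∑ s, (E s i * β (some j) s - E s i * β none s))
        + γ (some j) i - γ none i = 0)
    (heq2 : ∀ j : Fin m,
      (∑ k, ((c k j - d k) * α (some j) k + d k * α none k))
        + (∑ s, (- f s * β (some j) s + f s * β none s))
        + θ (some j) - θ none = 0)
    (x : Fin n → ℝ) (y : Fin m → ℝ)
    (hx0 : ∀ i, 0 ≤ x i)
    (hEx : ∀ s, f s ≤ ∑ i, E s i * x i)
    (hyint : ∀ j, ∃ zz : ℤ, y j = (zz : ℝ))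
    (hy0 : ∀ j, 0 ≤ y j) (hy1 : ∑ j, y j ≤ 1)
    (hbil : ∀ k, d k ≤ (∑ j, ∑ i, y j * A k j i * x i) + (∑ i, b k i * x i)
      + (∑ j, c k j * y j)) :
    (∑ k, α none k * d k) + (∑ s, β none s * f s) - θ none ≤
      ∑ i, ((∑ k, α none k * b k i) + (∑ s, E s i * β none s) + γ none i) * x i :=
  aggregated_inequality_valid_general A b c d E f α β γ θ hα hβ hγ hθ heq1 heq2
    x y hx0 hEx hyint hy0 hy1 hbil
end

section
/- Fix k̂ ∈ K and ĵ ∈ {0,1,…,m}, and let C_{(k̂,ĵ)} be the polyhedron of all nonnegative multiplier vectors π = (α^0,…,α^m; β^0,…,β^m; γ^0,…,γ^m; θ_0,…,θ_m) with α^j ∈ ℝ^κ_{≥0}, β^j ∈ ℝ^τ_{≥0}, γ^j ∈ ℝ^n_{≥0}, θ_j ∈ ℝ_{≥0}, satisfying α^{ĵ}_{k̂} = 1 together with: for all i ∈ {1,…,n} and j ∈ {1,…,m}, Σ_{k=1}^{κ} ((A^k_{j,i} + b^k_i) α^j_k − b^k_i α^0_k) + Σ_{t=1}^{τ} (E_{t,i}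 β^j_t − E_{t,i} β^0_t) + γ^j_i − γ^0_i = 0; and for all j ∈ {1,…,m}, Σ_{k=1}^{κ} ((c^k_j − d_k) α^j_k + d_k α^0_k) + Σ_{t=1}^{τ} (−f_t β^j_t + f_t β^0_t) + θ_j − θ_0 = 0. If π̄ is an extreme point of C_{(k̂,ĵ)}, then for every i ∈ {1,…,n} there exists some j ∈ {0,1,…,m} with γ̄^j_i = 0 (that is, min_{j∈{0,…,m}} γ̄^j_i = 0), and there exists some j ∈ {0,1,…,m} with θ̄_j = 0 (that is, min_{j∈{0,…,m}} θ̄_j = 0). -/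
/-- The projection cone `C_{(k̂,ĵ)}` of nonnegative multipliers
`(α^0,…,α^m; β^0,…,β^m; γ^0,…,γ^m; θ_0,…,θ_m)` (index `j = 0` encoded as `none`)
with `α^ĵ_k̂ = 1` and satisfying the projection-cone equations. -/
def projCone (n m κ τ : ℕ) (A : Fin κ → Fin m → Fin n → ℝ) (b : Fin κ → Fin n → ℝ)
    (c : Fin κ → Fin m → ℝ) (d : Fin κ → ℝ) (E : Fin τ → Fin n → ℝ) (f : Fin τ → ℝ)
    (khat : Fin κ) (jhat : Option (Fin m)) :
    Set ((Option (Fin m) → Fin κ → ℝ) × (Option (Fin m) → Fin τ → ℝ) ×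
      (Option (Fin m) → Fin n → ℝ) × (Option (Fin m) → ℝ)) :=
  {pt | (∀ j k, 0 ≤ pt.1 j k) ∧ (∀ j s, 0 ≤ pt.2.1 j s) ∧
    (∀ j i, 0 ≤ pt.2.2.1 j i) ∧ (∀ j, 0 ≤ pt.2.2.2 j) ∧
    pt.1 jhat khat = 1 ∧
    (∀ (i : Fin n) (j : Fin m),
      (∑ k, ((A k j i + b k i) * pt.1 (some j) k - b k i * pt.1 none k))
        + (∑ s, (E s i * pt.2.1 (some j) s - E s i * pt.2.1 none s))
        + pt.2.2.1 (some j) i - pt.2.2.1 none i = 0) ∧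
    (∀ j : Fin m,
      (∑ k, ((c k j - d k) * pt.1 (some j) k + d k * pt.1 none k))
        + (∑ s, (- f s * pt.2.1 (some j) s + f s * pt.2.1 none s))
        + pt.2.2.2 (some j) - pt.2.2.2 none = 0)}

/-!
Adding a constant `g` to every `γ^j` and a constant `t` to every `θ_j` leaves all equations of the
projection cone unchanged, because they involve `γ` and `θ` only through the differences
`γ^j - γ^0` and `θ_j - θ_0`. If some row `(γ^j_i)_j`, or `(θ_j)_j`, were everywhere positive, it
could be shifted by plus and by minus its minimum without leaving the cone, so the point would be
the midpoint of two distinct points of the cone.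
-/

section ExtremePoints

variable {𝕜 V ι : Type*} [Ring 𝕜] [LinearOrder 𝕜] [IsStrictOrderedRing 𝕜] [Invertible (2 : 𝕜)]
  [AddCommGroup V] [Module 𝕜 V] {s : Set V} {x v : V}

theorem eq_zero_of_mem_extremePoints_of_add_mem_of_sub_mem (hx : x ∈ s.extremePoints 𝕜)
    (hadd : x + v ∈ s) (hsub : x - v ∈ s) : v = 0 :=
  add_eq_left.mp (hx.2 hadd hsub (mem_openSegment_add_sub x v))

theorem exists_eq_zero_of_mem_extremePoints_of_add_smul_mem [Module.IsTorsionFree 𝕜 V]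
    [Finite ι] [Nonempty ι] {u : ι → 𝕜} (hx : x ∈ s.extremePoints 𝕜) (hv : v ≠ 0)
    (hu : ∀ j, 0 ≤ u j) (hmem : ∀ r : 𝕜, (∀ j, 0 ≤ u j + r) → x + r • v ∈ s) :
    ∃ j, u j = 0 := by
  obtain ⟨j, hmin⟩ := Finite.exists_min u
  have hadd : x + u j • v ∈ s := hmem (u j) fun k ↦ add_nonneg (hu k) (hu j)
  have hsub : x - u j • v ∈ s := by
    rw [sub_eq_add_neg, ← neg_smul]
    exact hmem (-u j) fun k ↦ le_add_neg_iff_le.mpr (hmin k)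
  have hsmul : u j • v = 0 := eq_zero_of_mem_extremePoints_of_add_mem_of_sub_mem hx hadd hsub
  exact ⟨j, (smul_eq_zero_iff_left hv).mp hsmul⟩

end ExtremePoints

section ProjCone

variable {n m κ τ : ℕ} {A : Fin κ → Fin m → Fin n → ℝ} {b : Fin κ → Fin n → ℝ}
  {c : Fin κ → Fin m → ℝ} {d : Fin κ → ℝ} {E : Fin τ → Fin n → ℝ} {f : Fin τ → ℝ}
  {khat : Fin κ} {jhat : Option (Fin m)}
  {pt : (Option (Fin m) → Fin κ → ℝ) × (Option (Fin m) → Fin τ → ℝ) ×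
    (Option (Fin m) → Fin n → ℝ) × (Option (Fin m) → ℝ)}

theorem add_smul_const_mem_projCone (hpt : pt ∈ projCone n m κ τ A b c d E f khat jhat)
    {g : Fin n → ℝ} {t r : ℝ} (hγ : ∀ j i, 0 ≤ pt.2.2.1 j i + r * g i)
    (hθ : ∀ j, 0 ≤ pt.2.2.2 j + r * t) :
    pt + r • (0, 0, fun _ ↦ g, fun _ ↦ t) ∈ projCone n m κ τ A b c d E f khat jhat := by
  obtain ⟨α, β, γ, θ⟩ := pt
  obtain ⟨hα₀, hβ₀, -, -, hnorm, hγ_eq, hθ_eq⟩ := hpt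
  simp only [Prod.smul_mk, smul_zero, Prod.mk_add_mk, add_zero]
  refine ⟨hα₀, hβ₀, hγ, hθ, hnorm, fun i j ↦ ?_, fun j ↦ ?_⟩
  · simpa only [Pi.add_apply, Pi.smul_apply, ← add_assoc, add_sub_add_right_eq_sub] using hγ_eq i j
  · simpa only [Pi.add_apply, Pi.smul_apply, ← add_assoc, add_sub_add_right_eq_sub] using hθ_eq j

theorem exists_gamma_eq_zero_of_mem_extremePoints_projCone
    (hpt : pt ∈ (projCone n m κ τ A b c d E f khat jhat).extremePoints ℝ) (i : Fin n) :
    ∃ j, pt.2.2.1 j i = 0 := by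
  obtain ⟨-, -, hγ₀, hθ₀, -⟩ := hpt.1
  refine exists_eq_zero_of_mem_extremePoints_of_add_smul_mem
    (v := (0, 0, fun _ ↦ Pi.single i 1, fun _ ↦ 0)) hpt (by simp [funext_iff, Pi.single_apply])
    (hγ₀ · i) fun r hr ↦
      add_smul_const_mem_projCone hpt.1 (fun j i' ↦ ?_) (by simpa using hθ₀)
  obtain rfl | hne := eq_or_ne i' i
  · simpa using hr j
  · simpa [hne] using hγ₀ j i'

theorem exists_theta_eq_zero_of_mem_extremePoints_projCone
    (hpt : pt ∈ (projCone n m κ τ A b c d E f khat jhat).extremePoints ℝ) :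
    ∃ j, pt.2.2.2 j = 0 := by
  obtain ⟨-, -, hγ₀, hθ₀, -⟩ := hpt.1
  exact exists_eq_zero_of_mem_extremePoints_of_add_smul_mem
    (v := (0, 0, fun _ ↦ 0, fun _ ↦ 1)) hpt (by simp [funext_iff]) hθ₀ fun r hr ↦
      add_smul_const_mem_projCone hpt.1 (by simpa using hγ₀) (by simpa using hr)

end ProjCone

/-- **At an extreme point of the projection cone `C_{(k̂,ĵ)}`, for every `i` some
multiplier `γ^j_i` vanishes, and some multiplier `θ_j` vanishes.** -/
theorem extremePoint_projCone_gamma_theta_vanish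
    (n m κ τ : ℕ) (hn : 0 < n) (hm : 0 < m) (hκ : 0 < κ) (hτ : 0 < τ)
    (A : Fin κ → Fin m → Fin n → ℝ) (b : Fin κ → Fin n → ℝ)
    (c : Fin κ → Fin m → ℝ) (d : Fin κ → ℝ) (E : Fin τ → Fin n → ℝ) (f : Fin τ → ℝ)
    (khat : Fin κ) (jhat : Option (Fin m)) :
    ∀ pt ∈ (projCone n m κ τ A b c d E f khat jhat).extremePoints ℝ,
      (∀ i : Fin n, ∃ j : Option (Fin m), pt.2.2.1 j i = 0) ∧
      (∃ j : Option (Fin m), pt.2.2.2 j = 0) := by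
  intro pt hpt
  exact ⟨exists_gamma_eq_zero_of_mem_extremePoints_projCone hpt,
    exists_theta_eq_zero_of_mem_extremePoints_projCone hpt⟩
end

section
/- Every (z,x) ∈ F_c lies in the projection of S_c onto the (z,x)-variables; that is, for every (z,x) ∈ F_c there exists y ∈ {0,1}^m with Σ_{j=1}^m y_j ≤ 1 such that (z,x,y) ∈ S_c. -/
/-!
A point `(z, x)` of the mixing set is lifted by letting `y` single out an index `k` that is minimal
among those with `x k = 0`: the mixing constraint at `k` gives `h k ≤ z`, and minimality gives
`x i = 1` for `i < k`. If there is no such index, `y = 0` works.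
-/

section MixingBilinear

variable {ι R : Type*} [Preorder ι] [Ring R] [Preorder R] {s : Finset ι} {h x : ι → R} {z : R}

/-- The triples `(z, x, y)` of the bilinear set `S_c` over a finite index set `s`, used to lift
points `(z, x)` of `F_c`. The constraints `0 ≤ z` and `∑ i, π i * x i ≤ ε` are left out: they do not
involve `y` and already hold on `F_c`. -/
structure IsMixingBilinear (s : Finset ι) (h : ι → R) (z : R) (x y : ι → R) : Prop where
  binary : ∀ j ∈ s, y j = 0 ∨ y j = 1
  sum_le_one : ∑ j ∈ s, y j ≤ 1
  nonneg_and_le_one : ∀ i ∈ s, 0 ≤ x i ∧ x i ≤ 1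
  one_sub_mul_one_sub_sum : ∀ i ∈ s, (1 - x i) * (1 - ∑ j ∈ s, y j) = 0
  height_mul_le : ∀ i ∈ s, h i * y i ≤ z * y i
  mul_nonpos : ∀ i ∈ s, x i * y i ≤ 0
  one_sub_mul_nonpos : ∀ i ∈ s, ∀ j ∈ s, i < j → (1 - x i) * y j ≤ 0

namespace IsMixingBilinear

theorem zero [ZeroLEOneClass R] (hx : ∀ i ∈ s, x i = 1) : IsMixingBilinear s h z x 0 where
  binary _ _ := .inl rfl
  sum_le_one := by simp
  nonneg_and_le_one i hi := by simp [hx i hi]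
  one_sub_mul_one_sub_sum i hi := by simp [hx i hi]
  height_mul_le := by simp
  mul_nonpos := by simp
  one_sub_mul_nonpos := by simp

theorem single [DecidableEq ι] {k : ι} (hks : k ∈ s) (hxk : x k = 0) (hkz : h k ≤ z)
    (hx : ∀ i ∈ s, 0 ≤ x i ∧ x i ≤ 1) (hlt : ∀ i ∈ s, i < k → x i = 1) :
    IsMixingBilinear s h z x (Pi.single k 1) := by
  have hsum : ∑ j ∈ s, (Pi.single k 1 : ι → R) j = 1 := by
    rw [Finset.sum_pi_single', if_pos hks]
  refine ⟨fun j _ => ?binary, hsum.le, hx, fun i _ => by rw [hsum, sub_self, mul_zero],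
    fun i _ => ?height, fun i _ => ?mul, fun i hi j _ hij => ?lt⟩
  case binary => by_cases hjk : j = k <;> simp [hjk]
  case height =>
    obtain rfl | hik := eq_or_ne i k
    · simpa using hkz
    · simp [hik]
  case mul =>
    obtain rfl | hik := eq_or_ne i k
    · simp [hxk]
    · simp [hik]
  case lt =>
    obtain rfl | hjk := eq_or_ne j k
    · simp [hlt i hi hij]
    · simp [hjk]

end IsMixingBilinear

theorem mixing_subset_proj_bilinear_general [ZeroLEOneClass R]
    (hbin : ∀ i ∈ s, x i = 0 ∨ x i = 1) (hmix : ∀ i ∈ s, x i = 0 → h i ≤ z) :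
    ∃ y : ι → R, IsMixingBilinear s h z x y := by
  classical
  obtain hempty | hzeros := (s.filter (x · = 0)).eq_empty_or_nonempty
  · rw [Finset.filter_eq_empty_iff] at hempty
    exact ⟨0, .zero fun i hi => (hbin i hi).resolve_left (hempty hi)⟩
  · obtain ⟨k, hk⟩ := Finset.exists_minimal hzeros
    obtain ⟨hks, hxk⟩ := Finset.mem_filter.mp hk.prop
    have hbox : ∀ i ∈ s, 0 ≤ x i ∧ x i ≤ 1 := fun i hi => by
      obtain hxi | hxi := hbin i hi <;> simp [hxi]
    have hlt : ∀ i ∈ s, i < k → x i = 1 := fun i hi hik =>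
      (hbin i hi).resolve_left fun hxi => hk.not_prop_of_lt hik (Finset.mem_filter.mpr ⟨hi, hxi⟩)
    exact ⟨Pi.single k 1, .single hks hxk (hmix k hks hxk) hbox hlt⟩

end MixingBilinear

/-- **The mixing set with a knapsack constraint is contained in the projection of the
bilinear set `S_c`.** For every `(z,x) ∈ F_c` there exists `y ∈ {0,1}^m` with
`∑ y_j ≤ 1` such that `(z,x,y) ∈ S_c`, i.e., such that `0 ≤ x ≤ 1`,
`(1 − x_i)(1 − ∑_j y_j) = 0`, `z y_i ≥ h_i y_i`, `x_i y_i ≤ 0`, and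
`(1 − x_i) y_j ≤ 0` for `i < j`. -/
theorem mixing_subset_proj_bilinear
    (m : ℕ) (hm : 1 ≤ m) (h : ℕ → ℝ)
    (hmono : ∀ i j : ℕ, 1 ≤ i → i ≤ j → j ≤ m → h j ≤ h i)
    (hnonneg : ∀ i : ℕ, 1 ≤ i → i ≤ m → 0 ≤ h i)
    (π : ℕ → ℝ) (hπpos : ∀ i : ℕ, 1 ≤ i → i ≤ m → 0 < π i)
    (hπsum : ∑ i ∈ Finset.Icc 1 m, π i = 1)
    (ε : ℝ) (hε0 : 0 ≤ ε) (hε1 : ε ≤ 1)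
    (hπε : ∀ i : ℕ, 1 ≤ i → i ≤ m → π i ≤ ε)
    (z : ℝ) (x : ℕ → ℝ) (hz : 0 ≤ z)
    (hxbin : ∀ i : ℕ, 1 ≤ i → i ≤ m → x i = 0 ∨ x i = 1)
    (hmix : ∀ i : ℕ, 1 ≤ i → i ≤ m → x i = 0 → h i ≤ z)
    (hknap : ∑ i ∈ Finset.Icc 1 m, π i * x i ≤ ε) :
    ∃ y : ℕ → ℝ,
      (∀ j : ℕ, 1 ≤ j → j ≤ m → (y j = 0 ∨ y j = 1)) ∧
      (∑ j ∈ Finset.Icc 1 m, y j ≤ 1) ∧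
      (∀ i : ℕ, 1 ≤ i → i ≤ m → 0 ≤ x i ∧ x i ≤ 1) ∧
      (∀ i : ℕ, 1 ≤ i → i ≤ m →
        (1 - x i) * (1 - ∑ j ∈ Finset.Icc 1 m, y j) = 0) ∧
      (∀ i : ℕ, 1 ≤ i → i ≤ m → h i * y i ≤ z * y i) ∧
      (∀ i : ℕ, 1 ≤ i → i ≤ m → x i * y i ≤ 0) ∧
      (∀ i j : ℕ, 1 ≤ i → i < j → j ≤ m → (1 - x i) * y j ≤ 0) := by
  obtain ⟨y, hy⟩ := mixing_subset_proj_bilinear_general (s := Finset.Icc 1 m) (h := h) (x := x)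
    (z := z) (by simpa using hxbin) (by simpa using hmix)
  have hmem {i : ℕ} (h1i : 1 ≤ i) (him : i ≤ m) : i ∈ Finset.Icc 1 m :=
    Finset.mem_Icc.mpr ⟨h1i, him⟩
  exact ⟨y, fun j h1j hjm => hy.binary j (hmem h1j hjm), hy.sum_le_one,
    fun i h1i him => hy.nonneg_and_le_one i (hmem h1i him),
    fun i h1i him => hy.one_sub_mul_one_sub_sum i (hmem h1i him),
    fun i h1i him => hy.height_mul_le i (hmem h1i him),
    fun i h1i him => hy.mul_nonpos i (hmem h1i him),
    fun i j h1i hij hjm => hy.one_sub_mul_nonpos i (hmem h1i (hij.le.trans hjm))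
      j (hmem (h1i.trans hij.le) hjm) hij⟩
end

section
/- The convex hull of F_c^= equals the projection onto the (z,x)-variables of the convex hull of S_c^=; that is, conv(F_c^=) = { (z,x) ∈ ℝ^{1+m} : there exists y ∈ ℝ^m with (z,x,y) ∈ conv(S_c^=) }, where the convex hulls are taken in ℝ^{1+m} and ℝ^{1+2m} respectively. -/
/-!
A feasible `y` of the bilinear set is either `0`, which forces `x = 1`, or a unit vector `e_j`,
which forces `x j = 0`, `x i = 1` for `i < j`, and `h j ≤ z`. Hence the mixing set lies in the
projection: take for `j` the first zero of the binary vector `x`. Conversely, for a fixed `j` the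
admissible `x` fill a box with integer bounds cut by `∑ x ≤ p`. By the Krein–Milman theorem this
polytope is the convex hull of its integer points: a point with a fractional coordinate is not
extreme, since it can be moved in two opposite directions inside the polytope, along one coordinate
if the coordinate sum is fractional too, and otherwise along the difference of two fractional
coordinates; how far is measured by the distance `|t - round t|` of `t` to the nearest integer.
The integer points satisfy the mixing constraints with the given `z`, because `h i ≤ h j ≤ z` for
`i ≥ j`.
-/

open Set

theorem eq_zero_of_mem_extremePoints_of_add_mem_of_sub_mem_s9 {𝕜 E : Type*} [Ring 𝕜]
    [LinearOrder 𝕜] [IsStrictOrderedRing 𝕜] [Invertible (2 : 𝕜)] [AddCommGroup E] [Module 𝕜 E]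
    {s : Set E} {x d : E}
    (hx : x ∈ s.extremePoints 𝕜) (hadd : x + d ∈ s) (hsub : x - d ∈ s) : d = 0 :=
  add_eq_left.mp (hx.2 hadd hsub (mem_openSegment_add_sub x d))

theorem setOf_exists_mem_convexHull_eq_convexHull_setOf_exists {𝕜 E F G : Type*}
    [Semiring 𝕜] [PartialOrder 𝕜] [AddCommMonoid E] [Module 𝕜 E] [AddCommMonoid F] [Module 𝕜 F]
    [AddCommMonoid G] [Module 𝕜 G] (s : Set (E × F × G)) :
    {w : E × F | ∃ y, (w.1, w.2, y) ∈ convexHull 𝕜 s} =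
      convexHull 𝕜 {w : E × F | ∃ y, (w.1, w.2, y) ∈ s} := by
  have himage (t : Set (E × F × G)) : {w : E × F | ∃ y, (w.1, w.2, y) ∈ t} =
      LinearMap.prodMap LinearMap.id (LinearMap.fst 𝕜 F G) '' t := by
    ext w
    simp [Prod.ext_iff]
  rw [himage, himage, LinearMap.image_convexHull]

theorem mem_of_sum_mem_of_forall_ne_mem {ι M S : Type*} [Fintype ι] [AddCommGroup M]
    [SetLike S M] [AddSubgroupClass S M] {H : S} {x : ι → M} {i : ι} (hsum : ∑ k, x k ∈ H)
    (hne : ∀ k ≠ i, x k ∈ H) : x i ∈ H := by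
  classical
  have hrest : ∑ k ∈ Finset.univ.erase i, x k ∈ H :=
    sum_mem fun k hk => hne k (Finset.ne_of_mem_erase hk)
  rw [eq_sub_of_add_eq (Finset.add_sum_erase _ x (Finset.mem_univ i))]
  exact sub_mem hsum hrest

section RoundingDistance

variable {K : Type*} [CommRing K] [LinearOrder K] [IsStrictOrderedRing K] [FloorRing K]
  {t d : K} {n : ℤ}

theorem add_le_intCast_of_abs_le_abs_sub_round (ht : t ≤ n) (hd : |d| ≤ |t - round t|) :
    t + d ≤ n := by
  have hdist : |d| ≤ |t - n| := hd.trans (round_le t n)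
  rw [abs_of_nonpos (sub_nonpos.mpr ht)] at hdist
  linarith [le_abs_self d]

theorem intCast_le_add_of_abs_le_abs_sub_round (ht : n ≤ t) (hd : |d| ≤ |t - round t|) :
    n ≤ t + d := by
  have hdist : |d| ≤ |t - n| := hd.trans (round_le t n)
  rw [abs_of_nonneg (sub_nonneg.mpr ht)] at hdist
  linarith [neg_abs_le d]

theorem abs_sub_round_pos_of_notMem_range_intCast (ht : t ∉ range ((↑) : ℤ → K)) :
    0 < |t - round t| :=
  abs_pos.mpr (sub_ne_zero.mpr fun h => ht ⟨round t, h.symm⟩)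

end RoundingDistance

section CappedBox

variable {ι : Type*}

/-- The vectors of `ι → ℝ` all of whose coordinates are integers. -/
def integerPoints (ι : Type*) : Set (ι → ℝ) :=
  {x | ∀ i, x i ∈ range ((↑) : ℤ → ℝ)}

variable [Fintype ι]

/-- The box `[a, b]` with integer bounds, cut by the integer bound `p` on the coordinate sum. -/
def cappedBox (a b : ι → ℤ) (p : ℤ) : Set (ι → ℝ) :=
  Icc (fun i => (a i : ℝ)) (fun i => (b i : ℝ)) ∩ {x | ∑ i, x i ≤ p}

variable {a b : ι → ℤ} {p : ℤ} {x d : ι → ℝ}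

theorem convex_cappedBox (a b : ι → ℤ) (p : ℤ) : Convex ℝ (cappedBox a b p) :=
  (convex_Icc _ _).inter <| convex_halfSpace_le
    ⟨fun _ _ => Finset.sum_add_distrib, fun _ _ => (Finset.mul_sum ..).symm⟩ _

theorem isCompact_cappedBox (a b : ι → ℤ) (p : ℤ) : IsCompact (cappedBox a b p) :=
  isCompact_Icc.inter_right (isClosed_le (by fun_prop) continuous_const)

theorem finite_cappedBox_inter_integerPoints (a b : ι → ℤ) (p : ℤ) :
    (cappedBox a b p ∩ integerPoints ι).Finite := by
  classical
  refine ((finite_Icc a b).image fun n i => (n i : ℝ)).subset ?_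
  rintro x ⟨⟨⟨hax, hxb⟩, -⟩, hint⟩
  choose n hn using hint
  obtain rfl : (fun i => (n i : ℝ)) = x := funext hn
  exact ⟨n, ⟨fun i => Int.cast_le.mp (hax i), fun i => Int.cast_le.mp (hxb i)⟩, rfl⟩

theorem add_mem_cappedBox (hx : x ∈ cappedBox a b p) (hd : ∀ i, |d i| ≤ |x i - round (x i)|)
    (hsum : |∑ i, d i| ≤ |∑ i, x i - round (∑ i, x i)|) : x + d ∈ cappedBox a b p := by
  obtain ⟨⟨hax, hxb⟩, hxp⟩ := hx
  refine ⟨⟨fun i => intCast_le_add_of_abs_le_abs_sub_round (hax i) (hd i),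
    fun i => add_le_intCast_of_abs_le_abs_sub_round (hxb i) (hd i)⟩, ?_⟩
  simpa only [mem_ofPred_eq, Pi.add_apply, Finset.sum_add_distrib] using
    add_le_intCast_of_abs_le_abs_sub_round hxp hsum

theorem eq_zero_of_mem_extremePoints_cappedBox (hx : x ∈ (cappedBox a b p).extremePoints ℝ)
    (hd : ∀ i, |d i| ≤ |x i - round (x i)|)
    (hsum : |∑ i, d i| ≤ |∑ i, x i - round (∑ i, x i)|) : d = 0 := by
  refine eq_zero_of_mem_extremePoints_of_add_mem_of_sub_mem_s9 hx (add_mem_cappedBox hx.1 hd hsum) ?_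
  rw [sub_eq_add_neg]
  exact add_mem_cappedBox hx.1 (by simpa using hd) (by simpa using hsum)

theorem sum_mem_range_intCast_of_mem_extremePoints_cappedBox {i : ι}
    (hx : x ∈ (cappedBox a b p).extremePoints ℝ) (hi : x i ∉ range ((↑) : ℤ → ℝ)) :
    ∑ k, x k ∈ range ((↑) : ℤ → ℝ) := by
  classical
  by_contra hsum
  set ε := min |x i - round (x i)| |∑ k, x k - round (∑ k, x k)|
  have hε : 0 < ε := lt_min (abs_sub_round_pos_of_notMem_range_intCast hi)
    (abs_sub_round_pos_of_notMem_range_intCast hsum)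
  have hεi : ε ≤ |x i - round (x i)| := min_le_left _ _
  have hεsum : ε ≤ |∑ k, x k - round (∑ k, x k)| := min_le_right _ _
  have hd : (Pi.single i ε : ι → ℝ) = 0 := by
    refine eq_zero_of_mem_extremePoints_cappedBox hx (fun k => ?_) ?_
    · obtain rfl | hk := eq_or_ne k i
      · simpa [abs_of_pos hε] using hεi
      · simp [hk]
    · simpa [abs_of_pos hε] using hεsum
  exact hε.ne' (Pi.single_eq_zero_iff.mp hd)

theorem eq_of_mem_extremePoints_cappedBox_of_notMem_range_intCast {i j : ι}
    (hx : x ∈ (cappedBox a b p).extremePoints ℝ) (hi : x i ∉ range ((↑) : ℤ → ℝ))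
    (hj : x j ∉ range ((↑) : ℤ → ℝ)) : i = j := by
  classical
  by_contra hij
  set ε := min |x i - round (x i)| |x j - round (x j)|
  have hε : 0 < ε := lt_min (abs_sub_round_pos_of_notMem_range_intCast hi)
    (abs_sub_round_pos_of_notMem_range_intCast hj)
  have hεi : ε ≤ |x i - round (x i)| := min_le_left _ _
  have hεj : ε ≤ |x j - round (x j)| := min_le_right _ _
  have hd : (Pi.single i ε - Pi.single j ε : ι → ℝ) = 0 := by
    refine eq_zero_of_mem_extremePoints_cappedBox hx (fun k => ?_) (by simp)
    obtain rfl | hki := eq_or_ne k i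
    · simpa [hij, abs_of_pos hε] using hεi
    obtain rfl | hkj := eq_or_ne k j
    · simpa [hki, abs_of_pos hε] using hεj
    · simp [hki, hkj]
  exact hε.ne' (by simpa [hij] using congrFun hd i)

theorem extremePoints_cappedBox_subset_integerPoints (a b : ι → ℤ) (p : ℤ) :
    (cappedBox a b p).extremePoints ℝ ⊆ integerPoints ι := by
  intro x hx i
  by_contra hi
  refine hi (mem_of_sum_mem_of_forall_ne_mem (H := (Int.castAddHom ℝ).range)
    (sum_mem_range_intCast_of_mem_extremePoints_cappedBox hx hi) fun k hki => ?_)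
  by_contra hk
  exact hki (eq_of_mem_extremePoints_cappedBox_of_notMem_range_intCast hx hk hi)

theorem convexHull_cappedBox_inter_integerPoints (a b : ι → ℤ) (p : ℤ) :
    convexHull ℝ (cappedBox a b p ∩ integerPoints ι) = cappedBox a b p := by
  refine (convexHull_min inter_subset_left (convex_cappedBox a b p)).antisymm ?_
  calc cappedBox a b p
      = closure (convexHull ℝ ((cappedBox a b p).extremePoints ℝ)) :=
        (closure_convexHull_extremePoints (isCompact_cappedBox a b p)
          (convex_cappedBox a b p)).symm
    _ ⊆ closure (convexHull ℝ (cappedBox a b p ∩ integerPoints ι)) :=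
        closure_mono <| convexHull_mono <|
          subset_inter extremePoints_subset (extremePoints_cappedBox_subset_integerPoints a b p)
    _ = convexHull ℝ (cappedBox a b p ∩ integerPoints ι) :=
        ((finite_cappedBox_inter_integerPoints a b p).isClosed_convexHull ℝ).closure_eq

end CappedBox

section Mixing

variable {ι : Type*} [Fintype ι]

/-- The mixing set with a cardinality constraint, `F_c^=`, over an arbitrary finite index type;
a binary vector is encoded as a real vector with entries `0` and `1`. -/
def mixingSet (h : ι → ℝ) (p : ℕ) : Set (ℝ × (ι → ℝ)) :=
  {w | 0 ≤ w.1 ∧ (∀ i, w.2 i = 0 ∨ w.2 i = 1) ∧ (∀ i, w.2 i = 0 → h i ≤ w.1) ∧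
    ∑ i, w.2 i ≤ (p : ℝ)}

variable [LinearOrder ι]

/-- The bilinear reformulation `S_c^=` of the mixing set, over an arbitrary finite linearly ordered
index type; its points are the triples `(z, x, y)`. -/
def bilinearSet (h : ι → ℝ) (p : ℕ) : Set (ℝ × (ι → ℝ) × (ι → ℝ)) :=
  {u | 0 ≤ u.1 ∧ (∀ i, 0 ≤ u.2.1 i ∧ u.2.1 i ≤ 1) ∧ ∑ i, u.2.1 i ≤ (p : ℝ) ∧
    (∀ j, u.2.2 j = 0 ∨ u.2.2 j = 1) ∧ ∑ j, u.2.2 j ≤ 1 ∧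
    (∀ i, (1 - u.2.1 i) * (1 - ∑ j, u.2.2 j) = 0) ∧
    (∀ i, h i * u.2.2 i ≤ u.1 * u.2.2 i) ∧
    (∀ i, u.2.1 i * u.2.2 i ≤ 0) ∧
    ∀ i j, i < j → (1 - u.2.1 i) * u.2.2 j ≤ 0}

/-- The polytope of the `x` in the unit cube with `∑ x ≤ p`, `x j = 0` and `x i = 1` for `i < j`.
These conditions are encoded as integer bounds on the coordinates, so that it is a capped box. -/
def firstZeroPolytope (p : ℕ) (j : ι) : Set (ι → ℝ) :=
  cappedBox (fun i => if i < j then 1 else 0) (fun i => if i = j then 0 else 1) p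

variable {h : ι → ℝ} {p : ℕ} {z : ℝ} {x y : ι → ℝ}

theorem mem_firstZeroPolytope {j : ι} : x ∈ firstZeroPolytope p j ↔
    (∀ i, 0 ≤ x i ∧ x i ≤ 1) ∧ ∑ i, x i ≤ p ∧ x j = 0 ∧ ∀ i < j, x i = 1 := by
  constructor
  · rintro ⟨⟨hlower, hupper⟩, hsum⟩
    have hbox (i : ι) : 0 ≤ x i ∧ x i ≤ 1 :=
      ⟨le_trans (by dsimp only; split_ifs <;> simp) (hlower i),
        (hupper i).trans (by dsimp only; split_ifs <;> simp)⟩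
    exact ⟨hbox, by simpa using hsum, le_antisymm (by simpa using hupper j) (hbox j).1,
      fun i hij => le_antisymm (hbox i).2 (by simpa [hij] using hlower i)⟩
  · rintro ⟨hbox, hsum, hj, hlt⟩
    refine ⟨⟨fun i => ?_, fun i => ?_⟩, by simpa using hsum⟩
    · by_cases hij : i < j <;> simp [hij, hlt, hbox]
    · by_cases hij : i = j <;> simp [hij, hj, hbox]

theorem eq_one_or_exists_mem_firstZeroPolytope_of_mem_bilinearSet
    (hu : (z, x, y) ∈ bilinearSet h p) :
    (∀ i, x i = 1) ∨ ∃ j, x ∈ firstZeroPolytope p j ∧ h j ≤ z := by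
  obtain ⟨-, hx, hsum, hy, -, hone, hz, hzero, hlt⟩ := hu
  dsimp only at hx hsum hy hone hz hzero hlt
  by_cases hy0 : ∀ j, y j = 0
  · refine .inl fun i => ?_
    have hi : 1 - x i = 0 := by simpa [hy0] using hone i
    linarith
  · push Not at hy0
    obtain ⟨j, hj⟩ := hy0
    have hyj : y j = 1 := (hy j).resolve_left hj
    have hxj : x j = 0 := le_antisymm (by simpa [hyj] using hzero j) (hx j).1
    have hxlt : ∀ i < j, x i = 1 := fun i hij =>
      le_antisymm (hx i).2 (by simpa [hyj] using hlt i j hij)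
    exact .inr ⟨j, mem_firstZeroPolytope.mpr ⟨hx, hsum, hxj, hxlt⟩, by simpa [hyj] using hz j⟩

theorem eq_one_or_exists_mem_firstZeroPolytope_of_mem_mixingSet (hw : (z, x) ∈ mixingSet h p) :
    (∀ i, x i = 1) ∨ ∃ j, x ∈ firstZeroPolytope p j ∧ h j ≤ z := by
  obtain ⟨-, hbin, hmix, hsum⟩ := hw
  dsimp only at hbin hmix hsum
  refine or_iff_not_imp_left.mpr fun hone => ?_
  push Not at hone
  obtain ⟨k, hk⟩ := hone
  obtain ⟨j, hj⟩ := exists_minimal_of_wellFoundedLT (fun i => x i = 0)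
    ⟨k, (hbin k).resolve_right hk⟩
  have hbox (i : ι) : 0 ≤ x i ∧ x i ≤ 1 := by rcases hbin i with hi | hi <;> simp [hi]
  have hlt : ∀ i < j, x i = 1 := fun i hij => (hbin i).resolve_left (hj.not_prop_of_lt hij)
  exact ⟨j, mem_firstZeroPolytope.mpr ⟨hbox, hsum, hj.prop, hlt⟩, hmix j hj.prop⟩

theorem mk_zero_mem_bilinearSet (hz : 0 ≤ z) (hsum : ∑ i, x i ≤ p) (hone : ∀ i, x i = 1) :
    (z, x, 0) ∈ bilinearSet h p := by
  simpa [bilinearSet, hone, hz] using hsum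

theorem mk_single_mem_bilinearSet {j : ι} (hz : 0 ≤ z) (hx : x ∈ firstZeroPolytope p j)
    (hjz : h j ≤ z) : (z, x, Pi.single j 1) ∈ bilinearSet h p := by
  obtain ⟨hbox, hsum, hj, hlt⟩ := mem_firstZeroPolytope.mp hx
  refine ⟨hz, hbox, hsum, fun i => ?_, by simp, by simp, fun i => ?_, fun i => ?_,
    fun i k hik => ?_⟩
  · obtain rfl | hi := eq_or_ne i j <;> simp [*]
  · obtain rfl | hi := eq_or_ne i j <;> simp [*]
  · obtain rfl | hi := eq_or_ne i j <;> simp [*]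
  · obtain rfl | hk := eq_or_ne k j <;> simp [*]

theorem exists_mem_bilinearSet_of_mem_mixingSet (hw : (z, x) ∈ mixingSet h p) :
    ∃ y, (z, x, y) ∈ bilinearSet h p := by
  have ⟨hz, _, _, hsum⟩ := hw
  rcases eq_one_or_exists_mem_firstZeroPolytope_of_mem_mixingSet hw with hone | ⟨j, hj, hjz⟩
  · exact ⟨0, mk_zero_mem_bilinearSet hz hsum hone⟩
  · exact ⟨Pi.single j 1, mk_single_mem_bilinearSet hz hj hjz⟩

theorem mk_mem_mixingSet_of_mem_firstZeroPolytope {j : ι} (hmono : Antitone h) (hz : 0 ≤ z)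
    (hjz : h j ≤ z) (hx : x ∈ firstZeroPolytope p j) (hint : x ∈ integerPoints ι) :
    (z, x) ∈ mixingSet h p := by
  obtain ⟨hbox, hsum, -, hlt⟩ := mem_firstZeroPolytope.mp hx
  refine ⟨hz, fun i => ?_, fun i (hi : x i = 0) => ?_, hsum⟩
  · obtain ⟨n, hn⟩ := hint i
    obtain ⟨hn0, hn1⟩ : 0 ≤ n ∧ n ≤ 1 := by exact_mod_cast hn ▸ hbox i
    obtain rfl | rfl : n = 0 ∨ n = 1 := by lia
    · exact .inl (by simpa using hn.symm)
    · exact .inr (by simpa using hn.symm)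
  · have hji : j ≤ i := by
      by_contra! hij
      exact zero_ne_one (hi.symm.trans (hlt i hij))
    exact (hmono hji).trans hjz

theorem mk_mem_convexHull_mixingSet_of_mem_firstZeroPolytope {j : ι} (hmono : Antitone h)
    (hz : 0 ≤ z) (hjz : h j ≤ z) (hx : x ∈ firstZeroPolytope p j) :
    (z, x) ∈ convexHull ℝ (mixingSet h p) := by
  have hsub : {z} ×ˢ (firstZeroPolytope p j ∩ integerPoints ι) ⊆ mixingSet h p := by
    rintro ⟨_, v⟩ ⟨rfl, hv, hint⟩
    exact mk_mem_mixingSet_of_mem_firstZeroPolytope hmono hz hjz hv hint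
  refine convexHull_mono hsub ?_
  rw [convexHull_prod, convexHull_singleton, firstZeroPolytope,
    convexHull_cappedBox_inter_integerPoints]
  exact ⟨rfl, hx⟩

theorem mem_convexHull_mixingSet_of_mem_bilinearSet (hmono : Antitone h)
    (hu : (z, x, y) ∈ bilinearSet h p) : (z, x) ∈ convexHull ℝ (mixingSet h p) := by
  have ⟨hz, _, hsum, _⟩ := hu
  rcases eq_one_or_exists_mem_firstZeroPolytope_of_mem_bilinearSet hu with hone | ⟨j, hj, hjz⟩
  · exact subset_convexHull ℝ _
      ⟨hz, fun i => .inr (hone i), fun i hi => by simp [hone] at hi, hsum⟩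
  · exact mk_mem_convexHull_mixingSet_of_mem_firstZeroPolytope hmono hz hjz hj

theorem convexHull_mixing_eq_proj_convexHull_bilinear_general (p : ℕ) (hmono : Antitone h) :
    convexHull ℝ (mixingSet h p) =
      {w | ∃ y, (w.1, w.2, y) ∈ convexHull ℝ (bilinearSet h p)} := by
  rw [setOf_exists_mem_convexHull_eq_convexHull_setOf_exists]
  refine (convexHull_mono fun w hw => exists_mem_bilinearSet_of_mem_mixingSet hw).antisymm
    (convexHull_min ?_ (convex_convexHull ℝ _))
  rintro w ⟨y, hu⟩
  exact mem_convexHull_mixingSet_of_mem_bilinearSet hmono hu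

end Mixing

/-- **Convex-hull equivalence for the cardinality-constrained case.**
`conv(F_c^=)` equals the projection onto the `(z,x)`-variables of `conv(S_c^=)`,
where `F_c^= ⊆ ℝ × ℝ^m` is the mixing set with a cardinality constraint and
`S_c^= ⊆ ℝ × ℝ^m × ℝ^m` is its bilinear reformulation over a simplex. -/
theorem convexHull_mixing_eq_proj_convexHull_bilinear
    (m p : ℕ) (hm : 1 ≤ m) (hp1 : 1 ≤ p) (hpm : p ≤ m)
    (h : Fin m → ℝ) (hmono : Antitone h) (hnonneg : ∀ i, 0 ≤ h i) :
    convexHull ℝ {w : ℝ × (Fin m → ℝ) |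
        0 ≤ w.1 ∧ (∀ i, w.2 i = 0 ∨ w.2 i = 1) ∧
        (∀ i, w.2 i = 0 → h i ≤ w.1) ∧ (∑ i, w.2 i ≤ (p : ℝ))}
      = {w : ℝ × (Fin m → ℝ) | ∃ y : Fin m → ℝ,
          (w.1, w.2, y) ∈ convexHull ℝ {u : ℝ × (Fin m → ℝ) × (Fin m → ℝ) |
            0 ≤ u.1 ∧ (∀ i, 0 ≤ u.2.1 i ∧ u.2.1 i ≤ 1) ∧
            (∑ i, u.2.1 i ≤ (p : ℝ)) ∧
            (∀ j, u.2.2 j = 0 ∨ u.2.2 j = 1) ∧ (∑ j, u.2.2 j ≤ 1) ∧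
            (∀ i, (1 - u.2.1 i) * (1 - ∑ j, u.2.2 j) = 0) ∧
            (∀ i, h i * u.2.2 i ≤ u.1 * u.2.2 i) ∧
            (∀ i, u.2.1 i * u.2.2 i ≤ 0) ∧
            (∀ i j, i < j → (1 - u.2.1 i) * u.2.2 j ≤ 0)}} :=
  convexHull_mixing_eq_proj_convexHull_bilinear_general p hmono
end

section
/- Assume 1 ≤ p < m. Let r ∈ {1,…,p}, l ∈ {1,…,r}, and v ∈ {1,…,p−r}, and set s_ι = p−r−v+ι for ι = 1,…,v+1. Let 1 ≤ t_1 < … < t_l ≤ r with the convention t_{l+1} := r+s_1, and let q_1,…,q_v be distinct indices with r+s_ι+1 ≤ q_ι ≤ m for every ι. Define φ_{q_1} = h_{r+s_1} − h_{r+s_2} and, for ι = 2,…,v, φ_{q_ι} = max{ φ_{q_{ι−1}}, h_{r+s_1} − h_{r+s_ι+1} − Σ_{k=1,…,ι−1 : q_k ≥ r+s_ι+1} φ_{q_k} }. Then every (z,x) ∈ F_c^= satisfies z + Σ_{ι=1}^{l} (h_{t_ι} − h_{t_{ι+1}}) x_{t_ι} + Σ_{ι=1}^{v} φ_{q_ι}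 (1 − x_{q_ι}) ≥ h_{t_1}; that is, by setting δ_{t_ι} = 0 for all ι in the BL&P inequality of the cardinality-constrained case, one recovers as valid inequalities exactly the known family with coefficients h_{t_ι} − h_{t_{ι+1}}. -/
/-!
Let `d + 1` be the first index with `x (d + 1) = 0`, so that `h (d + 1) ≤ z`; the cardinality
constraint `∑ x ≤ p` forces `d ≤ p`. Put `a = p - v`, so that `r + s ι = a + ι`.

If `d ≤ a`, then `h (a + 1) ≤ h (d + 1) ≤ z`. Otherwise `d = a + c` with `1 ≤ c ≤ v`, and at most
`v - c` of the indices beyond `d` are selected. Among these indices are `q c, …, q v` and those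
`q k`, `k < c`, that exceed `d`. As `φ` is monotone, deleting `v - c` members of this collection
leaves a total weight of at least `φ c` plus the weights `φ k` of its members with `k < c`, which by
the recursion is at least `h (a + 1) - h (a + c + 1)`. In both cases
`h (a + 1) ≤ z + ∑ φ (1 - x)`, and the terms in `x (t ι)` lift the left-hand side from `h (a + 1)`
to `h (t 1)` by telescoping.
-/

section

open Finset

variable {K : Type*} [CommRing K] [LinearOrder K] [IsStrictOrderedRing K]

theorem le_max_add_sum_sub_mul_s12 {g y : ℕ → K} {l : ℕ} {z : K}
    (hg : ∀ i ∈ Set.Icc 1 l, g (i + 1) ≤ g i) (hy : ∀ i ∈ Set.Icc 1 l, y i = 0 ∨ y i = 1)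
    (hz : ∀ i ∈ Set.Icc 1 l, y i = 0 → g i ≤ z) :
    g 1 ≤ max (g (l + 1)) z + ∑ i ∈ Icc 1 l, (g i - g (i + 1)) * y i := by
  -- Bounding `max (g 1) z` instead makes each step of the induction self-contained.
  suffices max (g 1) z ≤ max (g (l + 1)) z + ∑ i ∈ Icc 1 l, (g i - g (i + 1)) * y i from
    (le_max_left _ _).trans this
  induction l with
  | zero => simp
  | succ n ih =>
    have hmem : n + 1 ∈ Set.Icc 1 (n + 1) := ⟨by omega, le_rfl⟩
    have hsub : Set.Icc 1 n ⊆ Set.Icc 1 (n + 1) := Set.Icc_subset_Icc_right n.le_succ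
    have ih := ih (fun i hi => hg i (hsub hi)) (fun i hi => hy i (hsub hi))
      (fun i hi => hz i (hsub hi))
    have hstep : max (g (n + 1)) z ≤
        max (g (n + 1 + 1)) z + (g (n + 1) - g (n + 1 + 1)) * y (n + 1) := by
      rcases hy _ hmem with h0 | h1
      · simp [h0, hz _ hmem h0]
      · rw [h1, mul_one, max_le_iff]
        constructor
        · linarith [le_max_left (g (n + 1 + 1)) z]
        · linarith [le_max_right (g (n + 1 + 1)) z, hg _ hmem]
    rw [sum_Icc_succ_top (by omega)]
    linarith

theorem natCast_add_sum_comp_le_sum_Icc {ι : Type*} {x : ℕ → K} {d m : ℕ} {S : Finset ι}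
    {q : ι → ℕ} (hx : ∀ i ∈ Set.Icc 1 m, 0 ≤ x i) (hdm : d ≤ m)
    (hone : ∀ i ∈ Set.Icc 1 d, x i = 1) (hinj : Set.InjOn q S)
    (hq : ∀ k ∈ S, q k ∈ Set.Icc (d + 1) m) :
    (d : K) + ∑ k ∈ S, x (q k) ≤ ∑ i ∈ Icc 1 m, x i := by
  have hhead : ∑ i ∈ Icc 1 d, x i = d := by
    rw [sum_congr rfl fun i hi => hone i (mem_Icc.mp hi)]
    simp
  have hdisj : Disjoint (Icc 1 d) (S.image q) := by
    rw [disjoint_right, forall_mem_image]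
    intro k hk hmem
    have hgt := (hq k hk).1
    have hle := (mem_Icc.mp hmem).2
    omega
  rw [← hhead, ← sum_image hinj, ← sum_union hdisj]
  refine sum_le_sum_of_subset_of_nonneg (union_subset (Icc_subset_Icc_right hdm) ?_)
    fun i hi _ => hx i (mem_Icc.mp hi)
  rw [image_subset_iff]
  exact fun k hk => Icc_subset_Icc_left (by omega) (mem_Icc.mpr (hq k hk))

theorem exists_first_zero_of_sum_le {x : ℕ → K} {p m : ℕ} (hpm : p < m)
    (hbin : ∀ i ∈ Set.Icc 1 m, x i = 0 ∨ x i = 1) (hcard : ∑ i ∈ Icc 1 m, x i ≤ p) :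
    ∃ d ≤ p, x (d + 1) = 0 ∧ ∀ i ∈ Set.Icc 1 d, x i = 1 := by
  have hnonneg : ∀ i ∈ Set.Icc 1 m, 0 ≤ x i := fun i hi => by
    rcases hbin i hi with hxi | hxi <;> simp [hxi]
  have hex : ∃ d ≤ p, x (d + 1) = 0 := by
    by_contra! hne
    have hone : ∀ i ∈ Set.Icc 1 (p + 1), x i = 1 := fun i ⟨hi1, hip⟩ => by
      have := hne (i - 1) (by omega)
      rw [Nat.sub_add_cancel hi1] at this
      exact (hbin i ⟨hi1, by omega⟩).resolve_left this
    have hcount := natCast_add_sum_comp_le_sum_Icc (S := ∅) (q := id) hnonneg hpm hone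
      (by simp) (by simp)
    push_cast [sum_empty] at hcount
    linarith
  obtain ⟨hd, hzero⟩ := Nat.find_spec hex
  refine ⟨Nat.find hex, hd, hzero, fun i ⟨hi1, hid⟩ => ?_⟩
  have hmin := Nat.find_min hex (show i - 1 < Nat.find hex by omega)
  rw [Nat.sub_add_cancel hi1] at hmin
  exact (hbin i ⟨hi1, by omega⟩).resolve_left fun h0 => hmin ⟨by omega, h0⟩

theorem sum_add_le_sum_mul_one_sub {ι : Type*} {A B : Finset ι} {φ y : ι → K} {c : K}
    (hc : 0 ≤ c) (hA : ∀ k ∈ A, φ k ≤ c) (hB : ∀ k ∈ B, c ≤ φ k)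
    (hyA : ∀ k ∈ A, 0 ≤ y k) (hyB : ∀ k ∈ B, y k ≤ 1)
    (hy : ∑ k ∈ A, y k + ∑ k ∈ B, y k + 1 ≤ #B) :
    ∑ k ∈ A, φ k + c ≤ ∑ k ∈ A, φ k * (1 - y k) + ∑ k ∈ B, φ k * (1 - y k) := by
  have hsumA : ∑ k ∈ A, φ k - c * ∑ k ∈ A, y k ≤ ∑ k ∈ A, φ k * (1 - y k) := by
    rw [mul_sum, ← sum_sub_distrib]
    refine sum_le_sum fun k hk => ?_
    linarith [mul_le_mul_of_nonneg_right (hA k hk) (hyA k hk)]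
  have hsumB : #B * c - c * ∑ k ∈ B, y k ≤ ∑ k ∈ B, φ k * (1 - y k) := by
    rw [mul_sum, ← nsmul_eq_mul, ← sum_const, ← sum_sub_distrib]
    refine sum_le_sum fun k hk => ?_
    linarith [mul_le_mul_of_nonneg_right (hB k hk) (sub_nonneg.mpr (hyB k hk))]
  linarith [mul_le_mul_of_nonneg_left hy hc]

/-- The earlier indices `k < ι` for which `q k` lies beyond `a + ι`: the range of summation in the
recursion for `φ ι`, where `a + ι` stands for `r + s_ι`. -/
def earlierIndices (a : ℕ) (q : ℕ → ℕ) (ι : ℕ) : Finset ℕ :=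
  {k ∈ Icc 1 (ι - 1) | a + ι + 1 ≤ q k}

section earlierIndices

variable {a c k m v : ℕ} {q : ℕ → ℕ}

theorem mem_earlierIndices : k ∈ earlierIndices a q c ↔ 1 ≤ k ∧ k < c ∧ a + c + 1 ≤ q k := by
  simp only [earlierIndices, mem_filter, mem_Icc]
  omega

theorem disjoint_earlierIndices_Icc : Disjoint (earlierIndices a q c) (Icc c v) :=
  disjoint_left.mpr fun _ hk hkc => (mem_earlierIndices.mp hk).2.1.not_ge (mem_Icc.mp hkc).1

theorem earlierIndices_union_Icc_subset (hc : c ∈ Set.Icc 1 v) :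
    earlierIndices a q c ∪ Icc c v ⊆ Icc 1 v := by
  refine union_subset (fun k hk => ?_) (Icc_subset_Icc_left hc.1)
  obtain ⟨hk1, hkc, -⟩ := mem_earlierIndices.mp hk
  exact mem_Icc.mpr ⟨hk1, hkc.le.trans hc.2⟩

theorem apply_mem_Icc_of_mem_earlierIndices_union_Icc (hc : c ∈ Set.Icc 1 v)
    (hq : ∀ ι ∈ Set.Icc 1 v, q ι ∈ Set.Icc (a + ι + 1) m)
    (hk : k ∈ earlierIndices a q c ∪ Icc c v) : q k ∈ Set.Icc (a + c + 1) m := by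
  have hqk := hq k (mem_Icc.mp (earlierIndices_union_Icc_subset hc hk))
  rcases mem_union.mp hk with hk | hk
  · exact ⟨(mem_earlierIndices.mp hk).2.2, hqk.2⟩
  · have hck := (mem_Icc.mp hk).1
    exact Set.Icc_subset_Icc_left (by omega) hqk

theorem sum_earlierIndices_add_sum_Icc_add_one_le_card {x : ℕ → K} (hm : a + v < m)
    (hinj : Set.InjOn q (Set.Icc 1 v)) (hq : ∀ ι ∈ Set.Icc 1 v, q ι ∈ Set.Icc (a + ι + 1) m)
    (hx : ∀ i ∈ Set.Icc 1 m, 0 ≤ x i) (hcard : ∑ i ∈ Icc 1 m, x i ≤ (a + v : ℕ))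
    (hc : c ∈ Set.Icc 1 v) (hone : ∀ i ∈ Set.Icc 1 (a + c), x i = 1) :
    ∑ k ∈ earlierIndices a q c, x (q k) + ∑ k ∈ Icc c v, x (q k) + 1 ≤ #(Icc c v) := by
  obtain ⟨hc1, hcv⟩ := hc
  have hcount := natCast_add_sum_comp_le_sum_Icc hx (by omega) hone
    (hinj.mono fun k hk => mem_Icc.mp (earlierIndices_union_Icc_subset ⟨hc1, hcv⟩ hk))
    fun k hk => apply_mem_Icc_of_mem_earlierIndices_union_Icc ⟨hc1, hcv⟩ hq hk
  rw [sum_union disjoint_earlierIndices_Icc] at hcount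
  rw [Nat.card_Icc, Nat.cast_sub (by omega)]
  push_cast at hcount hcard ⊢
  linarith

end earlierIndices

/-- Admissible coefficients for the terms `1 - x (q ι)`, `1 ≤ ι ≤ v`: monotone sequences satisfying
as inequalities the lower bounds in the recursion for `φ`. -/
structure IsLiftingSequence_s12 (h : ℕ → K) (a v : ℕ) (q : ℕ → ℕ) (φ : ℕ → K) : Prop where
  monotoneOn : MonotoneOn φ (Set.Icc 1 v)
  sub_le : ∀ ι ∈ Set.Icc 1 v,
    h (a + 1) - h (a + ι + 1) ≤ ∑ k ∈ earlierIndices a q ι, φ k + φ ι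

namespace IsLiftingSequence_s12

variable {h : ℕ → K} {a v m : ℕ} {q : ℕ → ℕ} {φ : ℕ → K}

theorem of_recursion (hbase : h (a + 1) - h (a + 2) ≤ φ 1)
    (hrec : ∀ ι, 2 ≤ ι → ι ≤ v → max (φ (ι - 1))
      (h (a + 1) - h (a + ι + 1) - ∑ k ∈ earlierIndices a q ι, φ k) ≤ φ ι) :
    IsLiftingSequence_s12 h a v q φ where
  monotoneOn := monotoneOn_of_le_add_one Set.ordConnected_Icc fun ι _ hι hι' =>
    (le_max_left _ _).trans (hrec (ι + 1) (Nat.succ_le_succ hι.1) hι'.2)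
  sub_le := by
    rintro ι ⟨hι1, hιv⟩
    obtain rfl | hι2 := hι1.eq_or_lt
    · simpa [earlierIndices] using hbase
    · linarith [(le_max_right _ _).trans (hrec ι hι2 hιv)]

theorem nonneg_s12 (hφ : IsLiftingSequence_s12 h a v q φ) (hm : a + v < m)
    (hh : AntitoneOn h (Set.Icc 1 m)) {ι : ℕ} (hι : ι ∈ Set.Icc 1 v) : 0 ≤ φ ι := by
  have hv : 1 ≤ v := hι.1.trans hι.2
  have hdrop : h (a + 1 + 1) ≤ h (a + 1) :=
    hh ⟨by omega, by omega⟩ ⟨by omega, by omega⟩ (by omega)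
  have hφ1 : h (a + 1) - h (a + 1 + 1) ≤ φ 1 := by
    simpa [earlierIndices] using hφ.sub_le 1 ⟨le_rfl, hv⟩
  linarith [hφ.monotoneOn ⟨le_rfl, hv⟩ hι hι.1]

theorem mul_one_sub_nonneg (hφ : IsLiftingSequence_s12 h a v q φ) (hm : a + v < m)
    (hh : AntitoneOn h (Set.Icc 1 m)) (hq : ∀ ι ∈ Set.Icc 1 v, q ι ∈ Set.Icc (a + ι + 1) m)
    {x : ℕ → K} (hx : ∀ i ∈ Set.Icc 1 m, x i ≤ 1) {ι : ℕ} (hι : ι ∈ Set.Icc 1 v) :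
    0 ≤ φ ι * (1 - x (q ι)) :=
  mul_nonneg (hφ.nonneg_s12 hm hh hι)
    (sub_nonneg.mpr (hx _ (Set.Icc_subset_Icc_left (by omega) (hq ι hι))))

theorem sub_le_sum (hφ : IsLiftingSequence_s12 h a v q φ) (hm : a + v < m)
    (hh : AntitoneOn h (Set.Icc 1 m)) (hinj : Set.InjOn q (Set.Icc 1 v))
    (hq : ∀ ι ∈ Set.Icc 1 v, q ι ∈ Set.Icc (a + ι + 1) m) {x : ℕ → K}
    (hx : ∀ i ∈ Set.Icc 1 m, x i ∈ Set.Icc 0 1) (hcard : ∑ i ∈ Icc 1 m, x i ≤ (a + v : ℕ))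
    {c : ℕ} (hc : c ∈ Set.Icc 1 v) (hone : ∀ i ∈ Set.Icc 1 (a + c), x i = 1) :
    h (a + 1) - h (a + c + 1) ≤ ∑ ι ∈ Icc 1 v, φ ι * (1 - x (q ι)) := by
  have hsub := earlierIndices_union_Icc_subset (a := a) (q := q) hc
  have hearlier {k} (hk : k ∈ earlierIndices a q c) : k ∈ Set.Icc 1 v :=
    mem_Icc.mp (hsub (mem_union_left _ hk))
  have hlater {k} (hk : k ∈ Icc c v) : k ∈ Set.Icc 1 v :=
    mem_Icc.mp (hsub (mem_union_right _ hk))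
  have hqx {k} (hk : k ∈ Set.Icc 1 v) : x (q k) ∈ Set.Icc 0 1 :=
    hx _ (Set.Icc_subset_Icc_left (by omega) (hq k hk))
  calc h (a + 1) - h (a + c + 1) ≤ ∑ k ∈ earlierIndices a q c, φ k + φ c := hφ.sub_le c hc
    _ ≤ ∑ k ∈ earlierIndices a q c, φ k * (1 - x (q k)) + ∑ k ∈ Icc c v, φ k * (1 - x (q k)) :=
      sum_add_le_sum_mul_one_sub (hφ.nonneg_s12 hm hh hc)
        (fun k hk => hφ.monotoneOn (hearlier hk) hc (mem_earlierIndices.mp hk).2.1.le)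
        (fun k hk => hφ.monotoneOn hc (hlater hk) (mem_Icc.mp hk).1)
        (fun k hk => (hqx (hearlier hk)).1) (fun k hk => (hqx (hlater hk)).2)
        (sum_earlierIndices_add_sum_Icc_add_one_le_card hm hinj hq (fun i hi => (hx i hi).1)
          hcard hc hone)
    _ = ∑ k ∈ earlierIndices a q c ∪ Icc c v, φ k * (1 - x (q k)) :=
      (sum_union disjoint_earlierIndices_Icc).symm
    _ ≤ ∑ k ∈ Icc 1 v, φ k * (1 - x (q k)) :=
      sum_le_sum_of_subset_of_nonneg hsub fun k hk _ =>
        hφ.mul_one_sub_nonneg hm hh hq (fun i hi => (hx i hi).2) (mem_Icc.mp hk)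

theorem le_add_sum (hφ : IsLiftingSequence_s12 h a v q φ) (hm : a + v < m)
    (hh : AntitoneOn h (Set.Icc 1 m)) (hinj : Set.InjOn q (Set.Icc 1 v))
    (hq : ∀ ι ∈ Set.Icc 1 v, q ι ∈ Set.Icc (a + ι + 1) m) {z : K} {x : ℕ → K}
    (hbin : ∀ i ∈ Set.Icc 1 m, x i = 0 ∨ x i = 1)
    (hmix : ∀ i ∈ Set.Icc 1 m, x i = 0 → h i ≤ z) (hcard : ∑ i ∈ Icc 1 m, x i ≤ (a + v : ℕ)) :
    h (a + 1) ≤ z + ∑ ι ∈ Icc 1 v, φ ι * (1 - x (q ι)) := by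
  have hx : ∀ i ∈ Set.Icc 1 m, x i ∈ Set.Icc 0 1 := fun i hi => by
    rcases hbin i hi with hxi | hxi <;> simp [hxi]
  obtain ⟨d, hd, hzero, hone⟩ := exists_first_zero_of_sum_le hm hbin hcard
  have hzd : h (d + 1) ≤ z := hmix _ ⟨by omega, by omega⟩ hzero
  rcases le_or_gt d a with hda | had
  · have hha : h (a + 1) ≤ h (d + 1) :=
      hh ⟨by omega, by omega⟩ ⟨by omega, by omega⟩ (by omega)
    have hsum : 0 ≤ ∑ ι ∈ Icc 1 v, φ ι * (1 - x (q ι)) := sum_nonneg fun ι hι =>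
      hφ.mul_one_sub_nonneg hm hh hq (fun i hi => (hx i hi).2) (mem_Icc.mp hι)
    linarith
  · obtain ⟨c, rfl⟩ := Nat.exists_eq_add_of_le had.le
    linarith [hφ.sub_le_sum hm hh hinj hq hx hcard ⟨by omega, by omega⟩ hone]

end IsLiftingSequence_s12

theorem blp_inequality_delta_zero_cardinality_general {m a v l : ℕ} (hm : a + v < m)
    {h : ℕ → K} (hh : AntitoneOn h (Set.Icc 1 m))
    {t : ℕ → ℕ} (ht1 : 1 ≤ t 1) (ht : MonotoneOn t (Set.Icc 1 (l + 1)))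
    (httop : t (l + 1) = a + 1)
    {q : ℕ → ℕ} (hinj : Set.InjOn q (Set.Icc 1 v))
    (hq : ∀ ι ∈ Set.Icc 1 v, q ι ∈ Set.Icc (a + ι + 1) m)
    {φ : ℕ → K} (hφ : IsLiftingSequence_s12 h a v q φ)
    {z : K} {x : ℕ → K} (hbin : ∀ i ∈ Set.Icc 1 m, x i = 0 ∨ x i = 1)
    (hmix : ∀ i ∈ Set.Icc 1 m, x i = 0 → h i ≤ z) (hcard : ∑ i ∈ Icc 1 m, x i ≤ (a + v : ℕ)) :
    h (t 1) ≤ z + ∑ ι ∈ Icc 1 l, (h (t ι) - h (t (ι + 1))) * x (t ι)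
      + ∑ ι ∈ Icc 1 v, φ ι * (1 - x (q ι)) := by
  set Φ := ∑ ι ∈ Icc 1 v, φ ι * (1 - x (q ι))
  have hΦ : 0 ≤ Φ := sum_nonneg fun ι hι =>
    hφ.mul_one_sub_nonneg hm hh hq (fun i hi => by rcases hbin i hi with hxi | hxi <;> simp [hxi])
      (mem_Icc.mp hι)
  have hbase : h (a + 1) ≤ z + Φ := hφ.le_add_sum hm hh hinj hq hbin hmix hcard
  have ht_mem : ∀ ι ∈ Set.Icc 1 (l + 1), t ι ∈ Set.Icc 1 m := fun ι hι =>
    ⟨ht1.trans (ht ⟨le_rfl, by omega⟩ hι hι.1),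
      (ht hι ⟨by omega, le_rfl⟩ hι.2).trans (by omega)⟩
  have hmem {ι} (hι : ι ∈ Set.Icc 1 l) : ι ∈ Set.Icc 1 (l + 1) := ⟨hι.1, hι.2.trans l.le_succ⟩
  have hmem_succ {ι} (hι : ι ∈ Set.Icc 1 l) : ι + 1 ∈ Set.Icc 1 (l + 1) :=
    ⟨by omega, Nat.succ_le_succ hι.2⟩
  have htel := le_max_add_sum_sub_mul_s12 (g := h ∘ t) (y := x ∘ t)
    (fun ι hι => hh (ht_mem _ (hmem hι)) (ht_mem _ (hmem_succ hι))
      (ht (hmem hι) (hmem_succ hι) ι.le_succ))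
    (fun ι hι => hbin _ (ht_mem ι (hmem hι)))
    (fun ι hι => hmix _ (ht_mem ι (hmem hι)))
  simp only [Function.comp_apply, httop] at htel
  linarith [max_le hbase (le_add_of_nonneg_right hΦ)]

end

/-- **Corollary: setting `δ = 0` in the BL&P inequality for the cardinality-constrained
case recovers the known family.** Here `s ι = p − r − v + ι` for `ι = 1,…,v+1`,
`1 ≤ t 1 < … < t l ≤ r` with the convention `t (l+1) := r + s 1`; the indices
`q 1,…,q v` are distinct with `r + s ι + 1 ≤ q ι ≤ m`; `φ 1 = h_{r+s_1} − h_{r+s_2}`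
and `φ ι = max (φ (ι−1)) (h_{r+s_1} − h_{r+s_ι+1} − ∑_{k<ι : q k ≥ r+s_ι+1} φ k)`. -/
theorem blp_inequality_delta_zero_cardinality
    (m p : ℕ) (hm : 1 ≤ m) (hp1 : 1 ≤ p) (hpm : p < m)
    (h : ℕ → ℝ)
    (hmono : ∀ i j : ℕ, 1 ≤ i → i ≤ j → j ≤ m → h j ≤ h i)
    (hnonneg : ∀ i : ℕ, 1 ≤ i → i ≤ m → 0 ≤ h i)
    (r : ℕ) (hr1 : 1 ≤ r) (hrp : r ≤ p)
    (l : ℕ) (hl1 : 1 ≤ l) (hlr : l ≤ r)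
    (v : ℕ) (hv1 : 1 ≤ v) (hvp : v ≤ p - r)
    (t : ℕ → ℕ) (ht1 : 1 ≤ t 1) (htl : t l ≤ r)
    (htmono : ∀ ι κ : ℕ, 1 ≤ ι → ι < κ → κ ≤ l → t ι < t κ)
    (httop : t (l + 1) = r + (p - r - v + 1))
    (q : ℕ → ℕ)
    (hqinj : ∀ ι κ : ℕ, 1 ≤ ι → ι ≤ v → 1 ≤ κ → κ ≤ v → q ι = q κ → ι = κ)
    (hqrange : ∀ ι : ℕ, 1 ≤ ι → ι ≤ v → r + (p - r - v + ι) + 1 ≤ q ι ∧ q ι ≤ m)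
    (φ : ℕ → ℝ)
    (hφ1 : φ 1 = h (r + (p - r - v + 1)) - h (r + (p - r - v + 2)))
    (hφrec : ∀ ι : ℕ, 2 ≤ ι → ι ≤ v →
      φ ι = max (φ (ι - 1))
        (h (r + (p - r - v + 1)) - h (r + (p - r - v + ι) + 1)
          - ∑ k ∈ (Finset.Icc 1 (ι - 1)).filter
              (fun k => r + (p - r - v + ι) + 1 ≤ q k), φ k))
    (z : ℝ) (x : ℕ → ℝ) (hz : 0 ≤ z)
    (hxbin : ∀ i : ℕ, 1 ≤ i → i ≤ m → x i = 0 ∨ x i = 1)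
    (hmix : ∀ i : ℕ, 1 ≤ i → i ≤ m → x i = 0 → h i ≤ z)
    (hcard : ∑ i ∈ Finset.Icc 1 m, x i ≤ (p : ℝ)) :
    h (t 1) ≤ z + (∑ ι ∈ Finset.Icc 1 l, (h (t ι) - h (t (ι + 1))) * x (t ι))
      + ∑ ι ∈ Finset.Icc 1 v, φ ι * (1 - x (q ι)) := by
  obtain ⟨a, rfl⟩ : ∃ a, p = a + v := ⟨p - v, by omega⟩
  have index (ι : ℕ) : r + (a + v - r - v + ι) = a + ι := by omega
  simp only [index] at httop hqrange hφ1 hφrec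
  have ht : MonotoneOn t (Set.Icc 1 (l + 1)) :=
    monotoneOn_of_le_add_one Set.ordConnected_Icc fun ι _ hι hι' => by
      obtain rfl | hιl := (Nat.le_of_succ_le_succ hι'.2).eq_or_lt
      · omega
      · exact (htmono ι (ι + 1) hι.1 ι.lt_succ_self hιl).le
  exact blp_inequality_delta_zero_cardinality_general hpm
    (fun i hi j hj hij => hmono i j hi.1 hij hj.2) ht1 ht httop
    (fun ι hι κ hκ => hqinj ι κ hι.1 hι.2 hκ.1 hκ.2) (fun ι hι => hqrange ι hι.1 hι.2)
    (.of_recursion hφ1.ge fun ι h2 hv => (hφrec ι h2 hv).ge)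
    (fun i hi => hxbin i hi.1 hi.2) (fun i hi => hmix i hi.1 hi.2) hcard
end

section
/- Let (h_1,…,h_{10}) = (20,18,14,11,6,5,4,3,2,1) and let F = {(z,x) ∈ ℝ_{≥0} × {0,1}^{10} : for every i ∈ {1,…,10}, x_i = 0 implies z ≥ h_i, and Σ_{i=1}^{10} x_i ≤ 4}. Then every (z,x) ∈ F satisfies z + 3 x_1 + 3 (1 − x_6) + 5 (1 − x_7) + 3 (1 − x_8) ≥ 20. -/
/-!
Let `k` be the number of leading ones of `x`. The cardinality constraint gives `k ≤ p` and
`x (k + 1) = 0`, hence `h (k + 1) ≤ z`, and it leaves a budget of only `p - k` for the entries of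
`x` on a set `L` of later indices. A lower bound for `∑ i ∈ L, δ i * (1 - x i)` under this budget
is a fractional knapsack problem, whose LP dual has a single multiplier `c` for the budget. So an
inequality is valid as soon as every `k ≤ p` admits a suitable `c`.
-/

section CardinalityBudget

open Finset

variable {R : Type*} [CommRing R] [LinearOrder R] [IsStrictOrderedRing R]

theorem mem_Icc_zero_one_of_eq_zero_or_eq_one {a : R} (ha : a = 0 ∨ a = 1) :
    a ∈ Set.Icc 0 1 := by
  rcases ha with rfl | rfl <;> simp

theorem sum_le_sum_sub_card_of_eq_one {ι : Type*} {s t u : Finset ι} {x : ι → R}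
    (hst : Disjoint s t) (hsu : s ⊆ u) (htu : t ⊆ u)
    (hone : ∀ i ∈ s, x i = 1) (hnonneg : ∀ i ∈ u, 0 ≤ x i) :
    ∑ i ∈ t, x i ≤ ∑ i ∈ u, x i - #s := by
  have hsum_s : ∑ i ∈ s, x i = #s := by simp [sum_congr rfl hone]
  have hsub : s.disjUnion t hst ⊆ u := by
    intro i hi
    exact (mem_disjUnion.mp hi).elim (@hsu i) (@htu i)
  have hle := sum_le_sum_of_subset_of_nonneg hsub fun i hi _ => hnonneg i hi
  rw [sum_disjUnion, hsum_s] at hle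
  exact le_sub_iff_add_le'.mpr hle

theorem sum_min_sub_mul_sum_le_sum_mul_one_sub {ι : Type*} {L : Finset ι} {x : ι → R}
    (hnonneg : ∀ i ∈ L, 0 ≤ x i) (hle_one : ∀ i ∈ L, x i ≤ 1) (δ : ι → R) (c : R) :
    ∑ i ∈ L, min (δ i) c - c * ∑ i ∈ L, x i ≤ ∑ i ∈ L, δ i * (1 - x i) := by
  rw [mul_sum, ← sum_sub_distrib]
  refine sum_le_sum fun i hi => ?_
  calc min (δ i) c - c * x i
      ≤ min (δ i) c - min (δ i) c * x i :=
        sub_le_sub_left (mul_le_mul_of_nonneg_right (min_le_right _ _) (hnonneg i hi)) _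
    _ = min (δ i) c * (1 - x i) := by ring
    _ ≤ δ i * (1 - x i) :=
        mul_le_mul_of_nonneg_right (min_le_left _ _) (sub_nonneg.mpr (hle_one i hi))

theorem exists_ones_prefix_of_binary {M : Type*} [Zero M] [One M] {x : ℕ → M} {p : ℕ}
    (hbin : ∀ i ∈ Icc 1 p, x i = 0 ∨ x i = 1) :
    ∃ k ≤ p, (∀ i ∈ Icc 1 k, x i = 1) ∧ (k < p → x (k + 1) = 0) := by
  by_cases hall : ∀ i ∈ Icc 1 p, x i = 1
  · exact ⟨p, le_rfl, hall, fun h => (lt_irrefl p h).elim⟩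
  classical
  have hex : ∃ k, k < p ∧ x (k + 1) ≠ 1 := by
    push Not at hall
    obtain ⟨i, hi, hne⟩ := hall
    obtain ⟨hi_pos, hi_le⟩ := mem_Icc.mp hi
    exact ⟨i - 1, by omega, by rwa [Nat.sub_add_cancel hi_pos]⟩
  obtain ⟨hlt, hne⟩ := Nat.find_spec hex
  refine ⟨Nat.find hex, hlt.le, fun i hi => ?_, fun _ => ?_⟩
  · obtain ⟨hi_pos, hi_le⟩ := mem_Icc.mp hi
    by_contra hxi
    refine Nat.find_min hex (m := i - 1) (by omega) ⟨by omega, ?_⟩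
    rwa [Nat.sub_add_cancel hi_pos]
  · exact (hbin _ (mem_Icc.mpr ⟨by omega, hlt⟩)).resolve_right hne

theorem exists_ones_prefix_of_sum_le {x : ℕ → R} {m p : ℕ} (hpm : p < m)
    (hbin : ∀ i ∈ Icc 1 p, x i = 0 ∨ x i = 1) (hnonneg : ∀ i ∈ Icc 1 m, 0 ≤ x i)
    (hcard : ∑ i ∈ Icc 1 m, x i ≤ p) :
    ∃ k ≤ p, (∀ i ∈ Icc 1 k, x i = 1) ∧ x (k + 1) = 0 := by
  obtain ⟨k, hkp, hone, hzero⟩ := exists_ones_prefix_of_binary hbin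
  refine ⟨k, hkp, hone, ?_⟩
  obtain hlt | rfl := hkp.lt_or_eq
  · exact hzero hlt
  have hmem : k + 1 ∈ Icc 1 m := mem_Icc.mpr ⟨by omega, hpm⟩
  have hle : x (k + 1) ≤ ∑ i ∈ Icc 1 m, x i - k := by
    simpa using sum_le_sum_sub_card_of_eq_one (t := {k + 1}) (by simp)
      (Icc_subset_Icc_right hpm.le) (singleton_subset_iff.mpr hmem) hone hnonneg
  exact le_antisymm (hle.trans (sub_nonpos.mpr hcard)) (hnonneg _ hmem)

theorem mixing_cardinality_inequality_of_dual_multipliers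
    {h x α δ : ℕ → R} {z β : R} {m p : ℕ} {L : Finset ℕ}
    (hpm : p < m) (hL : L ⊆ Ioc p m)
    (hbin : ∀ i ∈ Icc 1 p, x i = 0 ∨ x i = 1) (hnonneg : ∀ i ∈ Ioc p m, 0 ≤ x i)
    (hle_one : ∀ i ∈ L, x i ≤ 1) (hz : ∀ i ∈ Icc 1 (p + 1), x i = 0 → h i ≤ z)
    (hcard : ∑ i ∈ Icc 1 m, x i ≤ p) (hα : ∀ i ∈ Icc 1 p, 0 ≤ α i)
    (hβ : ∀ k ≤ p, ∃ c ≥ 0,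
      β ≤ h (k + 1) + ∑ i ∈ Icc 1 k, α i + (∑ i ∈ L, min (δ i) c - c * (p - k))) :
    β ≤ z + ∑ i ∈ Icc 1 p, α i * x i + ∑ i ∈ L, δ i * (1 - x i) := by
  have hnonneg_prefix : ∀ i ∈ Icc 1 p, 0 ≤ x i := fun i hi =>
    (mem_Icc_zero_one_of_eq_zero_or_eq_one (hbin i hi)).1
  have hnonneg_all : ∀ i ∈ Icc 1 m, 0 ≤ x i := fun i hi => by
    obtain ⟨hi_pos, hi_le⟩ := mem_Icc.mp hi
    obtain hip | hpi := le_or_gt i p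
    · exact hnonneg_prefix i (mem_Icc.mpr ⟨hi_pos, hip⟩)
    · exact hnonneg i (mem_Ioc.mpr ⟨hpi, hi_le⟩)
  obtain ⟨k, hkp, hone, hzero⟩ := exists_ones_prefix_of_sum_le hpm hbin hnonneg_all hcard
  obtain ⟨c, hc, hβc⟩ := hβ k hkp
  have hz_ge : h (k + 1) ≤ z := hz (k + 1) (mem_Icc.mpr ⟨by omega, by omega⟩) hzero
  have hprefix : ∑ i ∈ Icc 1 k, α i ≤ ∑ i ∈ Icc 1 p, α i * x i := calc
    ∑ i ∈ Icc 1 k, α i = ∑ i ∈ Icc 1 k, α i * x i :=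
      sum_congr rfl fun i hi => by rw [hone i hi, mul_one]
    _ ≤ ∑ i ∈ Icc 1 p, α i * x i :=
      sum_le_sum_of_subset_of_nonneg (Icc_subset_Icc_right hkp) fun i hi _ =>
        mul_nonneg (hα i hi) (hnonneg_prefix i hi)
  have hbudget : ∑ i ∈ L, x i ≤ p - k := by
    have hdisj : Disjoint (Icc 1 k) L := disjoint_left.mpr fun i hik hiL =>
      absurd (mem_Ioc.mp (hL hiL)).1 (not_lt.mpr ((mem_Icc.mp hik).2.trans hkp))
    have hLm : L ⊆ Icc 1 m := fun i hi => by
      obtain ⟨hpi, him⟩ := mem_Ioc.mp (hL hi)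
      exact mem_Icc.mpr ⟨by omega, him⟩
    have hle := sum_le_sum_sub_card_of_eq_one hdisj
      (Icc_subset_Icc_right (hkp.trans hpm.le)) hLm hone hnonneg_all
    rw [Nat.card_Icc, Nat.add_sub_cancel] at hle
    exact hle.trans (sub_le_sub_right hcard _)
  have hknapsack := sum_min_sub_mul_sum_le_sum_mul_one_sub
    (fun i hi => hnonneg i (hL hi)) hle_one δ c
  linarith [mul_le_mul_of_nonneg_left hbudget hc]

theorem example_inequality_mixing_cardinality_two_general {z : R} {x : ℕ → R}
    (hbin : ∀ i ∈ Icc 1 4, x i = 0 ∨ x i = 1) (hnonneg : ∀ i ∈ Ioc 4 10, 0 ≤ x i)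
    (hle_one : ∀ i ∈ Icc 6 8, x i ≤ 1)
    (hx1 : x 1 = 0 → 20 ≤ z) (hx2 : x 2 = 0 → 18 ≤ z) (hx3 : x 3 = 0 → 14 ≤ z)
    (hx4 : x 4 = 0 → 11 ≤ z) (hx5 : x 5 = 0 → 6 ≤ z)
    (hcard : ∑ i ∈ Icc 1 10, x i ≤ 4) :
    20 ≤ z + 3 * x 1 + 3 * (1 - x 6) + 5 * (1 - x 7) + 3 * (1 - x 8) := by
  let h : ℕ → R := fun | 1 => 20 | 2 => 18 | 3 => 14 | 4 => 11 | _ => 6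
  let α : ℕ → R := fun | 1 => 3 | _ => 0
  let δ : ℕ → R := fun | 7 => 5 | _ => 3
  have hz : ∀ i ∈ Icc 1 (4 + 1), x i = 0 → h i ≤ z := by
    intro i hi
    obtain ⟨hi_pos, hi_le⟩ := mem_Icc.mp hi
    interval_cases i <;> assumption
  have hα : ∀ i ∈ Icc 1 4, 0 ≤ α i := by
    intro i hi
    obtain ⟨hi_pos, hi_le⟩ := mem_Icc.mp hi
    interval_cases i <;> norm_num [α]
  have hβ : ∀ k ≤ 4, ∃ c ≥ 0, 20 ≤ h (k + 1) + ∑ i ∈ Icc 1 k, α i +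
      (∑ i ∈ Icc 6 8, min (δ i) c - c * ((4 : ℕ) - k)) := by
    intro k hk
    interval_cases k
    · exact ⟨0, le_rfl, by norm_num [h, δ, sum_Icc_succ_top]⟩
    · exact ⟨0, le_rfl, by norm_num [h, α, δ, sum_Icc_succ_top]⟩
    · exact ⟨3, by norm_num, by norm_num [h, α, δ, sum_Icc_succ_top]⟩
    · exact ⟨5, by norm_num, by norm_num [h, α, δ, sum_Icc_succ_top]⟩
    · exact ⟨5, by norm_num, by norm_num [h, α, δ, sum_Icc_succ_top]⟩
  have hvalid := mixing_cardinality_inequality_of_dual_multipliers (m := 10)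
    (by norm_num) (by decide) hbin hnonneg hle_one hz (mod_cast hcard) hα hβ
  simpa [α, δ, sum_Icc_succ_top, add_assoc] using hvalid

end CardinalityBudget

/-- **Example: a facet-defining BL&P inequality for the mixing set with a cardinality
constraint** with `(h_1,…,h_10) = (20,18,14,11,6,5,4,3,2,1)` and `p = 4`:
every `(z,x) ∈ F` satisfies `z + 3 x_1 + 3(1 − x_6) + 5(1 − x_7) + 3(1 − x_8) ≥ 20`. -/
theorem example_inequality_mixing_cardinality_two
    (z : ℝ) (x : ℕ → ℝ) (hz : 0 ≤ z)
    (hxbin : ∀ i : ℕ, 1 ≤ i → i ≤ 10 → x i = 0 ∨ x i = 1)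
    (hx1 : x 1 = 0 → 20 ≤ z) (hx2 : x 2 = 0 → 18 ≤ z)
    (hx3 : x 3 = 0 → 14 ≤ z) (hx4 : x 4 = 0 → 11 ≤ z)
    (hx5 : x 5 = 0 → 6 ≤ z) (hx6 : x 6 = 0 → 5 ≤ z)
    (hx7 : x 7 = 0 → 4 ≤ z) (hx8 : x 8 = 0 → 3 ≤ z)
    (hx9 : x 9 = 0 → 2 ≤ z) (hx10 : x 10 = 0 → 1 ≤ z)
    (hcard : ∑ i ∈ Finset.Icc 1 10, x i ≤ 4) :
    20 ≤ z + 3 * x 1 + 3 * (1 - x 6) + 5 * (1 - x 7) + 3 * (1 - x 8) :=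
  example_inequality_mixing_cardinality_two_general
    (fun i hi => hxbin i (by grind) (by grind))
    (fun i hi => (mem_Icc_zero_one_of_eq_zero_or_eq_one (hxbin i (by grind) (by grind))).1)
    (fun i hi => (mem_Icc_zero_one_of_eq_zero_or_eq_one (hxbin i (by grind) (by grind))).2)
    hx1 hx2 hx3 hx4 hx5 hcard
end

section
/- Let (h_1,…,h_{10}) = (40,38,34,31,26,16,8,4,2,1), let π_i = 1/8 for i ∈ {1,2,3,4} and π_i = 1/12 for i ∈ {5,…,10}, and let ε = 1/2. Let F = {(z,x) ∈ ℝ_{≥0} × {0,1}^{10} : for every i ∈ {1,…,10}, x_i = 0 implies z ≥ h_i, and Σ_{i=1}^{10} π_i x_i ≤ 1/2}. Then every (z,x) ∈ F satisfies z + 2 x_1 + 4 (1 − x_4) + 4 (1 − x_7) + 8 (1 − x_8) ≥ 40. -/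
/-!
Write `S` for the set of indices with `x i = 1`. Only three things about a point matter: `S` fits
in the knapsack, `z` dominates `h i` for `i ∉ S`, and `S` determines both correction sums.

The sum over the chain `1, 2` is the classical mixing argument: either `x₁ = 0` and `z ≥ 40`, or the
term `(40 - 38) x₁` lowers the target from `40` to `38`. In the second case the first index
`k ≥ 2` outside `S` gives `z ≥ h k`, and the covers containing `{1, …, k - 1}` force enough indices
of `{4, 7, 8}` out of `S` to compensate for `38 - h k`.
-/

open Finset

theorem sum_mul_one_sub_of_binary {ι K : Type*} [Ring K] [DecidableEq ι] {L S : Finset ι}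
    {φ x : ι → K} (hin : ∀ i ∈ L, i ∈ S → x i = 1) (hout : ∀ i ∈ L, i ∉ S → x i = 0) :
    ∑ i ∈ L, φ i * (1 - x i) = ∑ i ∈ L \ S, φ i := by
  rw [← filter_notMem_eq_sdiff, sum_filter]
  refine sum_congr rfl fun i hi ↦ ?_
  by_cases hiS : i ∈ S
  · simp [hiS, hin i hi hiS]
  · simp [hiS, hout i hi hiS]

section Mixing

variable {ι K : Type*} [Ring K] [PartialOrder K]

/-- `(z, x)` lies in the mixing set with a knapsack constraint whose indices are the elements of
`s`, with bounds `h`, probabilities `π` and risk level `ε`. The binary vector `x` is encoded by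
elements of `K`, and its values outside `s` are irrelevant. -/
structure IsMixingKnapsackPoint (s : Finset ι) (h π : ι → K) (ε z : K) (x : ι → K) : Prop where
  nonneg : 0 ≤ z
  binary : ∀ i ∈ s, x i = 0 ∨ x i = 1
  mixing : ∀ i ∈ s, x i = 0 → h i ≤ z
  knapsack : ∑ i ∈ s, π i * x i ≤ ε

/-- `C` is a cover for the knapsack with weights `π` and capacity `ε`: its elements cannot all be
selected together. -/
def IsCover (π : ι → K) (ε : K) (C : Finset ι) : Prop :=
  ε < ∑ i ∈ C, π i

variable [IsOrderedRing K]

theorem IsCover.exists_notMem {π : ι → K} {ε : K} {C S : Finset ι} (hC : IsCover π ε C)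
    (hπ : ∀ i ∈ S, 0 ≤ π i) (hS : ∑ i ∈ S, π i ≤ ε) : ∃ i ∈ C, i ∉ S := by
  by_contra! hCS
  have hle : ∑ i ∈ C, π i ≤ ∑ i ∈ S, π i :=
    sum_le_sum_of_subset_of_nonneg hCS fun i hi _ ↦ hπ i hi
  exact (hC.trans_le (hle.trans hS)).false

theorem le_add_sum_sub_mul_of_binary {u y : ℕ → K} {v : K} {a : ℕ}
    (hu : ∀ j < a, u (j + 1) ≤ u j) (hy : ∀ j < a, y j = 0 ∨ y j = 1)
    (hzero : ∀ j < a, y j = 0 → u j ≤ v) (hone : (∀ j < a, y j = 1) → u a ≤ v) :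
    u 0 ≤ v + ∑ j ∈ range a, (u j - u (j + 1)) * y j := by
  induction a generalizing v with
  | zero => simpa using hone
  | succ a ih =>
    have hterm : 0 ≤ (u a - u (a + 1)) * y a := by
      rcases hy a a.lt_succ_self with hya | hya <;> simp [hya, hu a a.lt_succ_self]
    rw [sum_range_succ, add_comm (∑ j ∈ range a, _), ← add_assoc]
    refine ih (fun j hj ↦ hu j (hj.trans a.lt_succ_self))
      (fun j hj ↦ hy j (hj.trans a.lt_succ_self))
      (fun j hj hyj ↦ (hzero j (hj.trans a.lt_succ_self) hyj).trans
        (le_add_of_nonneg_right hterm)) fun hprefix ↦ ?_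
    rcases hy a a.lt_succ_self with hya | hya
    · simpa [hya] using hzero a a.lt_succ_self hya
    · have hlast : u (a + 1) ≤ v := hone (Nat.forall_lt_succ_right.2 ⟨hprefix, hya⟩)
      calc
        u a = u (a + 1) + (u a - u (a + 1)) * y a := by rw [hya, mul_one, add_sub_cancel]
        _ ≤ v + (u a - u (a + 1)) * y a := by gcongr

theorem IsMixingKnapsackPoint.lifted_mixing_inequality [DecidableEq ι] {s L : Finset ι}
    {h π φ x : ι → K} {ε z : K} {t : ℕ → ι} {a : ℕ} (hp : IsMixingKnapsackPoint s h π ε z x)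
    (ht : ∀ j < a, t j ∈ s) (hanti : ∀ j < a, h (t (j + 1)) ≤ h (t j))
    (hL : L ⊆ s) (hφ : ∀ i ∈ L, 0 ≤ φ i)
    (hlift : ∀ S ⊆ s, (∀ j < a, t j ∈ S) → ∑ i ∈ S, π i ≤ ε →
      ∀ w, 0 ≤ w → (∀ i ∈ s, i ∉ S → h i ≤ w) → h (t a) ≤ w + ∑ i ∈ L \ S, φ i) :
    h (t 0) ≤ z + ∑ j ∈ range a, (h (t j) - h (t (j + 1))) * x (t j)
      + ∑ i ∈ L, φ i * (1 - x i) := by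
  classical
  nontriviality K
  set S := {i ∈ s | x i = 1}
  have hout {i : ι} (hi : i ∈ s) (hiS : i ∉ S) : x i = 0 :=
    (hp.binary i hi).resolve_right fun hxi ↦ hiS (mem_filter.2 ⟨hi, hxi⟩)
  have hfits : ∑ i ∈ S, π i ≤ ε := by
    refine le_of_eq_of_le ?_ hp.knapsack
    rw [sum_filter]
    refine sum_congr rfl fun i hi ↦ ?_
    rcases hp.binary i hi with hxi | hxi <;> simp [hxi]
  have hcorr : ∑ i ∈ L, φ i * (1 - x i) = ∑ i ∈ L \ S, φ i :=
    sum_mul_one_sub_of_binary (fun _ _ hiS ↦ (mem_filter.1 hiS).2) fun _ hi ↦ hout (hL hi)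
  have hcorr_nonneg : 0 ≤ ∑ i ∈ L \ S, φ i :=
    sum_nonneg fun i hi ↦ hφ i (mem_sdiff.1 hi).1
  rw [hcorr, add_right_comm]
  refine le_add_sum_sub_mul_of_binary (u := h ∘ t) (y := x ∘ t) hanti
    (fun j hj ↦ hp.binary _ (ht j hj))
    (fun j hj hxj ↦ (hp.mixing _ (ht j hj) hxj).trans (le_add_of_nonneg_right hcorr_nonneg))
    fun hone ↦ ?_
  exact hlift S (filter_subset _ _) (fun j hj ↦ mem_filter.2 ⟨ht j hj, hone j hj⟩) hfits z hp.nonneg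
    fun i hi hiS ↦ hp.mixing i hi (hout hi hiS)

end Mixing

section Example

variable {K : Type*} [Field K]

/-- The bounds `h₁, …, h₁₀` of the example, indexed from `1`; other indices get a junk value. -/
def exampleBound : ℕ → K
  | 1 => 40 | 2 => 38 | 3 => 34 | 4 => 31 | 5 => 26
  | 6 => 16 | 7 => 8 | 8 => 4 | 9 => 2 | 10 => 1
  | _ => 0

/-- The probabilities `π₁, …, π₁₀` of the example, indexed from `1`. -/
def exampleProb (i : ℕ) : K :=
  if i ≤ 4 then 1 / 8 else 1 / 12

/-- The coefficients of `1 - x₄`, `1 - x₇` and `1 - x₈` in the inequality of the example. -/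
def exampleLift (i : ℕ) : K :=
  if i = 8 then 8 else 4

variable [LinearOrder K] [IsStrictOrderedRing K]

theorem exampleProb_nonneg (i : ℕ) : 0 ≤ (exampleProb i : K) := by
  unfold exampleProb
  split_ifs <;> positivity

theorem isCover_exampleProb {j : ℕ} (hj : 4 < j) :
    IsCover (exampleProb (K := K)) (1 / 2) {1, 2, 3, 4, j} := by
  have hne (i : ℕ) (hi : i ≤ 4) : i ≠ j := by lia
  norm_num [IsCover, exampleProb, hne, hj.not_ge]

theorem four_le_exampleLift (i : ℕ) : 4 ≤ (exampleLift i : K) := by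
  unfold exampleLift
  split_ifs <;> norm_num

theorem exampleBound_two_le_add_sum_exampleLift {S : Finset ℕ} {w : K} (h1 : 1 ∈ S)
    (hS : ∑ i ∈ S, (exampleProb i : K) ≤ 1 / 2)
    (hw : ∀ i ∈ Icc 1 10, i ∉ S → exampleBound i ≤ w) :
    exampleBound 2 ≤ w + ∑ i ∈ {4, 7, 8} \ S, exampleLift i := by
  have exists_notMem (C : Finset ℕ) (hC : IsCover (exampleProb (K := K)) (1 / 2) C) :
      ∃ i ∈ C, i ∉ S :=
    hC.exists_notMem (fun i _ ↦ exampleProb_nonneg i) hS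
  have le_of_notMem (k : ℕ) (A : Finset ℕ) (hk : k ∈ Icc 1 10) (hkS : k ∉ S)
      (hA : A ⊆ {4, 7, 8} \ S)
      (hle : (exampleBound 2 : K) ≤ exampleBound k + ∑ i ∈ A, exampleLift i) :
      exampleBound 2 ≤ w + ∑ i ∈ {4, 7, 8} \ S, exampleLift i :=
    hle.trans <| add_le_add (hw k hk hkS) <| sum_le_sum_of_subset_of_nonneg hA
      fun i _ _ ↦ zero_le_four.trans (four_le_exampleLift i)
  by_cases h2 : 2 ∈ S
  swap
  · exact le_of_notMem 2 ∅ (by decide) h2 (empty_subset _) (by simp)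
  by_cases h3 : 3 ∈ S
  swap
  · obtain ⟨i, hi, hiS⟩ : ∃ i ∈ ({4, 7, 8} : Finset ℕ), i ∉ S := by
      simpa [h1, h2] using exists_notMem {1, 2, 4, 7, 8} (by norm_num [IsCover, exampleProb])
    refine le_of_notMem 3 {i} (by decide) h3 (singleton_subset_iff.2 (mem_sdiff.2 ⟨hi, hiS⟩)) ?_
    simp only [exampleBound, sum_singleton]
    linarith [four_le_exampleLift (K := K) i]
  by_cases h4 : 4 ∈ S
  swap
  · obtain h7 | h8 : 7 ∉ S ∨ 8 ∉ S := by
      simpa [h1, h2, h3] using exists_notMem {1, 2, 3, 7, 8} (by norm_num [IsCover, exampleProb])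
    · exact le_of_notMem 4 {4, 7} (by decide) h4 (by simp [insert_subset_iff, h4, h7])
        (by norm_num [exampleBound, exampleLift])
    · exact le_of_notMem 4 {4, 8} (by decide) h4 (by simp [insert_subset_iff, h4, h8])
        (by norm_num [exampleBound, exampleLift])
  have notMem (j : ℕ) (hj : 4 < j) : j ∉ S := by
    simpa [h1, h2, h3, h4] using exists_notMem {1, 2, 3, 4, j} (isCover_exampleProb hj)
  exact le_of_notMem 5 {7, 8} (by decide) (notMem 5 (by decide))
    (by simp [insert_subset_iff, notMem]) (by norm_num [exampleBound, exampleLift])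

theorem example_inequality_mixing_knapsack_general {z : K} {x : ℕ → K}
    (hp : IsMixingKnapsackPoint (Icc 1 10) exampleBound exampleProb (1 / 2) z x) :
    40 ≤ z + 2 * x 1 + 4 * (1 - x 4) + 4 * (1 - x 7) + 8 * (1 - x 8) := by
  have hmix := hp.lifted_mixing_inequality (L := {4, 7, 8}) (φ := exampleLift) (t := Nat.succ)
    (a := 1) (by simp) (by norm_num [exampleBound]) (by decide)
    (fun i _ ↦ zero_le_four.trans (four_le_exampleLift i))
    fun S _ h1 hS w _ hw ↦ exampleBound_two_le_add_sum_exampleLift (h1 0 one_pos) hS hw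
  have hmix' : 40 ≤ z + (40 - 38) * x 1
      + (4 * (1 - x 4) + (4 * (1 - x 7) + 8 * (1 - x 8))) := by
    simpa [exampleBound, exampleLift] using hmix
  linarith

end Example

/-- **Example (Zhao et al.): a facet-defining inequality for the mixing set with a
knapsack constraint** with `(h_1,…,h_10) = (40,38,34,31,26,16,8,4,2,1)`,
`π_i = 1/8` for `i ∈ {1,2,3,4}`, `π_i = 1/12` for `i ∈ {5,…,10}`, and `ε = 1/2`:
every `(z,x) ∈ F` satisfies `z + 2 x_1 + 4(1 − x_4) + 4(1 − x_7) + 8(1 − x_8) ≥ 40`. -/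
theorem example_inequality_mixing_knapsack
    (z : ℝ) (x : ℕ → ℝ) (hz : 0 ≤ z)
    (hxbin : ∀ i : ℕ, 1 ≤ i → i ≤ 10 → x i = 0 ∨ x i = 1)
    (hx1 : x 1 = 0 → 40 ≤ z) (hx2 : x 2 = 0 → 38 ≤ z)
    (hx3 : x 3 = 0 → 34 ≤ z) (hx4 : x 4 = 0 → 31 ≤ z)
    (hx5 : x 5 = 0 → 26 ≤ z) (hx6 : x 6 = 0 → 16 ≤ z)
    (hx7 : x 7 = 0 → 8 ≤ z) (hx8 : x 8 = 0 → 4 ≤ z)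
    (hx9 : x 9 = 0 → 2 ≤ z) (hx10 : x 10 = 0 → 1 ≤ z)
    (hknap : (1 / 8 : ℝ) * (x 1 + x 2 + x 3 + x 4)
      + (1 / 12 : ℝ) * (x 5 + x 6 + x 7 + x 8 + x 9 + x 10) ≤ 1 / 2) :
    40 ≤ z + 2 * x 1 + 4 * (1 - x 4) + 4 * (1 - x 7) + 8 * (1 - x 8) :=
  example_inequality_mixing_knapsack_general ⟨hz, by simpa using hxbin,
    fun i hi ↦ by fin_cases hi <;> assumption,
    by simpa [exampleProb, sum_Icc_succ_top, mul_add, add_assoc] using hknap⟩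
end
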